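/- Every decomposable 7-dimensional real nilpotent Lie algebra is an Einstein nilradical; that is, if μ is a nilpotent Lie algebra law on ℝ⁷ such that (ℝ⁷, μ) is isomorphic to a direct sum of two nonzero nilpotent Lie algebras, then μ is an Einstein nilradical. -/

import Mathlib

open Matrix BigOperators Polynomial

noncomputable section

abbrev Law (n : ℕ) := (Fin n → ℝ) → (Fin n → ℝ) → (Fin n → ℝ)

/-- `i`-th canonical basis vector of `ℝ^n`. -/
def bVec {n : ℕ} (i : Fin n) : Fin n → ℝ := Pi.single i 1

def IsBilin {n : ℕ} (μ : Law n) : Prop :=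
  (∀ X, IsLinearMap ℝ (μ X)) ∧ (∀ Y, IsLinearMap ℝ (fun X => μ X Y))

def IsSkew {n : ℕ} (μ : Law n) : Prop := ∀ X Y, μ X Y = - μ Y X

def IsJacobi {n : ℕ} (μ : Law n) : Prop :=
  ∀ X Y Z, μ (μ X Y) Z + μ (μ Y Z) X + μ (μ Z X) Y = 0

def IsLieLaw {n : ℕ} (μ : Law n) : Prop := IsBilin μ ∧ IsSkew μ ∧ IsJacobi μ

/-- lower central series of the law `μ`. -/
def lcs {n : ℕ} (μ : Law n) : ℕ → Submodule ℝ (Fin n → ℝ)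
  | 0 => ⊤
  | k + 1 => Submodule.span ℝ {z | ∃ x y, y ∈ lcs μ k ∧ z = μ x y}

def IsNilpotentLaw {n : ℕ} (μ : Law n) : Prop :=
  IsLieLaw μ ∧ ∃ k, lcs μ k = ⊥

/-- the action of `GL_n(ℝ)` on laws: `(g·μ)(X,Y) = g μ(g⁻¹X, g⁻¹Y)`. -/
def act {n : ℕ} (g : GL (Fin n) ℝ) (μ : Law n) : Law n :=
  fun X Y =>
    (g : Matrix (Fin n) (Fin n) ℝ).mulVec
      (μ (((g⁻¹ : GL (Fin n) ℝ) : Matrix (Fin n) (Fin n) ℝ).mulVec X)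
         (((g⁻¹ : GL (Fin n) ℝ) : Matrix (Fin n) (Fin n) ℝ).mulVec Y))

def IsDerivation {n : ℕ} (μ : Law n) (ψ : Matrix (Fin n) (Fin n) ℝ) : Prop :=
  ∀ X Y, ψ.mulVec (μ X Y) = μ (ψ.mulVec X) Y + μ X (ψ.mulVec Y)

/-- the unnormalized moment map `m(μ) = 4 Ric_μ`, as a matrix in the canonical basis. -/
def momentMap {n : ℕ} (μ : Law n) : Matrix (Fin n) (Fin n) ℝ :=
  Matrix.of fun k l =>
    4 * (-(1/2) * ∑ i, ∑ j, μ (bVec k) (bVec i) j * μ (bVec l) (bVec i) j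
      + (1/4) * ∑ i, ∑ j, μ (bVec i) (bVec j) k * μ (bVec i) (bVec j) l)

def IsEinsteinNilradical {n : ℕ} (μ : Law n) : Prop :=
  ∃ g : GL (Fin n) ℝ, ∃ c : ℝ, ∃ φ : Matrix (Fin n) (Fin n) ℝ,
    c < 0 ∧ φ.IsSymm ∧ IsDerivation (act g μ) φ ∧
    momentMap (act g μ) = c • (1 : Matrix (Fin n) (Fin n) ℝ) + φ

/-- build a (bilinear) law from a table `c` of structure constants on the
canonical basis, antisymmetrized: `[e_i, e_j] = c i j - c j i`. -/
def mkLaw {n : ℕ} (c : Fin n → Fin n → Fin n → ℝ) : Law n :=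
  fun X Y k => ∑ i, ∑ j, X i * Y j * (c i j k - c j i k)

/-!
Call a basis of a Lie algebra a nilsoliton basis if its structure constants satisfy `m(C) · C = C`
for the infinitesimal action of their moment map `m(C)`. In such a basis `m(C) + 1` is a symmetric
derivation, so the law is an Einstein nilradical. Nilsoliton bases of two Lie algebras together form
one of the direct sum, and both summands have dimension at most 6, so it suffices that
every nilpotent Lie algebra of dimension at most 6 has such a basis.

A central element outside the derived algebra splits off a one-dimensional summand. If there is
none, the dimensions of the lower central series leave few cases, in each of which a basis adapted
to the series is improved until its brackets are given by one of finitely many tables. The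
moment map of such a table is diagonal, so after rescaling the basis the nilsoliton equation is a
linear system for the squares of the coefficients, which has a positive solution.
-/

/-- Structure constants of an algebra in some basis: `[b i, b j] = ∑ k, C i j k • b k`. -/
abbrev StructConst (ι : Type*) := ι → ι → ι → ℝ

namespace StructConst

variable {ι κ : Type*} [Fintype ι] [Fintype κ]

/-- The moment map of structure constants, i.e. four times the Ricci operator of the inner product
for which the basis is orthonormal. -/
def moment (C : StructConst ι) : Matrix ι ι ℝ :=
  Matrix.of fun k l => -2 * ∑ i, ∑ j, C k i j * C l i j + ∑ i, ∑ j, C i j k * C i j l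

/-- The infinitesimal action of a matrix on structure constants, `M[x, y] - [Mx, y] - [x, My]`;
it vanishes exactly when `M` is a derivation. -/
def infAction (M : Matrix ι ι ℝ) (C : StructConst ι) : StructConst ι := fun i j k =>
  ∑ l, M k l * C i j l - ∑ l, M l i * C l j k - ∑ l, M l j * C i l k

/-- The nilsoliton equation normalised to the constant `-1`: since `1` acts on structure constants
by `-1`, it says that `moment C + 1` is a derivation. -/
def IsSoliton (C : StructConst ι) : Prop := infAction (moment C) C = C

/-- The structure constants of a direct sum. -/
def prod (C : StructConst ι) (D : StructConst κ) : StructConst (ι ⊕ κ)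
  | .inl i, .inl j, .inl k => C i j k
  | .inr i, .inr j, .inr k => D i j k
  | _, _, _ => 0

lemma moment_isSymm (C : StructConst ι) : (moment C).IsSymm := by
  ext k l
  simp only [transpose_apply, moment, of_apply, mul_comm]

lemma moment_reindex (e : κ ≃ ι) (C : StructConst ι) :
    moment (fun i j k => C (e i) (e j) (e k)) = (moment C).submatrix e e := by
  ext k l
  have sum_comp (f : ι → ι → ℝ) : ∑ i, ∑ j, f (e i) (e j) = ∑ i, ∑ j, f i j :=
    Fintype.sum_equiv e _ _ fun i => e.sum_comp (f (e i))
  exact congrArg₂ (fun a b => -2 * a + b) (sum_comp fun i j => C (e k) i j * C (e l) i j)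
    (sum_comp fun i j => C i j (e k) * C i j (e l))

lemma IsSoliton.reindex {C : StructConst ι} (hC : C.IsSoliton) (e : κ ≃ ι) :
    IsSoliton fun i j k => C (e i) (e j) (e k) := by
  ext i j k
  conv_rhs => rw [← hC]
  simp only [infAction, moment_reindex, submatrix_apply]
  congr 1
  · congr 1
    · exact e.sum_comp fun l => moment C (e k) l * C (e i) (e j) l
    · exact e.sum_comp fun l => moment C l (e i) * C l (e j) (e k)
  · exact e.sum_comp fun l => moment C l (e j) * C (e i) l (e k)

lemma moment_prod (C : StructConst ι) (D : StructConst κ) :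
    moment (C.prod D) = fromBlocks (moment C) 0 0 (moment D) := by
  ext (k | k) (l | l) <;>
    simp only [moment, of_apply, prod, Fintype.sum_sum_type, fromBlocks_apply₁₁,
      fromBlocks_apply₁₂, fromBlocks_apply₂₁, fromBlocks_apply₂₂, Matrix.zero_apply,
      mul_zero, zero_mul, Finset.sum_const_zero, add_zero, zero_add]

lemma infAction_prod (M : Matrix ι ι ℝ) (N : Matrix κ κ ℝ) (C : StructConst ι)
    (D : StructConst κ) :
    infAction (fromBlocks M 0 0 N) (C.prod D) = (infAction M C).prod (infAction N D) := by
  ext (i | i) (j | j) (k | k) <;> simp [infAction, prod, Fintype.sum_sum_type]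

lemma IsSoliton.prod {C : StructConst ι} {D : StructConst κ} (hC : C.IsSoliton)
    (hD : D.IsSoliton) : (C.prod D).IsSoliton := by
  rw [IsSoliton, moment_prod, infAction_prod, hC, hD]

end StructConst

section IsNilsoliton

variable (L : Type*) {L₁ L₂ : Type*} [LieRing L] [LieAlgebra ℝ L] [LieRing L₁] [LieAlgebra ℝ L₁]
  [LieRing L₂] [LieAlgebra ℝ L₂]

/-- A Lie algebra with a basis whose structure constants solve the nilsoliton equation. -/
def IsNilsoliton : Prop :=
  ∃ (ι : Type) (_ : Fintype ι) (b : Module.Basis ι ℝ L),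
    StructConst.IsSoliton fun i j k => b.repr ⁅b i, b j⁆ k

variable {L}

lemma IsNilsoliton.of_equiv (h : IsNilsoliton L₁) (e : L₁ ≃ₗ⁅ℝ⁆ L₂) : IsNilsoliton L₂ := by
  obtain ⟨ι, _, b, hb⟩ := h
  refine ⟨ι, inferInstance, b.map e.toLinearEquiv, ?_⟩
  convert hb with i j k
  simp only [Module.Basis.map_apply, Module.Basis.map_repr, LinearEquiv.trans_apply,
    LieEquiv.coe_toLinearEquiv, ← e.map_lie]
  exact congrArg b.repr (e.symm_apply_apply _)

lemma IsNilsoliton.prod (h₁ : IsNilsoliton L₁) (h₂ : IsNilsoliton L₂) :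
    IsNilsoliton (L₁ × L₂) := by
  obtain ⟨ι, _, b, hb⟩ := h₁
  obtain ⟨κ, _, d, hd⟩ := h₂
  refine ⟨ι ⊕ κ, inferInstance, b.prod d, ?_⟩
  convert hb.prod hd using 1
  ext (i | i) (j | j) (k | k) <;> simp [StructConst.prod]

end IsNilsoliton

section Law

variable {n : ℕ} {μ : Law n}

/-- `ℝ^n` with the Lie bracket given by a law. -/
def LawAlgebra (_ : IsLieLaw μ) : Type := Fin n → ℝ

namespace LawAlgebra

variable (h : IsLieLaw μ)

instance : LieRing (LawAlgebra h) where
  toAddCommGroup := inferInstanceAs (AddCommGroup (Fin n → ℝ))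
  bracket := μ
  add_lie x y z := (h.1.2 z).map_add x y
  lie_add x y z := (h.1.1 x).map_add y z
  lie_self x := self_eq_neg.mp (show (μ x x : Fin n → ℝ) = -μ x x from h.2.1 x x)
  leibniz_lie x y z := by
    have jacobi : μ (μ x y) z + μ (μ y z) x + μ (μ z x) y = 0 := h.2.2 x y z
    have skew_skew : μ (μ z x) y = μ y (μ x z) := by
      rw [h.2.1 (μ z x) y, h.2.1 z x, ← (h.1.1 y).map_neg, neg_neg]
    rw [h.2.1 (μ y z) x, skew_skew] at jacobi
    change (μ x (μ y z) : Fin n → ℝ) = μ (μ x y) z + μ y (μ x z)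
    linear_combination (exp := 1) -jacobi

instance : LieAlgebra ℝ (LawAlgebra h) where
  __ := (inferInstance : Module ℝ (Fin n → ℝ))
  lie_smul t x y := (h.1.1 x).map_smul t y

instance : Module.Finite ℝ (LawAlgebra h) := inferInstanceAs (Module.Finite ℝ (Fin n → ℝ))

lemma finrank_eq : Module.finrank ℝ (LawAlgebra h) = n := Module.finrank_fin_fun ℝ

end LawAlgebra

lemma exists_act_eq (μ : Law n) (e : (Fin n → ℝ) ≃ₗ[ℝ] (Fin n → ℝ)) :
    ∃ g : GL (Fin n) ℝ, ∀ X Y, act g μ X Y = e (μ (e.symm X) (e.symm Y)) := by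
  refine ⟨⟨LinearMap.toMatrix' e, LinearMap.toMatrix' e.symm, ?_, ?_⟩, fun X Y => ?_⟩
  · simp [← LinearMap.toMatrix'_comp]
  · simp [← LinearMap.toMatrix'_comp]
  · simp only [act, Units.inv_mk, LinearMap.toMatrix'_mulVec, LinearEquiv.coe_coe]

lemma momentMap_eq_moment {C : StructConst (Fin n)} (hμ : ∀ i j, μ (bVec i) (bVec j) = C i j) :
    momentMap μ = C.moment := by
  ext k l
  simp only [momentMap, StructConst.moment, of_apply, hμ]
  ring

namespace IsBilin

/-- A bilinear law as a linear map into linear maps. -/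
def toLinearMap (h : IsBilin μ) : (Fin n → ℝ) →ₗ[ℝ] (Fin n → ℝ) →ₗ[ℝ] (Fin n → ℝ) :=
  LinearMap.mk₂ ℝ μ (fun a b c => (h.2 c).map_add a b) (fun t a b => (h.2 b).map_smul t a)
    (fun a b c => (h.1 a).map_add b c) (fun t a b => (h.1 a).map_smul t b)

lemma toLinearMap_apply (h : IsBilin μ) (X Y : Fin n → ℝ) : h.toLinearMap X Y = μ X Y := rfl

lemma conj (h : IsBilin μ) (e : (Fin n → ℝ) ≃ₗ[ℝ] (Fin n → ℝ)) :
    IsBilin fun X Y => e (μ (e.symm X) (e.symm Y)) := by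
  constructor <;> intro v <;> constructor <;> intros <;>
    simp only [← h.toLinearMap_apply, map_add, map_smul, LinearMap.add_apply, LinearMap.smul_apply]

lemma isDerivation_of_bVec (h : IsBilin μ) {ψ : Matrix (Fin n) (Fin n) ℝ}
    (hψ : ∀ i j, ψ *ᵥ μ (bVec i) (bVec j) = μ (ψ *ᵥ bVec i) (bVec j) + μ (bVec i) (ψ *ᵥ bVec j)) :
    IsDerivation μ ψ := by
  let B := h.toLinearMap
  have eq : B.compr₂ ψ.mulVecLin = B ∘ₗ ψ.mulVecLin + B.compl₂ ψ.mulVecLin :=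
    LinearMap.ext_basis (Pi.basisFun ℝ (Fin n)) (Pi.basisFun ℝ (Fin n)) fun i j => by
      simpa [B, bVec, toLinearMap_apply] using hψ i j
  exact fun X Y => DFunLike.congr_fun (DFunLike.congr_fun eq X) Y

lemma isDerivation_moment_add_one (h : IsBilin μ) {C : StructConst (Fin n)} (hC : C.IsSoliton)
    (hμ : ∀ i j, μ (bVec i) (bVec j) = C i j) : IsDerivation μ (C.moment + 1) := by
  have mulVec_bVec (ψ : Matrix (Fin n) (Fin n) ℝ) (i) : ψ *ᵥ bVec i = ∑ l, ψ l i • bVec l := by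
    simpa [bVec] using ((Pi.basisFun ℝ (Fin n)).sum_repr (ψ.col i)).symm
  have apply_left (ψ : Matrix (Fin n) (Fin n) ℝ) (i j) :
      μ (ψ *ᵥ bVec i) (bVec j) = ∑ l, ψ l i • C l j := by
    rw [← h.toLinearMap_apply, mulVec_bVec, LinearMap.map_sum₂]
    simp only [map_smul, LinearMap.smul_apply, toLinearMap_apply, hμ]
  have apply_right (ψ : Matrix (Fin n) (Fin n) ℝ) (i j) :
      μ (bVec i) (ψ *ᵥ bVec j) = ∑ l, ψ l j • C i l := by
    rw [← h.toLinearMap_apply, mulVec_bVec, map_sum]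
    simp only [map_smul, toLinearMap_apply, hμ]
  refine h.isDerivation_of_bVec fun i j => ?_
  rw [apply_left, apply_right, hμ]
  ext k
  have soliton : C.infAction C.moment i j k = C i j k :=
    congrFun (congrFun (congrFun hC i) j) k
  simp only [StructConst.infAction] at soliton
  simp only [mulVec, dotProduct, Pi.add_apply, Finset.sum_apply, Pi.smul_apply, smul_eq_mul,
    Matrix.add_apply, one_apply, add_mul, ite_mul, one_mul, zero_mul, Finset.sum_add_distrib,
    Finset.sum_ite_eq, Finset.sum_ite_eq', Finset.mem_univ, if_true]
  linarith

end IsBilin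

theorem isEinsteinNilradical_of_isNilsoliton (h : IsLieLaw μ) (hL : IsNilsoliton (LawAlgebra h)) :
    IsEinsteinNilradical μ := by
  obtain ⟨ι, _, b₀, hb₀⟩ := hL
  let e : Fin n ≃ ι := (Fintype.equivFinOfCardEq
    ((Module.finrank_eq_card_basis b₀).symm.trans (LawAlgebra.finrank_eq h))).symm
  let b : Module.Basis (Fin n) ℝ (LawAlgebra h) := b₀.reindex e.symm
  let C : StructConst (Fin n) := fun i j k => b.repr ⁅b i, b j⁆ k
  have hC : C.IsSoliton := by simpa [C, b] using hb₀.reindex e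
  obtain ⟨g, hg⟩ := exists_act_eq μ b.equivFun
  have act_bVec (i j : Fin n) : act g μ (bVec i) (bVec j) = C i j := by
    have symm_bVec (i) : b.equivFun.symm (bVec i) = b i := by
      simp [bVec, Module.Basis.equivFun_symm_apply, Pi.single_apply]
    rw [hg]
    exact congrArg₂ (fun v w => b.equivFun ⁅v, w⁆) (symm_bVec i) (symm_bVec j)
  have bilin : IsBilin (act g μ) := by
    rw [show act g μ = _ from funext₂ hg]
    exact h.1.conj _
  refine ⟨g, -1, C.moment + 1, by norm_num, ?_, bilin.isDerivation_moment_add_one hC act_bVec, ?_⟩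
  · exact C.moment_isSymm.add isSymm_one
  · rw [momentMap_eq_moment act_bVec, neg_one_smul, neg_add_cancel_comm_assoc]

end Law

lemma StructConst.isSoliton_of_moment_eq_diagonal {ι : Type*} [Fintype ι] [DecidableEq ι]
    {C : StructConst ι} {d : ι → ℝ} (hd : C.moment = diagonal d)
    (h : ∀ i j k, C i j k ≠ 0 → d k - d i - d j = 1) : C.IsSoliton := by
  ext i j k
  have key : (d k - d i - d j) * C i j k = C i j k := by
    by_cases hC : C i j k = 0
    · rw [hC, mul_zero]
    · rw [h i j k hC, one_mul]
  simpa [infAction, hd, diagonal_apply, sub_mul] using key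

lemma sum_sum_sum_mul_sum {ι ρ : Type*} [Fintype ι] [Fintype ρ] (c : ρ → ℝ)
    (F G : ρ → ι → ι → ℝ) :
    ∑ i, ∑ j, (∑ r, c r * F r i j) * ∑ r, c r * G r i j =
      ∑ r, ∑ r', c r * c r' * ∑ i, ∑ j, F r i j * G r' i j := by
  simp only [Finset.sum_mul_sum]
  calc _ = ∑ i, ∑ r, ∑ j, ∑ r', c r * F r i j * (c r' * G r' i j) :=
        Finset.sum_congr rfl fun i _ => Finset.sum_comm
    _ = ∑ r, ∑ i, ∑ j, ∑ r', c r * F r i j * (c r' * G r' i j) := Finset.sum_comm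
    _ = ∑ r, ∑ i, ∑ r', ∑ j, c r * F r i j * (c r' * G r' i j) :=
        Finset.sum_congr rfl fun r _ => Finset.sum_congr rfl fun i _ => Finset.sum_comm
    _ = ∑ r, ∑ r', ∑ i, ∑ j, c r * F r i j * (c r' * G r' i j) :=
        Finset.sum_congr rfl fun r _ => Finset.sum_comm
    _ = _ := by simp only [Finset.mul_sum, mul_mul_mul_comm]

/-- The shape of a bracket: a row `(i, j, k)` stands for the `k`-component of `[x i, x j]`. -/
abbrev BracketTable (ι ρ : Type*) := ρ → ι × ι × ι

namespace BracketTable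

variable {ι ρ : Type*} [DecidableEq ι] (T : BracketTable ι ρ)

/-- The root `e i + e j - e k` of the row `(i, j, k)`, i.e. minus the weight of the corresponding
structure constant under diagonal matrices. -/
def root (r : ρ) (k : ι) : ℤ :=
  (if (T r).1 = k then 1 else 0) + (if (T r).2.1 = k then 1 else 0) -
    (if (T r).2.2 = k then 1 else 0)

lemma root_dotProduct [Fintype ι] (r : ρ) (v : ι → ℤ) :
    T.root r ⬝ᵥ v = v (T r).1 + v (T r).2.1 - v (T r).2.2 := by
  simp [dotProduct, root, add_mul, sub_mul, Finset.sum_add_distrib]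

/-- The rows bracket different pairs, and disjoint pairs if they have the same value. -/
def Compatible (r r' : ρ) : Prop :=
  ((T r).1 = (T r').1 → (T r).2.1 ≠ (T r').2.1) ∧ ((T r).1 = (T r').2.1 → (T r).2.1 ≠ (T r').1) ∧
    ((T r).2.2 = (T r').2.2 → (T r).1 ≠ (T r').1 ∧ (T r).1 ≠ (T r').2.1 ∧
      (T r).2.1 ≠ (T r').1 ∧ (T r).2.1 ≠ (T r').2.1)

instance (r r' : ρ) : Decidable (T.Compatible r r') := by unfold Compatible; infer_instance

/-- The table describes structure constants with respect to a nice basis. -/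
def Nice : Prop := (∀ r, (T r).1 ≠ (T r).2.1) ∧ ∀ r r', r ≠ r' → T.Compatible r r'

instance [Fintype ρ] [DecidableEq ρ] : Decidable T.Nice := by unfold Nice; infer_instance

/-- The structure constants with a single nonzero row, whose coefficient is `1`. -/
def rowConst (r : ρ) : StructConst ι := fun i j k =>
  ((if (T r).1 = i then 1 else 0) * (if (T r).2.1 = j then 1 else 0) -
    (if (T r).1 = j then 1 else 0) * (if (T r).2.1 = i then 1 else 0)) *
    (if (T r).2.2 = k then 1 else 0)

lemma rowConst_swap (r : ρ) (i j k : ι) : T.rowConst r j i k = -T.rowConst r i j k := by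
  rw [rowConst, rowConst]
  ring

lemma sum_rowConst_mul_left [Fintype ι] (r : ρ) (k : ι) (f : ι → ι → ℝ) :
    ∑ i, ∑ j, T.rowConst r k i j * f i j =
      (if (T r).1 = k then f (T r).2.1 (T r).2.2 else 0) -
        (if (T r).2.1 = k then f (T r).1 (T r).2.2 else 0) := by
  simp [rowConst, sub_mul, Finset.sum_sub_distrib, Finset.sum_ite_irrel]

lemma sum_rowConst_mul_right [Fintype ι] (r : ρ) (k : ι) (f : ι → ι → ℝ) :
    ∑ i, ∑ j, T.rowConst r i j k * f i j =
      if (T r).2.2 = k then f (T r).1 (T r).2.1 - f (T r).2.1 (T r).1 else 0 := by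
  simp [rowConst, sub_mul, Finset.sum_sub_distrib, Finset.sum_ite_irrel]

/-- The contribution of a pair of rows to the moment map, see `moment_structConst`. -/
def pairing (r r' : ρ) (k l : ι) : ℝ :=
  2 * (if (T r).2.2 = k then T.rowConst r' (T r).1 (T r).2.1 l else 0) -
    2 * ((if (T r).1 = k then T.rowConst r' l (T r).2.1 (T r).2.2 else 0) -
      (if (T r).2.1 = k then T.rowConst r' l (T r).1 (T r).2.2 else 0))

lemma pairing_eq_sum [Fintype ι] (r r' : ρ) (k l : ι) :
    T.pairing r r' k l = -2 * ∑ i, ∑ j, T.rowConst r k i j * T.rowConst r' l i j +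
      ∑ i, ∑ j, T.rowConst r i j k * T.rowConst r' i j l := by
  rw [sum_rowConst_mul_left, sum_rowConst_mul_right, pairing,
    T.rowConst_swap r' (T r).1 (T r).2.1 l]
  split_ifs <;> ring

variable {T} in
lemma eq_or_eq_of_rowConst_ne_zero {r : ρ} {i j k : ι} (h : T.rowConst r i j k ≠ 0) :
    T r = (i, j, k) ∨ T r = (j, i, k) := by
  simp only [rowConst] at h
  grind

variable {T} in
lemma pairing_self {r : ρ} (hr : (T r).1 ≠ (T r).2.1) (k l : ι) :
    T.pairing r r k l = if k = l then -2 * (T.root r k : ℝ) else 0 := by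
  simp only [pairing, rowConst, root, Int.cast_add, Int.cast_sub, Int.cast_ite, Int.cast_one,
    Int.cast_zero]
  grind

variable {T} in
lemma Compatible.pairing_eq_zero {r r' : ρ} (h : T.Compatible r r') (k l : ι) :
    T.pairing r r' k l = 0 := by
  simp only [Compatible] at h
  simp only [pairing, rowConst]
  grind

variable [Fintype ρ]

/-- The structure constants with coefficient `c r` in row `r`. -/
def structConst (c : ρ → ℝ) : StructConst ι := fun i j k => ∑ r, c r * T.rowConst r i j k

lemma moment_structConst [Fintype ι] (c : ρ → ℝ) (k l : ι) :
    (T.structConst c).moment k l = ∑ r, ∑ r', c r * c r' * T.pairing r r' k l := by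
  simp only [StructConst.moment, structConst, of_apply, sum_sum_sum_mul_sum, pairing_eq_sum,
    mul_add, Finset.sum_add_distrib, mul_left_comm _ (-2 : ℝ), ← Finset.mul_sum]

variable {T}

lemma Nice.moment_structConst [Fintype ι] (hT : T.Nice) (c : ρ → ℝ) :
    (T.structConst c).moment = diagonal fun k => -2 * ∑ r, c r ^ 2 * (T.root r k : ℝ) := by
  ext k l
  have sum_pairing (r : ρ) :
      ∑ r', c r * c r' * T.pairing r r' k l = c r ^ 2 * T.pairing r r k l := by
    rw [Finset.sum_eq_single r, sq]
    · exact fun r' _ hr => by rw [(hT.2 r r' hr.symm).pairing_eq_zero, mul_zero]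
    · exact fun hr => absurd (Finset.mem_univ r) hr
  simp only [BracketTable.moment_structConst, sum_pairing, pairing_self (hT.1 _),
    diagonal_apply]
  split_ifs
  · simp only [Finset.mul_sum, mul_left_comm]
  · simp only [mul_zero, Finset.sum_const_zero]

-- Once the moment map is diagonal, the nilsoliton equation is linear in the squares `c r ^ 2`.
lemma isSoliton_of_moment_eq_diagonal [Fintype ι] {c : ρ → ℝ}
    (hc : (T.structConst c).moment = diagonal fun k => -2 * ∑ r, c r ^ 2 * (T.root r k : ℝ))
    (h : ∀ r, 2 * ∑ r', c r' ^ 2 * ((T.root r ⬝ᵥ T.root r' : ℤ) : ℝ) = 1) :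
    (T.structConst c).IsSoliton := by
  refine StructConst.isSoliton_of_moment_eq_diagonal hc fun i j k hijk => ?_
  obtain ⟨r, -, hr⟩ := Finset.exists_ne_zero_of_sum_ne_zero hijk
  have hr' := h r
  simp only [root_dotProduct, Int.cast_add, Int.cast_sub, mul_add, mul_sub,
    Finset.sum_add_distrib, Finset.sum_sub_distrib] at hr'
  rcases eq_or_eq_of_rowConst_ne_zero (right_ne_zero_of_mul hr) with e | e <;>
    rw [e] at hr' <;> linarith

/-- `t` rescales the basis vectors so that the coefficient of row `r` is multiplied by the square
root of `a r`; it exists when `a` satisfies the relation `w` between the roots. -/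
lemma exists_scale [Fintype ι] [DecidableEq ρ] {B : Matrix ι ρ ℤ} {v w : ρ → ℤ} {d : ℤ}
    (hd : d ≠ 0) (hB : of T.root * B = d • 1 + vecMulVec v w) {a : ρ → ℝ} (ha : ∀ r, 0 < a r)
    (hw : ∏ r, a r ^ w r = 1) :
    ∃ t : ι → ℝ, (∀ i, 0 < t i) ∧
      ∀ r, (t (T r).1 * t (T r).2.1 / t (T r).2.2) ^ 2 = a r := by
  have hw' : ∑ r, w r * Real.log (a r) = 0 := by
    rw [← Real.log_one, ← hw, Real.log_prod fun r _ => (zpow_pos (ha r) _).ne']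
    simp only [Real.log_zpow]
  let u (i : ι) : ℝ := (∑ r, B i r * Real.log (a r)) / d
  have hu (r : ρ) : u (T r).1 + u (T r).2.1 - u (T r).2.2 = Real.log (a r) := by
    have hBr (r' : ρ) : (B (T r).1 r' + B (T r).2.1 r' - B (T r).2.2 r' : ℝ) =
        (if r = r' then (d : ℝ) else 0) + v r * w r' := by
      have := congrFun (congrFun hB r) r'
      rw [mul_apply, show ∑ i, of T.root r i * B i r' = T.root r ⬝ᵥ fun i => B i r' from rfl,
        root_dotProduct] at this
      rw [← Int.cast_add, ← Int.cast_sub, this]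
      simp only [Matrix.add_apply, Matrix.smul_apply, one_apply, vecMulVec_apply, smul_eq_mul,
        Int.cast_add, Int.cast_mul, Int.cast_ite, Int.cast_zero, mul_ite,
        mul_one, mul_zero]
    have hd' : (d : ℝ) ≠ 0 := Int.cast_ne_zero.mpr hd
    simp only [u, ← add_div, ← sub_div, ← Finset.sum_add_distrib, ← Finset.sum_sub_distrib,
      ← add_mul, ← sub_mul, hBr]
    simp only [add_mul, ite_mul, zero_mul, Finset.sum_add_distrib, Finset.sum_ite_eq,
      Finset.mem_univ, if_true, mul_assoc, ← Finset.mul_sum, hw', mul_zero, add_zero]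
    rw [mul_div_cancel_left₀ _ hd']
  refine ⟨fun i => Real.exp (u i / 2), fun i => Real.exp_pos _, fun r => ?_⟩
  rw [← Real.exp_add, ← Real.exp_sub, ← Real.exp_nat_mul, ← Real.exp_log (ha r), ← hu r]
  congr 1
  push_cast
  ring

/-- A numerical certificate that the structure constants with squares `q r / N` solve the
nilsoliton equation, and that every choice of nonzero coefficients which satisfies the
multiplicative relation `w` can be rescaled to them by means of the generalised inverse `B` of the
matrix of roots. -/
structure Certificate [Fintype ι] [DecidableEq ρ] (T : BracketTable ι ρ) (q : ρ → ℤ) (N : ℤ)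
    (B : Matrix ι ρ ℤ) (d : ℤ) (v w : ρ → ℤ) : Prop where
  nice : T.Nice
  pos : 0 < N ∧ ∀ r, 0 < q r
  gram : ∀ r, 2 * ∑ r', q r' * (T.root r ⬝ᵥ T.root r') = N
  ne_zero : d ≠ 0
  inverse : of T.root * B = d • 1 + vecMulVec v w

instance [Fintype ι] [DecidableEq ρ] (T : BracketTable ι ρ) (q : ρ → ℤ) (N : ℤ)
    (B : Matrix ι ρ ℤ) (d : ℤ) (v w : ρ → ℤ) : Decidable (Certificate T q N B d v w) :=
  decidable_of_iff (T.Nice ∧ (0 < N ∧ ∀ r, 0 < q r) ∧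
    (∀ r, 2 * ∑ r', q r' * (T.root r ⬝ᵥ T.root r') = N) ∧ d ≠ 0 ∧
    of T.root * B = d • 1 + vecMulVec v w)
    ⟨fun ⟨h₁, h₂, h₃, h₄, h₅⟩ => ⟨h₁, h₂, h₃, h₄, h₅⟩,
      fun ⟨h₁, h₂, h₃, h₄, h₅⟩ => ⟨h₁, h₂, h₃, h₄, h₅⟩⟩

lemma Certificate.isSoliton [Fintype ι] [DecidableEq ρ] {q : ρ → ℤ} {N : ℤ}
    {B : Matrix ι ρ ℤ} {d : ℤ} {v w : ρ → ℤ} (h : Certificate T q N B d v w) {s : ρ → ℝ}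
    (hs : ∀ r, s r ^ 2 = q r / N) : (T.structConst s).IsSoliton := by
  refine isSoliton_of_moment_eq_diagonal (h.nice.moment_structConst s) fun r => ?_
  have hN : (N : ℝ) ≠ 0 := Int.cast_ne_zero.mpr h.pos.1.ne'
  have gram := congrArg (Int.cast (R := ℝ)) (h.gram r)
  push_cast at gram
  simp only [hs, div_mul_eq_mul_div, ← Finset.sum_div, ← mul_div_assoc, gram, div_self hN]

section Realizes

variable {L : Type*} [LieRing L] [LieAlgebra ℝ L]

/-- The bracket `[x i, x j]` prescribed by the table with coefficients `c`. -/
def bracket (T : BracketTable ι ρ) (c : ρ → ℝ) (x : ι → L) (i j : ι) : L :=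
  ∑ r, c r • ((if (T r).1 = i ∧ (T r).2.1 = j then x (T r).2.2 else 0) -
    (if (T r).1 = j ∧ (T r).2.1 = i then x (T r).2.2 else 0))

lemma bracket_swap (c : ρ → ℝ) (x : ι → L) (i j : ι) : T.bracket c x j i = -T.bracket c x i j := by
  simp only [bracket, ← Finset.sum_neg_distrib, ← smul_neg, neg_sub]

lemma bracket_self (c : ρ → ℝ) (x : ι → L) (i : ι) : T.bracket c x i i = 0 := by
  simp only [bracket, sub_self, smul_zero, Finset.sum_const_zero]

lemma bracket_eq_sum_structConst [Fintype ι] (c : ρ → ℝ) (x : ι → L) (i j : ι) :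
    T.bracket c x i j = ∑ k, T.structConst c i j k • x k := by
  simp only [structConst, Finset.sum_smul]
  rw [Finset.sum_comm]
  refine Finset.sum_congr rfl fun r _ => ?_
  simp only [mul_smul, ← Finset.smul_sum, rowConst, ite_smul, one_smul, zero_smul,
    Finset.sum_ite_eq, Finset.mem_univ, if_true]
  rw [ite_and, ite_and]
  split_ifs <;> simp

/-- The vectors `x` form a basis whose brackets are given by the table with coefficients `c`. -/
structure Realizes (T : BracketTable ι ρ) (c : ρ → ℝ) (x : ι → L) : Prop where
  linearIndependent : LinearIndependent ℝ x
  span_eq_top : ⊤ ≤ Submodule.span ℝ (Set.range x)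
  lie : ∀ i j, ⁅x i, x j⁆ = T.bracket c x i j

lemma Realizes.of_lt [Fintype ι] [LinearOrder ι] {T : BracketTable ι ρ} {c : ρ → ℝ} {x : ι → L}
    (hcard : Fintype.card ι = Module.finrank ℝ L) (hx : ⊤ ≤ Submodule.span ℝ (Set.range x))
    (h : ∀ i j, i < j → ⁅x i, x j⁆ = T.bracket c x i j) : T.Realizes c x where
  linearIndependent := linearIndependent_of_top_le_span_of_card_eq_finrank hx hcard
  span_eq_top := hx
  lie i j := by
    rcases lt_trichotomy i j with hij | rfl | hij
    · exact h i j hij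
    · rw [lie_self, bracket_self]
    · rw [← lie_skew, h j i hij, ← bracket_swap]

variable {c : ρ → ℝ} {x : ι → L}

lemma Realizes.finrank_eq [Fintype ι] (h : T.Realizes c x) :
    Fintype.card ι = Module.finrank ℝ L :=
  (Module.finrank_eq_card_basis (Module.Basis.mk h.linearIndependent h.span_eq_top)).symm

lemma Realizes.congr {ρ' : Type*} [Fintype ρ'] {T' : BracketTable ι ρ'} {c' : ρ' → ℝ}
    (h : T.Realizes c x) (hT : ∀ (y : ι → L) i j, T.bracket c y i j = T'.bracket c' y i j) :
    T'.Realizes c' x :=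
  ⟨h.linearIndependent, h.span_eq_top, fun i j => (h.lie i j).trans (hT x i j)⟩

lemma Realizes.changeBasis {ι' ρ' : Type*} [Fintype ι] [Fintype ι'] [LinearOrder ι'] [Fintype ρ']
    {T' : BracketTable ι' ρ'} {c' : ρ' → ℝ} {y : ι' → L} (h : T.Realizes c x)
    (hcard : Fintype.card ι' = Fintype.card ι)
    (hy : ∀ S : Submodule ℝ L, (∀ i, y i ∈ S) → ∀ i, x i ∈ S)
    (lie : ∀ i j, i < j → ⁅y i, y j⁆ = T'.bracket c' y i j) : T'.Realizes c' y :=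
  .of_lt (hcard.trans h.finrank_eq) (h.span_eq_top.trans <| Submodule.span_le.mpr <|
    Set.range_subset_iff.mpr <| hy _ fun i => Submodule.subset_span ⟨i, rfl⟩) lie

lemma Realizes.smul (h : T.Realizes c x) {t : ι → ℝ} (ht : ∀ i, t i ≠ 0) :
    T.Realizes (fun r => c r * (t (T r).1 * t (T r).2.1 / t (T r).2.2)) (fun i => t i • x i) where
  linearIndependent := h.linearIndependent.units_smul fun i => Units.mk0 (t i) (ht i)
  span_eq_top := h.span_eq_top.trans <| Submodule.span_le.mpr <| Set.range_subset_iff.mpr fun i =>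
    (Submodule.smul_mem_iff _ (ht i)).mp <| Submodule.subset_span ⟨i, rfl⟩
  lie i j := by
    rw [smul_lie, lie_smul, h.lie, smul_smul, bracket, bracket, Finset.smul_sum]
    refine Finset.sum_congr rfl fun r _ => ?_
    have smul_ite_eq (p : Prop) [Decidable p] (hp : p → t (T r).1 * t (T r).2.1 = t i * t j) :
        (t i * t j) • c r • (if p then x (T r).2.2 else 0) =
          (c r * (t (T r).1 * t (T r).2.1 / t (T r).2.2)) •
            (if p then t (T r).2.2 • x (T r).2.2 else 0) := by
      split_ifs with hp'
      · rw [hp hp', smul_smul, smul_smul, mul_assoc (c r), div_mul_cancel₀ _ (ht _), mul_comm]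
      · simp only [smul_zero]
    simp only [smul_sub]
    rw [smul_ite_eq _ fun hp => by rw [hp.1, hp.2],
      smul_ite_eq _ fun hp => by rw [hp.1, hp.2, mul_comm]]

lemma Realizes.isNilsoliton {ι : Type} [Fintype ι] [DecidableEq ι] {T : BracketTable ι ρ}
    {c : ρ → ℝ} {x : ι → L} (h : T.Realizes c x) (hc : (T.structConst c).IsSoliton) :
    IsNilsoliton L := by
  let b := Module.Basis.mk h.linearIndependent h.span_eq_top
  refine ⟨ι, inferInstance, b, ?_⟩
  convert hc with i j k
  rw [Module.Basis.mk_apply, Module.Basis.mk_apply, h.lie, bracket_eq_sum_structConst]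
  simpa only [b, Module.Basis.mk_apply] using congrFun (b.repr_sum_self _) k

theorem Realizes.isNilsoliton_of_certificate_of_relation {ι : Type} [Fintype ι] [DecidableEq ι]
    [DecidableEq ρ] {T : BracketTable ι ρ} {c : ρ → ℝ} {x : ι → L} (h : T.Realizes c x)
    (hc : ∀ r, c r ≠ 0) (q : ρ → ℤ) (N : ℤ) (B : Matrix ι ρ ℤ) (d : ℤ) (v w : ρ → ℤ)
    (hT : Certificate T q N B d v w) (hw : ∏ r, (q r / (N * c r ^ 2) : ℝ) ^ w r = 1) :
    IsNilsoliton L := by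
  have hN : (0 : ℝ) < N := Int.cast_pos.mpr hT.pos.1
  have hq (r) : (0 : ℝ) < q r := Int.cast_pos.mpr (hT.pos.2 r)
  obtain ⟨t, ht, hta⟩ := exists_scale hT.ne_zero hT.inverse
    (fun r => div_pos (hq r) (mul_pos hN (sq_pos_of_ne_zero (hc r)))) hw
  refine (h.smul fun i => (ht i).ne').isNilsoliton (hT.isSoliton fun r => ?_)
  rw [mul_pow, hta]
  field_simp [hc r]

theorem Realizes.isNilsoliton_of_certificate {ι : Type} [Fintype ι] [DecidableEq ι]
    [DecidableEq ρ] {T : BracketTable ι ρ} {c : ρ → ℝ} {x : ι → L} (h : T.Realizes c x)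
    (hc : ∀ r, c r ≠ 0) (q : ρ → ℤ) (N : ℤ) (B : Matrix ι ρ ℤ) (d : ℤ)
    (hT : Certificate T q N B d 0 0) : IsNilsoliton L :=
  h.isNilsoliton_of_certificate_of_relation hc q N B d 0 0 hT (by simp)

theorem Realizes.isNilsoliton_of_certificate_of_sq_eq {ι : Type} [Fintype ι] [DecidableEq ι]
    [DecidableEq ρ] {T : BracketTable ι ρ} {c : ρ → ℝ} {x : ι → L} (h : T.Realizes c x)
    (hc : ∀ r, c r ≠ 0) {i j k l : ρ} (hijkl : (c i * c j) ^ 2 = (c k * c l) ^ 2) (q : ρ → ℤ)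
    (N : ℤ) (B : Matrix ι ρ ℤ) (d : ℤ) (v : ρ → ℤ)
    (hT : Certificate T q N B d v (Pi.single i 1 + Pi.single j 1 - Pi.single k 1 - Pi.single l 1))
    (hq : q i * q j = q k * q l) : IsNilsoliton L := by
  have hN : (N : ℝ) ≠ 0 := Int.cast_ne_zero.mpr hT.pos.1.ne'
  have hq₀ (r) : (q r : ℝ) ≠ 0 := Int.cast_ne_zero.mpr (hT.pos.2 r).ne'
  have hq' : (q i * q j : ℝ) = q k * q l := by exact_mod_cast hq
  let a (r : ρ) : ℝ := q r / (N * c r ^ 2)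
  have ha (r) : a r ≠ 0 := div_ne_zero (hq₀ r) (mul_ne_zero hN (pow_ne_zero 2 (hc r)))
  have prod_single (k : ρ) : ∏ r, a r ^ (Pi.single k 1 : ρ → ℤ) r = a k := by
    simp [Pi.single_apply, apply_ite]
  have relation : a i * a j = a k * a l := by
    simp only [a, div_mul_div_comm, hq', mul_mul_mul_comm (N : ℝ), ← mul_pow, hijkl]
  refine h.isNilsoliton_of_certificate_of_relation hc q N B d v _ hT ?_
  change ∏ r, a r ^ _ = 1
  simp only [Pi.add_apply, Pi.sub_apply, zpow_sub₀ (ha _), zpow_add₀ (ha _),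
    Finset.prod_div_distrib, Finset.prod_mul_distrib, prod_single, relation,
    mul_div_cancel_left₀ _ (ha k), div_self (ha l)]

end Realizes

end BracketTable

section NormalForms

-- The names `L4_3`, `L5_5`, ... are those of the tables in de Graaf's classification of the
-- nilpotent Lie algebras of dimension at most 6, up to the order and the scaling of the basis.

open BracketTable

variable {L : Type*} [LieRing L] [LieAlgebra ℝ L]

lemma isNilsoliton_of_L4_3 {c : Fin 2 → ℝ} (hc : ∀ r, c r ≠ 0) {x : Fin 4 → L}
    (h : Realizes ![(0, 1, 2), (0, 2, 3)] c x) : IsNilsoliton L :=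
  h.isNilsoliton_of_certificate hc ![1, 1] 6 !![0, 0; 1, 0; 0, 0; 0, -1] 1 (by decide +kernel)

lemma isNilsoliton_of_L5_8 {c : Fin 2 → ℝ} (hc : ∀ r, c r ≠ 0) {x : Fin 5 → L}
    (h : Realizes ![(0, 1, 3), (0, 2, 4)] c x) : IsNilsoliton L :=
  h.isNilsoliton_of_certificate hc ![1, 1] 8 !![0, 0; 1, 0; 0, 1; 0, 0; 0, 0] 1 (by decide +kernel)

lemma isNilsoliton_of_L5_5 {c : Fin 3 → ℝ} (hc : ∀ r, c r ≠ 0) {x : Fin 5 → L}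
    (h : Realizes ![(0, 1, 2), (0, 2, 4), (1, 3, 4)] c x) : IsNilsoliton L :=
  h.isNilsoliton_of_certificate hc ![2, 2, 1] 14 !![0, 0, 0; 1, 0, 0; 0, 0, 0; -1, -1, 1; 0, -1, 0]
    1 (by decide +kernel)

lemma isNilsoliton_of_L5_9 {c : Fin 3 → ℝ} (hc : ∀ r, c r ≠ 0) {x : Fin 5 → L}
    (h : Realizes ![(0, 1, 2), (0, 2, 3), (1, 2, 4)] c x) : IsNilsoliton L :=
  h.isNilsoliton_of_certificate hc ![4, 3, 3] 24 !![1, 0, 0; 0, 0, 0; 0, 0, 0; 1, -1, 0; 0, 0, -1]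
    1 (by decide +kernel)

lemma isNilsoliton_of_L5_7 {c : Fin 3 → ℝ} (hc : ∀ r, c r ≠ 0) {x : Fin 5 → L}
    (h : Realizes ![(0, 1, 2), (0, 2, 3), (0, 3, 4)] c x) : IsNilsoliton L :=
  h.isNilsoliton_of_certificate hc ![3, 4, 3] 24 !![0, 0, 0; 1, 1, 0; 0, 1, 0; 0, 0, 0; 0, 0, -1]
    1 (by decide +kernel)

lemma isNilsoliton_of_L5_6 {c : Fin 4 → ℝ} (hc : ∀ r, c r ≠ 0) {x : Fin 5 → L}
    (h : Realizes ![(0, 1, 2), (0, 2, 3), (0, 3, 4), (1, 2, 4)] c x) : IsNilsoliton L :=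
  h.isNilsoliton_of_certificate hc ![3, 3, 2, 2] 22
    !![0, 0, 0, 0; 0, -1, -1, 1; -1, -1, -1, 1; -1, -2, -1, 1; -1, -2, -2, 1] 1 (by decide +kernel)

lemma isNilsoliton_of_L6_26 {c : Fin 3 → ℝ} (hc : ∀ r, c r ≠ 0) {x : Fin 6 → L}
    (h : Realizes ![(0, 1, 3), (0, 2, 4), (1, 2, 5)] c x) : IsNilsoliton L :=
  h.isNilsoliton_of_certificate hc ![1, 1, 1] 10
    !![0, 0, 0; 0, 0, 0; 0, 0, 0; -1, 0, 0; 0, -1, 0; 0, 0, -1] 1 (by decide +kernel)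

lemma isNilsoliton_of_L6_25 {c : Fin 3 → ℝ} (hc : ∀ r, c r ≠ 0) {x : Fin 6 → L}
    (h : Realizes ![(0, 1, 3), (0, 3, 5), (0, 2, 4)] c x) : IsNilsoliton L :=
  h.isNilsoliton_of_certificate hc ![2, 2, 1] 14
    !![0, 0, 0; 1, 0, 0; 0, 0, 1; 0, 0, 0; 0, 0, 0; 0, -1, 0] 1 (by decide +kernel)

lemma isNilsoliton_of_L6_23 {c : Fin 4 → ℝ} (hc : ∀ r, c r ≠ 0) {x : Fin 6 → L}
    (h : Realizes ![(0, 1, 3), (0, 3, 5), (0, 2, 4), (1, 2, 5)] c x) : IsNilsoliton L :=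
  h.isNilsoliton_of_certificate hc ![2, 2, 1, 1] 16
    !![0, 0, 0, 0; 1, 0, 0, 0; -1, -1, 0, 1; 0, 0, 0, 0; -1, -1, -1, 1; 0, -1, 0, 0]
    1 (by decide +kernel)

lemma isNilsoliton_of_L6_27 {c : Fin 3 → ℝ} (hc : ∀ r, c r ≠ 0) {x : Fin 6 → L}
    (h : Realizes ![(0, 1, 3), (0, 2, 4), (1, 3, 5)] c x) : IsNilsoliton L :=
  h.isNilsoliton_of_certificate hc ![3, 3, 4] 24
    !![1, 0, 0; 0, 0, 0; -1, 1, 0; 0, 0, 0; 0, 0, 0; 0, 0, -1] 1 (by decide +kernel)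

lemma isNilsoliton_of_L6_20 {c : Fin 4 → ℝ} (hc : ∀ r, c r ≠ 0) {x : Fin 6 → L}
    (h : Realizes ![(0, 1, 3), (0, 2, 4), (1, 3, 5), (0, 4, 5)] c x) : IsNilsoliton L :=
  h.isNilsoliton_of_certificate hc ![2, 3, 3, 2] 22
    !![1, 0, 0, 0; 0, 0, 0, 0; -2, 1, -1, 1; 0, 0, 0, 0; -1, 0, -1, 1; 0, 0, -1, 0]
    1 (by decide +kernel)

lemma isNilsoliton_of_L6_19 {c : Fin 4 → ℝ} (hc : ∀ r, c r ≠ 0) {x : Fin 6 → L}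
    (h : Realizes ![(0, 1, 3), (0, 2, 4), (1, 3, 5), (2, 4, 5)] c x) : IsNilsoliton L :=
  h.isNilsoliton_of_certificate hc ![1, 1, 1, 1] 8
    !![0, 0, 0, 0; 1, 0, 1, 0; 0, 1, 0, 1; -1, 0, 1, 0; 0, -1, 0, 1; 0, 0, 0, 0]
    2 (by decide +kernel)

lemma isNilsoliton_of_L6_24_zero {c : Fin 4 → ℝ} (hc : ∀ r, c r ≠ 0) {x : Fin 6 → L}
    (h : Realizes ![(0, 1, 2), (0, 2, 4), (1, 2, 5), (0, 3, 5)] c x) : IsNilsoliton L :=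
  h.isNilsoliton_of_certificate hc ![4, 3, 3, 1] 26
    !![1, 0, 0, 0; 0, 0, 0, 0; 0, 0, 0, 0; -1, 0, -1, 1; 1, -1, 0, 0; 0, 0, -1, 0]
    1 (by decide +kernel)

lemma isNilsoliton_of_L6_24 {c : Fin 5 → ℝ} (hc : ∀ r, c r ≠ 0) {x : Fin 6 → L}
    (h : Realizes ![(0, 1, 2), (0, 2, 4), (1, 2, 5), (0, 3, 5), (1, 3, 4)] c x) :
    IsNilsoliton L :=
  h.isNilsoliton_of_certificate hc ![4, 3, 3, 1, 1] 28
    !![1, 1, 0, 0, -1; 1, 0, 1, -1, 0; 0, 1, 1, -1, -1; 0, 0, 0, 0, 0; 1, 0, 1, -1, -2;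
       1, 1, 0, -2, -1] 2 (by decide +kernel)

lemma isNilsoliton_of_L6_12 {c : Fin 4 → ℝ} (hc : ∀ r, c r ≠ 0) {x : Fin 6 → L}
    (h : Realizes ![(0, 1, 2), (0, 2, 3), (0, 3, 5), (1, 4, 5)] c x) : IsNilsoliton L :=
  h.isNilsoliton_of_certificate hc ![3, 5, 3, 3] 30
    !![0, 0, 0, 0; 1, 1, 0, 0; 0, 1, 0, 0; 0, 0, 0, 0; -1, -1, -1, 1; 0, 0, -1, 0]
    1 (by decide +kernel)

lemma isNilsoliton_of_L6_13 {c : Fin 5 → ℝ} (hc : ∀ r, c r ≠ 0)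
    (hc' : (c 0 * c 4) ^ 2 = (c 2 * c 3) ^ 2) {x : Fin 6 → L}
    (h : Realizes ![(0, 1, 2), (0, 2, 3), (0, 3, 5), (1, 4, 3), (2, 4, 5)] c x) :
    IsNilsoliton L :=
  h.isNilsoliton_of_certificate_of_sq_eq hc hc' ![5, 4, 5, 4, 4] 40
    !![0, 0, 0, 0, 0; 1, 1, 0, 0, 0; 0, 1, 0, 0, 0; 0, 0, 0, 0, 0; -1, -1, 0, 1, 0; 0, 0, -1, 0, 0]
    1 ![0, 0, 0, 0, -1] (by decide +kernel) rfl

lemma isNilsoliton_of_L6_10 {c : Fin 3 → ℝ} (hc : ∀ r, c r ≠ 0) {x : Fin 6 → L}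
    (h : Realizes ![(0, 1, 2), (0, 2, 5), (3, 4, 5)] c x) : IsNilsoliton L :=
  h.isNilsoliton_of_certificate hc ![4, 3, 3] 24
    !![0, 1, 0; 1, -1, 0; 0, 0, 0; 0, 0, 1; 0, 0, 0; 0, 0, 0] 1 (by decide +kernel)

lemma isNilsoliton_of_L6_22_zero {c : Fin 3 → ℝ} (hc : ∀ r, c r ≠ 0) {x : Fin 6 → L}
    (h : Realizes ![(0, 2, 4), (0, 3, 5), (1, 2, 5)] c x) : IsNilsoliton L :=
  h.isNilsoliton_of_certificate hc ![1, 1, 1] 10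
    !![0, 0, 0; 0, 0, 1; 0, 0, 0; 0, 1, 0; -1, 0, 0; 0, 0, 0] 1 (by decide +kernel)

lemma isNilsoliton_of_L6_22 {c : Fin 4 → ℝ} (hc : ∀ r, c r ≠ 0) {x : Fin 6 → L}
    (h : Realizes ![(0, 2, 4), (0, 3, 5), (1, 2, 5), (1, 3, 4)] c x) : IsNilsoliton L :=
  h.isNilsoliton_of_certificate hc ![1, 1, 1, 1] 12
    !![0, 2, 0, 0; -1, 1, 1, 1; 1, -1, 1, -1; 0, 0, 0, 0; -1, 1, 1, -1; 0, 0, 0, 0]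
    2 (by decide +kernel)

lemma isNilsoliton_of_L6_28 {c : Fin 4 → ℝ} (hc : ∀ r, c r ≠ 0) {x : Fin 6 → L}
    (h : Realizes ![(0, 1, 2), (0, 2, 3), (1, 2, 4), (0, 3, 5)] c x) : IsNilsoliton L :=
  h.isNilsoliton_of_certificate hc ![1, 1, 1, 1] 8
    !![0, 0, 0, 0; 1, 0, 0, 0; 0, 0, 0, 0; 0, -1, 0, 0; 1, 0, -1, 0; 0, -1, 0, -1]
    1 (by decide +kernel)

lemma isNilsoliton_of_L6_21 {c : Fin 5 → ℝ} (hc : ∀ r, c r ≠ 0) {x : Fin 6 → L}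
    (h : Realizes ![(0, 1, 2), (0, 2, 3), (1, 2, 4), (0, 3, 5), (1, 4, 5)] c x) :
    IsNilsoliton L :=
  h.isNilsoliton_of_certificate hc ![4, 5, 5, 4, 4] 40
    !![0, 1, -1, 1, -1; 0, 0, 0, 0, 0; -2, 1, -1, 1, -1; -2, 0, -2, 2, -2; -2, 1, -3, 1, -1;
       -2, 1, -3, 1, -3] 2 (by decide +kernel)

lemma isNilsoliton_of_L6_14 {c : Fin 6 → ℝ} (hc : ∀ r, c r ≠ 0)
    (hc' : (c 0 * c 5) ^ 2 = (c 2 * c 4) ^ 2) {x : Fin 6 → L}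
    (h : Realizes ![(0, 1, 2), (0, 2, 3), (0, 3, 4), (1, 2, 4), (1, 4, 5), (2, 3, 5)] c x) :
    IsNilsoliton L :=
  h.isNilsoliton_of_certificate_of_sq_eq hc hc' ![13, 16, 12, 4, 13, 12] 104
    !![0, 0, 0, 0, 0, 0; 0, -1, -1, 1, 0, 0; -1, -1, -1, 1, 0, 0; -1, -2, -1, 1, 0, 0;
       -1, -2, -2, 1, 0, 0; -1, -3, -3, 2, -1, 0] 1 ![0, 0, 0, 0, 0, -1] (by decide +kernel) rfl

lemma isNilsoliton_of_L6_16 {c : Fin 5 → ℝ} (hc : ∀ r, c r ≠ 0)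
    (hc' : (c 0 * c 4) ^ 2 = (c 2 * c 3) ^ 2) {x : Fin 6 → L}
    (h : Realizes ![(0, 1, 2), (0, 2, 3), (0, 3, 4), (1, 4, 5), (2, 3, 5)] c x) :
    IsNilsoliton L :=
  h.isNilsoliton_of_certificate_of_sq_eq hc hc' ![3, 4, 3, 3, 3] 24
    !![0, 1, 0, 0, 0; 1, -1, 0, 0, 0; 0, 0, 0, 0, 0; 0, 0, 0, 0, 0; 0, 1, -1, 0, 0; 1, 0, -1, -1, 0]
    1 ![0, 0, 0, 0, -1] (by decide +kernel) rfl

lemma isNilsoliton_of_L6_15 {c : Fin 6 → ℝ} (hc : ∀ r, c r ≠ 0)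
    (hc' : (c 1 * c 5) ^ 2 = (c 3 * c 4) ^ 2) {x : Fin 6 → L}
    (h : Realizes ![(0, 1, 2), (0, 2, 3), (0, 3, 4), (1, 2, 4), (0, 4, 5), (1, 3, 5)] c x) :
    IsNilsoliton L :=
  h.isNilsoliton_of_certificate_of_sq_eq hc hc' ![22, 36, 22, 30, 30, 25] 286
    !![0, 0, 0, 0, 0, 0; 0, -1, -1, 1, 0, 0; -1, -1, -1, 1, 0, 0; -1, -2, -1, 1, 0, 0;
       -1, -2, -2, 1, 0, 0; -1, -2, -2, 1, -1, 0] 1 ![0, 0, 0, 0, 0, -1] (by decide +kernel) rfl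

lemma isNilsoliton_of_L6_18 {c : Fin 4 → ℝ} (hc : ∀ r, c r ≠ 0) {x : Fin 6 → L}
    (h : Realizes ![(0, 1, 2), (0, 2, 3), (0, 3, 4), (0, 4, 5)] c x) : IsNilsoliton L :=
  h.isNilsoliton_of_certificate hc ![2, 3, 3, 2] 22
    !![0, 0, 0, 0; 1, 1, 0, 0; 0, 1, 0, 0; 0, 0, 0, 0; 0, 0, -1, 0; 0, 0, -1, -1]
    1 (by decide +kernel)

lemma isNilsoliton_of_L6_17 {c : Fin 5 → ℝ} (hc : ∀ r, c r ≠ 0) {x : Fin 6 → L}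
    (h : Realizes ![(0, 1, 2), (0, 2, 3), (0, 3, 4), (0, 4, 5), (1, 2, 5)] c x) :
    IsNilsoliton L :=
  h.isNilsoliton_of_certificate hc ![14, 15, 18, 8, 15] 136
    !![0, 0, 0, 0, 0; 0, -1, -1, -1, 1; -1, -1, -1, -1, 1; -1, -2, -1, -1, 1; -1, -2, -2, -1, 1;
       -1, -2, -2, -2, 1] 1 (by decide +kernel)

end NormalForms

section DiagonalMomentNormalForm

open BracketTable

variable {L : Type*} [LieRing L] [LieAlgebra ℝ L]

lemma forall_lt_fin_succ {n : ℕ} {P : Fin (n + 1) → Fin (n + 1) → Prop} :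
    (∀ i j, i < j → P i j) ↔
      (∀ j : Fin n, P 0 j.succ) ∧ ∀ i j : Fin n, i < j → P i.succ j.succ := by
  simp [Fin.forall_fin_succ]

/-- The table of de Graaf's `L6_11`, in a basis in which `[x 0, x 4]` has a component. It is not
nice, because no basis of that algebra realises a nice table. -/
abbrev tableL6_11 : BracketTable (Fin 6) (Fin 6) :=
  ![(0, 1, 2), (0, 2, 3), (0, 4, 3), (0, 3, 5), (1, 2, 5), (1, 4, 5)]

-- The moment map has an off-diagonal entry `(2, 4)`, which vanishes by `h`.
lemma moment_tableL6_11 {s : Fin 6 → ℝ} (h : s 1 * s 2 + s 4 * s 5 = 0) :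
    (tableL6_11.structConst s).moment =
      diagonal fun k => -2 * ∑ r, s r ^ 2 * (tableL6_11.root r k : ℝ) := by
  ext k l
  have cross : tableL6_11.pairing 1 2 k l + tableL6_11.pairing 2 1 k l =
      tableL6_11.pairing 4 5 k l + tableL6_11.pairing 5 4 k l := by
    simp [pairing, rowConst]
    grind
  rw [BracketTable.moment_structConst]
  simp (disch := decide) only [Fin.sum_univ_six, pairing_self,
    Compatible.pairing_eq_zero, mul_zero, add_zero, zero_add, diagonal_apply]
  split_ifs <;> linear_combination (tableL6_11.pairing 1 2 k l + tableL6_11.pairing 2 1 k l) * h -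
    s 4 * s 5 * cross

lemma isSoliton_tableL6_11 {s : Fin 6 → ℝ} (h : s 1 * s 2 + s 4 * s 5 = 0)
    (hs : ∀ r, s r ^ 2 = (![49, 60, 10, 42, 24, 25] : Fin 6 → ℤ) r / 448) :
    (tableL6_11.structConst s).IsSoliton := by
  have gram : ∀ r, 2 * ∑ r', (![49, 60, 10, 42, 24, 25] : Fin 6 → ℤ) r' *
      (tableL6_11.root r ⬝ᵥ tableL6_11.root r') = 448 := by decide +kernel
  refine isSoliton_of_moment_eq_diagonal (moment_tableL6_11 h) fun r => ?_
  have gram_cast := congrArg (Int.cast (R := ℝ)) (gram r)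
  push_cast at gram_cast
  simp only [hs, div_mul_eq_mul_div, ← Finset.sum_div, ← mul_div_assoc, gram_cast]
  norm_num

lemma exists_realizes_tableL6_11 {β γ : ℝ} (hβ : β ≠ 0) (hγ : γ ≠ 0) {x : Fin 6 → L}
    (h : Realizes ![(0, 1, 2), (0, 2, 3), (0, 3, 5), (1, 2, 5), (1, 4, 5)] ![1, 1, 1, β, γ] x)
    {a b b' c d e : ℝ} (ha : 0 < a) (hb : 0 < b) (hb' : 0 < b') (hc : 0 < c) (hd : 0 < d)
    (he : 0 < e) : ∃ y : Fin 6 → L, Realizes tableL6_11 ![a, b, -b', c, d, e] y := by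
  obtain ⟨t, ht₀, ht⟩ : ∃ t : ℝ, t ≠ 0 ∧ t = d / (b * c * β) := ⟨_, by positivity, rfl⟩
  obtain ⟨t₂, ht₂₀, ht₂⟩ : ∃ t₂ : ℝ, t₂ ≠ 0 ∧ a * t₂ = t := ⟨t / a, by positivity, by field_simp⟩
  obtain ⟨t₃, ht₃₀, ht₃⟩ : ∃ t₃ : ℝ, t₃ ≠ 0 ∧ b * t₃ = t₂ := ⟨t₂ / b, by positivity, by field_simp⟩
  obtain ⟨t₅, ht₅₀, ht₅⟩ : ∃ t₅ : ℝ, t₅ ≠ 0 ∧ c * t₅ = t₃ := ⟨t₃ / c, by positivity, by field_simp⟩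
  have hd' : t₂ * (t * β) = d * t₅ := by
    rw [← ht₃, ← ht₅, ht]
    field_simp
  obtain ⟨r, hr⟩ : ∃ r : ℝ, b' * t₃ = -r := ⟨-(b' * t₃), (neg_neg _).symm⟩
  obtain ⟨p, hp₀, hp⟩ : ∃ p : ℝ, p ≠ 0 ∧ p * (t * γ) + r * (t * β) = e * t₅ := by
    refine ⟨(e * t₅ - r * (t * β)) / (t * γ), div_ne_zero ?_ (by positivity), by field_simp; ring⟩
    have : e * t₅ - r * (t * β) = (e + b' * d / b) * t₅ := by
      rw [← ht₃] at hd'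
      field_simp
      linear_combination b' * hd' - t * β * b * hr
    rw [this]
    positivity
  refine ⟨![x 0, t • x 1, t₂ • x 2, t₃ • x 3, p • x 4 + r • x 2, t₅ • x 5],
    h.changeBasis rfl ?_ ?_⟩
  · simp only [Fin.forall_fin_succ]
    rintro S ⟨h₀, h₁, h₂, h₃, h₄, h₅, -⟩
    have h₂ : x 2 ∈ S := (S.smul_mem_iff ht₂₀).mp h₂
    have h₄ : x 4 ∈ S := (S.smul_mem_iff hp₀).mp ((S.add_mem_iff_left (S.smul_mem _ h₂)).mp h₄)
    exact ⟨h₀, (S.smul_mem_iff ht₀).mp h₁, h₂, (S.smul_mem_iff ht₃₀).mp h₃, h₄,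
      (S.smul_mem_iff ht₅₀).mp h₅, fun i => i.elim0⟩
  · simp only [forall_lt_fin_succ]
    simp only [Fin.forall_fin_succ]
    and_intros <;> simp [h.lie, bracket, Fin.sum_univ_succ, smul_smul, ← add_smul, ht₂, ht₃, ht₅,
      hd', hr, hp]

lemma isNilsoliton_of_L6_11 {β γ : ℝ} (hβ : β ≠ 0) (hγ : γ ≠ 0) {x : Fin 6 → L}
    (h : Realizes ![(0, 1, 2), (0, 2, 3), (0, 3, 5), (1, 2, 5), (1, 4, 5)] ![1, 1, 1, β, γ] x) :
    IsNilsoliton L := by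
  have exists_sqrt (q : ℝ) (hq : 0 < q) : ∃ s : ℝ, 0 < s ∧ s ^ 2 = q / 448 :=
    ⟨√(q / 448), by positivity, Real.sq_sqrt (by positivity)⟩
  obtain ⟨a, ha, ha'⟩ := exists_sqrt 49 (by norm_num)
  obtain ⟨b, hb, hb'⟩ := exists_sqrt 60 (by norm_num)
  obtain ⟨c, hc, hc'⟩ := exists_sqrt 42 (by norm_num)
  obtain ⟨d, hd, hd'⟩ := exists_sqrt 24 (by norm_num)
  obtain ⟨e, he, he'⟩ := exists_sqrt 25 (by norm_num)
  have hde : (d * e / b) ^ 2 = 10 / 448 := by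
    rw [div_pow, mul_pow, hb', hd', he']
    norm_num
  obtain ⟨y, hy⟩ := exists_realizes_tableL6_11 hβ hγ h ha hb (b' := d * e / b) (by positivity)
    hc hd he
  refine hy.isNilsoliton (isSoliton_tableL6_11 ?_ ?_)
  · simp
    field_simp
    ring
  · simp only [Fin.forall_fin_succ]
    simp [*]

end DiagonalMomentNormalForm

section LowerCentralSeries

open Module Submodule

variable (L : Type*) [LieRing L] [LieAlgebra ℝ L]

/-- The `k`-th term of the lower central series of `L`, as a subspace; the term of index `0` is
`L` itself. -/
abbrev lcsTerm (k : ℕ) : Submodule ℝ L := (LieModule.lowerCentralSeries ℝ L L k).toSubmodule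

/-- The dimension of the `k`-th term of the lower central series. -/
abbrev lcsRank (k : ℕ) : ℕ := finrank ℝ (lcsTerm L k)

lemma lcsRank_zero : lcsRank L 0 = finrank ℝ L := by
  rw [lcsRank, lcsTerm, LieModule.lowerCentralSeries_zero, LieSubmodule.top_toSubmodule,
    finrank_top]

variable {L} {k : ℕ}

lemma lcsTerm_antitone : Antitone (lcsTerm L) :=
  LieModule.antitone_lowerCentralSeries ℝ L L

lemma lie_mem_lcsTerm_succ (x : L) {y : L} (hy : y ∈ lcsTerm L k) : ⁅x, y⁆ ∈ lcsTerm L (k + 1) := by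
  rw [lcsTerm, LieModule.lowerCentralSeries_succ]
  exact LieSubmodule.lie_mem_lie (LieSubmodule.mem_top x) hy

lemma mem_lcsTerm_zero (x : L) : x ∈ lcsTerm L 0 := LieSubmodule.mem_top x

lemma lie_mem_lcsTerm_one (x y : L) : ⁅x, y⁆ ∈ lcsTerm L 1 :=
  lie_mem_lcsTerm_succ x (mem_lcsTerm_zero y)

lemma lcsTerm_succ_le {S : Submodule ℝ L} (h : ∀ x : L, ∀ y ∈ lcsTerm L k, ⁅x, y⁆ ∈ S) :
    lcsTerm L (k + 1) ≤ S := by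
  rw [lcsTerm, LieModule.lowerCentralSeries_succ, LieSubmodule.lieIdeal_oper_eq_linear_span',
    span_le]
  rintro _ ⟨x, -, y, hy, rfl⟩
  exact h x y hy

lemma lie_mem_lcsTerm {i j : ℕ} {x y : L} (hx : x ∈ lcsTerm L i) (hy : y ∈ lcsTerm L j) :
    ⁅x, y⁆ ∈ lcsTerm L (i + j + 1) := by
  induction i generalizing x y j with
  | zero => simpa using lie_mem_lcsTerm_succ x hy
  | succ i ih =>
    refine lcsTerm_succ_le
      (S := (lcsTerm L (i + 1 + j + 1)).comap
        ((LieModule.toEnd ℝ L L : L →ₗ[ℝ] Module.End ℝ L).flip y))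
      (fun u v hv => ?_) hx
    have huvy := lie_mem_lcsTerm_succ u (ih hv hy)
    have hvuy := ih hv (lie_mem_lcsTerm_succ u hy)
    simp only [mem_comap, LinearMap.flip_apply, LieHom.coe_toLinearMap, LieModule.toEnd_apply_apply,
      lie_lie]
    rw [show i + 1 + j + 1 = i + j + 1 + 1 by ring]
    exact sub_mem huvy hvuy

lemma lie_eq_zero_of_mem_lcsTerm {i j m : ℕ} (hm : lcsTerm L m = ⊥) {x y : L}
    (hx : x ∈ lcsTerm L i) (hy : y ∈ lcsTerm L j) (h : m ≤ i + j + 1) : ⁅x, y⁆ = 0 := by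
  have hxy := lcsTerm_antitone h (lie_mem_lcsTerm hx hy)
  rwa [hm, mem_bot] at hxy

lemma BracketTable.Realizes.of_lcsTerm_le {ι ρ : Type*} [Fintype ι] [LinearOrder ι] [Fintype ρ]
    {T : BracketTable ι ρ} {c : ρ → ℝ} {x : ι → L} (hcard : Fintype.card ι = finrank ℝ L)
    (hx : ∀ S : Submodule ℝ L, (∀ i, x i ∈ S) → lcsTerm L 0 ≤ S)
    (h : ∀ i j, i < j → ⁅x i, x j⁆ = T.bracket c x i j) : T.Realizes c x :=
  .of_lt hcard (fun y _ =>
    hx _ (fun i => subset_span (Set.mem_range_self i)) (mem_lcsTerm_zero y)) h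

/-- The vectors of `W` lie in the `k`-th term of the lower central series and generate it modulo
the next one. -/
structure GeneratesLayer (k : ℕ) (W : Set L) : Prop where
  subset : W ⊆ lcsTerm L k
  le_span_sup : lcsTerm L k ≤ span ℝ W ⊔ lcsTerm L (k + 1)

namespace GeneratesLayer

variable {W V X : Set L}

lemma le (h : GeneratesLayer k W) {S : Submodule ℝ L} (hW : W ⊆ S) (hS : lcsTerm L (k + 1) ≤ S) :
    lcsTerm L k ≤ S :=
  h.le_span_sup.trans (sup_le (span_le.2 hW) hS)

lemma of_subset (h : GeneratesLayer k W) (hV : V ⊆ lcsTerm L k)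
    (hWV : ∀ S : Submodule ℝ L, V ⊆ S → lcsTerm L (k + 1) ≤ S → W ⊆ S) : GeneratesLayer k V :=
  ⟨hV, h.le (hWV _ (subset_span.trans (SetLike.coe_subset_coe.2 le_sup_left)) le_sup_right)
    le_sup_right⟩

lemma congr_span (h : GeneratesLayer k W) (hVW : span ℝ V = span ℝ W) : GeneratesLayer k V :=
  ⟨span_le.1 (hVW ▸ span_le.2 h.subset), hVW ▸ h.le_span_sup⟩

lemma lie (hX : GeneratesLayer 0 X) (hW : GeneratesLayer k W) :
    GeneratesLayer (k + 1) (Set.image2 (⁅·, ·⁆) X W) := by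
  refine ⟨Set.image2_subset_iff.2 fun x _ w hw => lie_mem_lcsTerm_succ x (hW.subset hw),
    lcsTerm_succ_le fun x y hy => ?_⟩
  set S := span ℝ (Set.image2 (⁅·, ·⁆) X W) ⊔ lcsTerm L (k + 1 + 1)
  have hS : lcsTerm L (k + 1 + 1) ≤ S := le_sup_right
  have lie_W (w) (hw : w ∈ W) (x : L) : ⁅x, w⁆ ∈ S := by
    refine hX.le (S := S.comap ((LieModule.toEnd ℝ L L : L →ₗ[ℝ] Module.End ℝ L).flip w))
      (fun x hx => mem_sup_left (subset_span ⟨x, hx, w, hw, rfl⟩)) (fun x hx => hS ?_)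
      (LieSubmodule.mem_top x)
    rw [show k + 1 + 1 = 0 + 1 + k + 1 by ring]
    exact lie_mem_lcsTerm hx (hW.subset hw)
  exact hW.le (S := S.comap (LieModule.toEnd ℝ L L x)) (fun w hw => lie_W w hw x)
    (fun y hy => hS (lie_mem_lcsTerm_succ x hy)) hy

lemma exists_smul_of_singleton {a : L} (h : GeneratesLayer k {a}) (hk : lcsTerm L (k + 1) = ⊥)
    {y : L} (hy : y ∈ lcsTerm L k) : ∃ r : ℝ, r • a = y := by
  rw [← mem_span_singleton, ← sup_bot_eq (span ℝ {a}), ← hk]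
  exact h.le_span_sup hy

lemma exists_smul_add_smul_of_pair {a b : L} (h : GeneratesLayer k {a, b})
    (hk : lcsTerm L (k + 1) = ⊥) {y : L} (hy : y ∈ lcsTerm L k) :
    ∃ r s : ℝ, r • a + s • b = y := by
  rw [← mem_span_pair, ← sup_bot_eq (span ℝ {a, b}), ← hk]
  exact h.le_span_sup hy

lemma of_insert_of_mem {b : L} (h : GeneratesLayer k (insert b W)) (hb : b ∈ lcsTerm L (k + 1)) :
    GeneratesLayer k W :=
  h.of_subset ((Set.subset_insert b W).trans h.subset) fun _ hS hk =>
    Set.insert_subset (hk hb) hS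

lemma of_pair_of_mem {a b : L} (h : GeneratesLayer k {a, b}) (hb : b ∈ lcsTerm L (k + 1)) :
    GeneratesLayer k {a} :=
  of_insert_of_mem (Set.pair_comm a b ▸ h) hb

variable [Module.Finite ℝ L]

lemma lcsRank_le (h : GeneratesLayer k W) (hW : W.Finite) :
    lcsRank L k ≤ lcsRank L (k + 1) + W.ncard := by
  have := hW.fintype
  have hspan := finrank_span_le_card (R := ℝ) W
  rw [← Set.ncard_eq_toFinset_card'] at hspan
  have : lcsRank L k ≤ _ := finrank_mono h.le_span_sup
  have : _ ≤ _ + lcsRank L (k + 1) := finrank_add_le_finrank_add_finrank (span ℝ W) _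
  omega

lemma lcsRank_le_succ {a : L} (h : GeneratesLayer k {a}) : lcsRank L k ≤ lcsRank L (k + 1) + 1 := by
  simpa using h.lcsRank_le (Set.finite_singleton a)

lemma lcsRank_le_add_two {a b : L} (h : GeneratesLayer k {a, b}) :
    lcsRank L k ≤ lcsRank L (k + 1) + 2 := by
  have := h.lcsRank_le (Set.toFinite _)
  have := Set.ncard_insert_le a {b}
  rw [Set.ncard_singleton] at this
  omega

lemma lcsRank_le_add_three {a b c : L} (h : GeneratesLayer k {a, b, c}) :
    lcsRank L k ≤ lcsRank L (k + 1) + 3 := by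
  have := h.lcsRank_le (Set.toFinite _)
  have := Set.ncard_insert_le a {b, c}
  have := Set.ncard_insert_le b {c}
  rw [Set.ncard_singleton] at this
  omega

end GeneratesLayer

lemma exists_lcsTerm_eq_span_singleton {k : ℕ} (h : lcsRank L k = 1) :
    ∃ z : L, z ≠ 0 ∧ lcsTerm L k = span ℝ {z} := by
  obtain ⟨z, hz₀, hz⟩ := finrank_eq_one_iff'.1 h
  refine ⟨z, fun hz₁ => hz₀ (Subtype.ext hz₁), le_antisymm (fun y hy => ?_) ?_⟩
  · obtain ⟨r, hr⟩ := hz ⟨y, hy⟩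
    exact mem_span_singleton.2 ⟨r, congrArg Subtype.val hr⟩
  · exact (span_singleton_le_iff_mem _ _).2 z.2

variable [Module.Finite ℝ L]

lemma lcsTerm_eq_bot (h : lcsRank L k = 0) : lcsTerm L k = ⊥ := finrank_eq_zero.1 h

lemma lcsRank_succ_lt [LieRing.IsNilpotent L] (h : lcsRank L k ≠ 0) :
    lcsRank L (k + 1) < lcsRank L k := by
  refine finrank_lt_finrank_of_lt (lt_of_le_of_ne (lcsTerm_antitone k.le_succ) fun he => h ?_)
  have stable (m : ℕ) : lcsTerm L k ≤ lcsTerm L (k + m) := by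
    induction m with
    | zero => rfl
    | succ m ih =>
      rw [← he]
      exact lcsTerm_succ_le fun x y hy => lie_mem_lcsTerm_succ x (ih hy)
  obtain ⟨m, hm⟩ := LieModule.IsNilpotent.nilpotent ℝ L L
  have hkm : lcsTerm L (k + m) ≤ lcsTerm L m := lcsTerm_antitone (Nat.le_add_left m k)
  rw [finrank_eq_zero, eq_bot_iff]
  simpa [lcsTerm, hm] using (stable m).trans hkm

lemma exists_sum_smul_mem_of_finrank_lt {m : ℕ} {P Q : Submodule ℝ L} (hPQ : P ≤ Q)
    (w : Fin m → L) (hw : ∀ i, w i ∈ Q) (h : finrank ℝ Q < finrank ℝ P + m) :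
    ∃ c : Fin m → ℝ, (∃ i, c i ≠ 0) ∧ ∑ i, c i • w i ∈ P := by
  let f := P.mkQ.domRestrict Q
  have hker : finrank ℝ f.ker = finrank ℝ P := by
    rw [LinearMap.ker_domRestrict, ker_mkQ]
    exact (comapSubtypeEquivOfLe hPQ).finrank_eq
  have hdep : ¬ LinearIndependent ℝ fun i => f.rangeRestrict ⟨w i, hw i⟩ := fun hli => by
    have := hli.fintype_card_le_finrank
    have := f.finrank_range_add_finrank_ker
    rw [Fintype.card_fin] at *
    omega
  obtain ⟨c, hc, hne⟩ := Fintype.not_linearIndependent_iff.1 hdep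
  refine ⟨c, hne, ?_⟩
  simpa [f, ← map_smul, ← map_sum, Subtype.ext_iff] using hc

lemma exists_generatesLayer_zero {d : ℕ} (h : lcsRank L 1 + d = finrank ℝ L) :
    ∃ x : Fin d → L, GeneratesLayer 0 (Set.range x) := by
  have hd : finrank ℝ (L ⧸ lcsTerm L 1) = d := by
    have : _ + lcsRank L 1 = _ := finrank_quotient_add_finrank (lcsTerm L 1)
    omega
  let b := finBasisOfFinrankEq ℝ (L ⧸ lcsTerm L 1) hd
  choose x hx using fun i => (lcsTerm L 1).mkQ_surjective (b i)
  refine ⟨x, fun _ _ => LieSubmodule.mem_top _, fun y _ => ?_⟩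
  have hy : (lcsTerm L 1).mkQ y ∈ (span ℝ (Set.range x)).map (lcsTerm L 1).mkQ := by
    rw [map_span, ← Set.range_comp, show (lcsTerm L 1).mkQ ∘ x = b from funext hx, b.span_eq]
    exact mem_top
  rwa [← mem_comap, comap_map_mkQ, sup_comm] at hy

end LowerCentralSeries

section DirectSums

open Module

variable {L : Type*} [LieRing L] [LieAlgebra ℝ L]

lemma IsNilsoliton.of_isCompl {I J : LieIdeal ℝ L} (h : IsCompl I J) (hI : IsNilsoliton I)
    (hJ : IsNilsoliton J) : IsNilsoliton L := by
  have hIJ (x : I) (y : J) : ⁅(x : L), (y : L)⁆ = 0 := by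
    have hmem : ⁅(x : L), (y : L)⁆ ∈ I ⊓ J :=
      ⟨lie_mem_left ℝ L I x y x.2, lie_mem_right ℝ L J x y y.2⟩
    rwa [h.inf_eq_bot, LieSubmodule.mem_bot] at hmem
  have hJI (x : I) (y : J) : ⁅(y : L), (x : L)⁆ = 0 := by rw [← lie_skew, hIJ, neg_zero]
  let e := Submodule.prodEquivOfIsCompl I.toSubmodule J.toSubmodule
    (LieSubmodule.isCompl_toSubmodule.2 h)
  exact (hI.prod hJ).of_equiv { e with
    map_lie' := fun {p q} => by
      change ((⁅p.1, q.1⁆ : I) : L) + ((⁅p.2, q.2⁆ : J) : L) = ⁅(p.1 : L) + p.2, (q.1 : L) + q.2⁆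
      simp only [add_lie, lie_add, hIJ, hJI, add_zero, zero_add, LieSubmodule.coe_bracket,
        LieIdeal.coe_bracket_of_module] }

lemma IsNilsoliton.of_isLieAbelian [Module.Finite ℝ L] [IsLieAbelian L] : IsNilsoliton L :=
  ⟨Fin (finrank ℝ L), inferInstance, finBasis ℝ L, by
    ext i j k; simp [StructConst.infAction, trivial_lie_zero]⟩

lemma exists_isCompl_lieIdeal_of_central [Module.Finite ℝ L] {z : L} (hz : ∀ x : L, ⁅x, z⁆ = 0)
    (hz₁ : z ∉ lcsTerm L 1) :
    ∃ I J : LieIdeal ℝ L, IsCompl I J ∧ finrank ℝ I + 1 = finrank ℝ L ∧ IsLieAbelian J := by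
  have hz₀ : z ≠ 0 := fun h => hz₁ (h ▸ zero_mem _)
  obtain ⟨P, hP, hPz⟩ := ((Submodule.disjoint_span_singleton' hz₀).2 hz₁).exists_isCompl
  let I : LieIdeal ℝ L := { P with lie_mem := fun {x y} _ => hP (lie_mem_lcsTerm_one x y) }
  have lie_span (x : L) {y : L} (hy : y ∈ Submodule.span ℝ {z}) : ⁅x, y⁆ = 0 := by
    obtain ⟨r, rfl⟩ := Submodule.mem_span_singleton.1 hy
    rw [lie_smul, hz, smul_zero]
  let J : LieIdeal ℝ L := { Submodule.span ℝ {z} with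
    lie_mem := fun {x y} hy => by
      change ⁅x, y⁆ ∈ Submodule.span ℝ {z}
      rw [lie_span x hy]
      exact zero_mem _ }
  refine ⟨I, J, LieSubmodule.isCompl_toSubmodule.1 hPz, ?_, ⟨fun x y => ?_⟩⟩
  · rw [← finrank_span_singleton (K := ℝ) hz₀]
    exact Submodule.finrank_add_eq_of_isCompl hPz
  · exact Subtype.ext (lie_span x y.2)

end DirectSums

section Alternating

variable {K V : Type*} [Field K] [AddCommGroup V] [Module K V]

/-- The pairs `(x i, y i)` span mutually orthogonal hyperbolic planes of the form `B`. -/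
structure IsHyperbolicFamily (B : V →ₗ[K] V →ₗ[K] K) {m : ℕ} (x y : Fin m → V) : Prop where
  left_left : ∀ i j, B (x i) (x j) = 0
  right_right : ∀ i j, B (y i) (y j) = 0
  left_right : ∀ i j, B (x i) (y j) = if i = j then 1 else 0

namespace IsHyperbolicFamily

variable {B : V →ₗ[K] V →ₗ[K] K} {m : ℕ} {x y : Fin m → V}

lemma right_left (hB : B.IsAlt) (h : IsHyperbolicFamily B x y) (i j : Fin m) :
    B (y i) (x j) = if i = j then -1 else 0 := by
  rw [← hB.neg, h.left_right]
  split_ifs <;> simp_all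

lemma linearIndependent_left (h : IsHyperbolicFamily B x y) : LinearIndependent K x := by
  refine Fintype.linearIndependent_iff.2 fun g hg j => ?_
  simpa [h.left_right] using congrArg (B · (y j)) hg

lemma cons (hB : B.IsAlt) (h : IsHyperbolicFamily B x y) {u v : V} (huv : B u v = 1)
    (hu : ∀ j, B u (x j) = 0 ∧ B u (y j) = 0) (hv : ∀ j, B v (x j) = 0 ∧ B v (y j) = 0) :
    IsHyperbolicFamily B (Fin.cons u x : Fin (m + 1) → V) (Fin.cons v y : Fin (m + 1) → V) where
  left_left := by
    have hxu j : B (x j) u = 0 := by rw [← hB.neg, (hu j).1, neg_zero]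
    simp [Fin.forall_fin_succ, hB.self_eq_zero, hu, hxu, h.left_left]
  right_right := by
    have hyv j : B (y j) v = 0 := by rw [← hB.neg, (hv j).2, neg_zero]
    simp [Fin.forall_fin_succ, hB.self_eq_zero, hv, hyv, h.right_right]
  left_right := by
    have hxv j : B (x j) v = 0 := by rw [← hB.neg, (hv j).1, neg_zero]
    simp [Fin.forall_fin_succ, huv, hu, hxv, h.left_right, Fin.succ_ne_zero,
      (Fin.succ_ne_zero _).symm]

/-- The component of `u` orthogonal to a hyperbolic family. -/
def orthogonalPart (B : V →ₗ[K] V →ₗ[K] K) (x y : Fin m → V) (u : V) : V :=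
  u - ∑ i, (B u (y i) • x i - B u (x i) • y i)

lemma orthogonalPart_orthogonal (hB : B.IsAlt) (h : IsHyperbolicFamily B x y) (u : V) (j : Fin m) :
    B (orthogonalPart B x y u) (x j) = 0 ∧ B (orthogonalPart B x y u) (y j) = 0 := by
  simp [orthogonalPart, h.left_left, h.right_right, h.left_right, h.right_left hB]

lemma sub_orthogonalPart_mem (u : V) : u - orthogonalPart B x y u ∈
    Submodule.span K (Set.range x ∪ Set.range y) := by
  rw [orthogonalPart, sub_sub_cancel]
  exact Submodule.sum_mem _ fun i _ => Submodule.sub_mem _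
    (Submodule.smul_mem _ _ (Submodule.subset_span (.inl ⟨i, rfl⟩)))
    (Submodule.smul_mem _ _ (Submodule.subset_span (.inr ⟨i, rfl⟩)))

lemma apply_orthogonalPart {w : V} (hw : ∀ j, B w (x j) = 0 ∧ B w (y j) = 0)
    (u : V) : B w (orthogonalPart B x y u) = B w u := by
  simp [orthogonalPart, hw]

lemma exists_cons (hB : B.IsAlt) (h : IsHyperbolicFamily B x y)
    (hspan : Submodule.span K (Set.range x ∪ Set.range y) ⊔ B.ker ≠ ⊤) :
    ∃ u v, IsHyperbolicFamily B (Fin.cons u x : Fin (m + 1) → V)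
      (Fin.cons v y : Fin (m + 1) → V) := by
  obtain ⟨u, hu⟩ := (Submodule.eq_top_iff'.not.trans not_forall).1 hspan
  set u' := orthogonalPart B x y u
  have hu' : B u' ≠ 0 := fun h0 => hu <| by
    rw [← sub_add_cancel u u']
    exact Submodule.add_mem_sup (sub_orthogonalPart_mem u) h0
  obtain ⟨v, hv⟩ := DFunLike.ne_iff.1 hu'
  have orth := h.orthogonalPart_orthogonal hB
  refine ⟨u', (B u' v)⁻¹ • orthogonalPart B x y v, h.cons hB ?_ (orth u) fun j => ?_⟩
  · rw [map_smul, apply_orthogonalPart (orth u), smul_eq_mul, inv_mul_cancel₀ hv]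
  · simp [orth v j]

end IsHyperbolicFamily

theorem exists_isHyperbolic_span_sup_ker_eq_top [FiniteDimensional K V] {B : V →ₗ[K] V →ₗ[K] K}
    (hB : B.IsAlt) : ∃ (m : ℕ) (x y : Fin m → V), IsHyperbolicFamily B x y ∧
      Submodule.span K (Set.range x ∪ Set.range y) ⊔ B.ker = ⊤ := by
  by_contra! hne
  have exists_family (m : ℕ) : ∃ x y : Fin m → V, IsHyperbolicFamily B x y := by
    induction m with
    | zero => exact ⟨0, 0, finZeroElim, finZeroElim, finZeroElim⟩
    | succ m ih =>
      obtain ⟨x, y, h⟩ := ih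
      obtain ⟨u, v, huv⟩ := h.exists_cons hB (hne m x y h)
      exact ⟨_, _, huv⟩
  obtain ⟨x, y, h⟩ := exists_family (Module.finrank K V + 1)
  simpa using h.linearIndependent_left.fintype_card_le_finrank

end Alternating

section Heisenberg

open Module

/-- The brackets `[x i, y i] = z` of the Heisenberg algebra of dimension `2 * m + 1`; the index
`none` is that of `z`. -/
def heisenbergTable (m : ℕ) : BracketTable (Option (Fin m ⊕ Fin m)) (Fin m) :=
  fun i => (some (.inl i), some (.inr i), none)

variable {m : ℕ}

lemma nice_heisenbergTable : (heisenbergTable m).Nice := by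
  refine ⟨fun r => ?_, fun r r' hr => ?_⟩ <;> simp_all [heisenbergTable, BracketTable.Compatible]

lemma root_heisenbergTable_dotProduct (r r' : Fin m) :
    (heisenbergTable m).root r ⬝ᵥ (heisenbergTable m).root r' = 1 + if r' = r then 2 else 0 := by
  simp only [BracketTable.root_dotProduct, BracketTable.root, heisenbergTable]
  split_ifs <;> simp_all

lemma isSoliton_heisenbergTable {s : ℝ} (hs : s ^ 2 = 1 / (2 * (m + 2))) :
    ((heisenbergTable m).structConst fun _ => s).IsSoliton := by
  refine BracketTable.isSoliton_of_moment_eq_diagonal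
    (nice_heisenbergTable.moment_structConst _) fun r => ?_
  simp only [hs, root_heisenbergTable_dotProduct, ← Finset.mul_sum, Int.cast_add, Int.cast_one,
    Int.cast_ite, Int.cast_ofNat, Int.cast_zero, Finset.sum_add_distrib, Finset.sum_ite_eq',
    Finset.mem_univ, if_true, Finset.sum_const, Finset.card_univ, Fintype.card_fin, nsmul_eq_mul]
  field_simp

variable {L : Type*} [LieRing L] [LieAlgebra ℝ L]

lemma isNilsoliton_of_heisenbergTable {x : Option (Fin m ⊕ Fin m) → L}
    (h : (heisenbergTable m).Realizes (fun _ => 1) x) : IsNilsoliton L := by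
  let s : ℝ := √(1 / (2 * (m + 2)))
  have hs : s ≠ 0 := by positivity
  have h' := h.smul (t := fun i => i.elim s⁻¹ 1) fun i => by cases i <;> simp [hs]
  refine h'.isNilsoliton ?_
  simpa [heisenbergTable] using isSoliton_heisenbergTable (s := s) (Real.sq_sqrt (by positivity))

/-- The alternating form obtained from the bracket by means of a linear functional. -/
def bracketForm (g : Dual ℝ L) : L →ₗ[ℝ] L →ₗ[ℝ] ℝ :=
  (LieModule.toEnd ℝ L L : L →ₗ[ℝ] Module.End ℝ L).compr₂ g

lemma bracketForm_apply (g : Dual ℝ L) (x y : L) : bracketForm g x y = g ⁅x, y⁆ := rfl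

lemma bracketForm_isAlt (g : Dual ℝ L) : (bracketForm g).IsAlt := fun x => by
  rw [bracketForm_apply, lie_self, map_zero]

lemma IsHyperbolicFamily.realizes_heisenbergTable {g : Dual ℝ L} {x y : Fin m → L}
    (h : IsHyperbolicFamily (bracketForm g) x y) {z : L} (hz₀ : z ≠ 0) (hz : ∀ u : L, ⁅u, z⁆ = 0)
    (hbr : ∀ u v : L, ⁅u, v⁆ = g ⁅u, v⁆ • z)
    (hspan : Submodule.span ℝ (Set.range x ∪ Set.range y) ⊔ Submodule.span ℝ {z} = ⊤) :
    (heisenbergTable m).Realizes (fun _ => 1)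
      (fun i : Option (Fin m ⊕ Fin m) => i.elim z (Sum.elim x y)) where
  linearIndependent := by
    refine Fintype.linearIndependent_iff.2 fun c hc => ?_
    simp only [Fintype.sum_option, Fintype.sum_sum_type, Option.elim, Sum.elim_inl,
      Sum.elim_inr] at hc
    have form_z (u : L) : bracketForm g u z = 0 := by rw [bracketForm_apply, hz, map_zero]
    have z_form (u : L) : bracketForm g z u = 0 := by
      rw [← (bracketForm_isAlt g).neg, form_z, neg_zero]
    have left (j : Fin m) : c (some (.inl j)) = 0 := by
      simpa [z_form, h.left_right, h.right_right] using congrArg (bracketForm g · (y j)) hc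
    have right (j : Fin m) : c (some (.inr j)) = 0 := by
      simpa [form_z, h.left_left, h.left_right] using congrArg (bracketForm g (x j)) hc
    have center : c none = 0 := by simpa [left, right, hz₀] using hc
    rintro (_ | i | i)
    exacts [center, left i, right i]
  span_eq_top := by
    rw [← hspan, ← Submodule.span_union]
    refine Submodule.span_mono ?_
    rintro _ ((⟨i, rfl⟩ | ⟨i, rfl⟩) | rfl)
    exacts [⟨some (.inl i), rfl⟩, ⟨some (.inr i), rfl⟩, ⟨none, rfl⟩]
  lie := by
    have hz' (u : L) : ⁅z, u⁆ = 0 := by rw [← lie_skew, hz, neg_zero]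
    have hxy (i j) : ⁅x i, y j⁆ = if i = j then z else 0 := by
      rw [hbr, ← bracketForm_apply, h.left_right, ite_smul, one_smul, zero_smul]
    have hyx (i j) : ⁅y i, x j⁆ = -if j = i then z else 0 := by rw [← lie_skew, hxy]
    have hxx (i j) : ⁅x i, x j⁆ = 0 := by rw [hbr, ← bracketForm_apply, h.left_left, zero_smul]
    have hyy (i j) : ⁅y i, y j⁆ = 0 := by rw [hbr, ← bracketForm_apply, h.right_right, zero_smul]
    rintro (_ | i | i) (_ | j | j) <;>
      simp [heisenbergTable, BracketTable.bracket, hz, hz', hxx, hyy, hxy, hyx, ite_and]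

theorem isNilsoliton_of_lcsRank_one [Module.Finite ℝ L] [LieRing.IsNilpotent L]
    (h₁ : lcsRank L 1 = 1)
    (hZ : LieAlgebra.center ℝ L ≤ LieModule.lowerCentralSeries ℝ L L 1) : IsNilsoliton L := by
  have hlt : lcsRank L 2 < lcsRank L 1 := lcsRank_succ_lt (by omega)
  have h₂ : lcsTerm L 2 = ⊥ := lcsTerm_eq_bot (by omega)
  obtain ⟨z, hz₀, hz⟩ := exists_lcsTerm_eq_span_singleton h₁
  obtain ⟨g, hg⟩ := Projective.exists_dual_eq_one ℝ hz₀
  have hbr (u v : L) : ⁅u, v⁆ = g ⁅u, v⁆ • z := by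
    obtain ⟨r, hr⟩ := Submodule.mem_span_singleton.1 (hz ▸ lie_mem_lcsTerm_one u v)
    rw [← hr, map_smul, hg, smul_eq_mul, mul_one]
  obtain ⟨m, x, y, h, hspan⟩ := exists_isHyperbolic_span_sup_ker_eq_top (bracketForm_isAlt g)
  have hker : (bracketForm g).ker ≤ Submodule.span ℝ {z} := fun u hu => by
    rw [← hz]
    refine hZ ((LieModule.mem_maxTrivSubmodule ℝ L L u).2 fun v => ?_)
    rw [← lie_skew, hbr, ← bracketForm_apply, LinearMap.mem_ker.1 hu, LinearMap.zero_apply,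
      zero_smul, neg_zero]
  refine isNilsoliton_of_heisenbergTable (h.realizes_heisenbergTable hz₀ (fun u => ?_) hbr
    (top_le_iff.1 (hspan.ge.trans (sup_le_sup_left hker _))))
  exact lie_eq_zero_of_mem_lcsTerm h₂ (mem_lcsTerm_zero u)
    (hz ▸ Submodule.mem_span_singleton_self z) le_rfl

end Heisenberg

section TwoGenerators

open Module BracketTable

lemma lie_lie_lie_left_comm {L : Type*} [LieRing L] (a b : L) :
    ⁅b, ⁅a, ⁅a, b⁆⁆⁆ = ⁅a, ⁅b, ⁅a, b⁆⁆⁆ := by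
  rw [leibniz_lie a b ⁅a, b⁆, lie_self, zero_add]

variable {L : Type*} [LieRing L] [LieAlgebra ℝ L] {k : ℕ} {a b w : L}

lemma GeneratesLayer.lie_pair (h : GeneratesLayer 0 {a, b}) : GeneratesLayer 1 {⁅a, b⁆} := by
  refine (h.lie h).of_subset (Set.singleton_subset_iff.2 (lie_mem_lcsTerm_one a b))
    fun S hS _ => ?_
  have hab : ⁅a, b⁆ ∈ S := hS rfl
  have hba : ⁅b, a⁆ ∈ S := by rw [← lie_skew]; exact neg_mem hab
  simp [Set.insert_subset_iff, hab, hba]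

lemma GeneratesLayer.lie_pair_singleton (h : GeneratesLayer 0 {a, b}) (hw : GeneratesLayer k {w}) :
    GeneratesLayer (k + 1) {⁅a, w⁆, ⁅b, w⁆} := by
  simpa [Set.image_pair] using h.lie hw

lemma isNilsoliton_of_five_of_lcsTerm_three (hn : finrank ℝ L = 5) (g₀ : GeneratesLayer 0 {a, b})
    (h₃ : lcsTerm L 3 = ⊥) : IsNilsoliton L := by
  have g₁ := g₀.lie_pair
  have g₂ := g₀.lie_pair_singleton g₁
  generalize hab : ⁅a, b⁆ = c at *
  generalize hac : ⁅a, c⁆ = d at *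
  generalize hbc : ⁅b, c⁆ = e at *
  have lie_eq_zero (x : L) {y : L} (hy : y ∈ lcsTerm L 2) : ⁅x, y⁆ = 0 :=
    lie_eq_zero_of_mem_lcsTerm h₃ (mem_lcsTerm_zero x) hy le_rfl
  have lie_d (x : L) : ⁅x, d⁆ = 0 := lie_eq_zero x (g₂.subset (.inl rfl))
  have lie_e (x : L) : ⁅x, e⁆ = 0 := lie_eq_zero x (g₂.subset (.inr rfl))
  refine isNilsoliton_of_L5_9 (c := ![1, 1, 1]) (by simp [Fin.forall_fin_succ])
    (x := ![a, b, c, d, e]) (.of_lcsTerm_le hn.symm (fun S hS => ?_) ?_)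
  · exact g₀.le (Set.pair_subset (hS 0) (hS 1)) <| g₁.le (Set.singleton_subset_iff.2 (hS 2)) <|
      g₂.le (Set.pair_subset (hS 3) (hS 4)) (h₃ ▸ bot_le)
  · simp only [forall_lt_fin_succ]
    simp [Fin.forall_fin_succ, bracket, Fin.sum_univ_succ, *]

lemma isNilsoliton_of_realizes_five {β : ℝ} {x : Fin 5 → L}
    (h : Realizes ![(0, 1, 2), (0, 2, 3), (0, 3, 4), (1, 2, 4)] ![1, 1, 1, β] x) :
    IsNilsoliton L := by
  by_cases hβ : β = 0
  · exact isNilsoliton_of_L5_7 (c := ![1, 1, 1]) (by simp [Fin.forall_fin_succ])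
      (h.congr fun y => by simp [Fin.forall_fin_succ, bracket, Fin.sum_univ_succ, hβ])
  · exact isNilsoliton_of_L5_6 (by simp [Fin.forall_fin_succ, hβ]) h

variable [Module.Finite ℝ L]

lemma exists_generatesLayer_zero_pair (h : lcsRank L 1 + 2 = finrank ℝ L) :
    ∃ a b : L, GeneratesLayer 0 {a, b} := by
  obtain ⟨x, hx⟩ := exists_generatesLayer_zero h
  have range_eq : Set.range x = {x 0, x 1} := by ext; simp [Fin.exists_fin_two, eq_comm]
  exact ⟨x 0, x 1, range_eq ▸ hx⟩

lemma exists_span_pair_eq_lie_lie_mem (a b : L) (h₂₃ : lcsRank L 2 < lcsRank L 3 + 2) :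
    ∃ a' b' : L, Submodule.span ℝ {a', b'} = Submodule.span ℝ {a, b} ∧
      ⁅b', ⁅a', b'⁆⁆ ∈ lcsTerm L 3 := by
  obtain ⟨c, hc, hmem⟩ := exists_sum_smul_mem_of_finrank_lt (lcsTerm_antitone (Nat.le_succ 2))
    ![⁅a, ⁅a, b⁆⁆, ⁅b, ⁅a, b⁆⁆]
    (Fin.forall_fin_two.2 ⟨lie_mem_lcsTerm_succ _ (lie_mem_lcsTerm_one _ _),
      lie_mem_lcsTerm_succ _ (lie_mem_lcsTerm_one _ _)⟩) h₂₃
  rw [Fin.sum_univ_two] at hmem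
  by_cases hc₁ : c 1 = 0
  · refine ⟨b, a, by rw [Set.pair_comm], ?_⟩
    have hc₀ : c 0 ≠ 0 := (Fin.exists_fin_two.1 hc).resolve_right (not_not.2 hc₁)
    rw [← lie_skew b a, lie_neg, Submodule.neg_mem_iff, ← Submodule.smul_mem_iff _ hc₀]
    simpa [hc₁] using hmem
  · refine ⟨a, c 0 • a + c 1 • b, ?_, ?_⟩
    · refine eq_of_forall_ge_iff fun S => ?_
      simp only [Submodule.span_le, Set.pair_subset_iff, SetLike.mem_coe]
      exact and_congr_right fun ha => by
        rw [S.add_mem_iff_right (S.smul_mem _ ha), S.smul_mem_iff hc₁]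
    · simpa [← smul_add] using Submodule.smul_mem _ (c 1) hmem

lemma exists_generatesLayer_zero_pair_lie_lie_mem (h : lcsRank L 1 + 2 = finrank ℝ L)
    (h₂₃ : lcsRank L 2 < lcsRank L 3 + 2) :
    ∃ a b : L, GeneratesLayer 0 {a, b} ∧ ⁅b, ⁅a, b⁆⁆ ∈ lcsTerm L 3 := by
  obtain ⟨a, b, hab⟩ := exists_generatesLayer_zero_pair h
  obtain ⟨a', b', hspan, hmem⟩ := exists_span_pair_eq_lie_lie_mem a b h₂₃
  exact ⟨a', b', hab.congr_span hspan, hmem⟩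

lemma isNilsoliton_of_five_of_lcsTerm_four (hn : finrank ℝ L = 5) (h₁ : lcsRank L 1 = 3)
    (h₂₃ : lcsRank L 2 < lcsRank L 3 + 2) (h₄ : lcsTerm L 4 = ⊥) : IsNilsoliton L := by
  obtain ⟨a, b, g₀, hbab⟩ := exists_generatesLayer_zero_pair_lie_lie_mem (L := L) (by omega) h₂₃
  have g₁ := g₀.lie_pair
  have g₂ := (g₀.lie_pair_singleton g₁).of_pair_of_mem hbab
  have hb : ⁅b, ⁅a, ⁅a, b⁆⁆⁆ = 0 := by
    rw [lie_lie_lie_left_comm]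
    exact lie_eq_zero_of_mem_lcsTerm h₄ (mem_lcsTerm_zero a) hbab le_rfl
  have g₃ := (g₀.lie_pair_singleton g₂).of_pair_of_mem (hb ▸ zero_mem _)
  generalize hab : ⁅a, b⁆ = c at *
  generalize hac : ⁅a, c⁆ = d at *
  generalize had : ⁅a, d⁆ = e at *
  obtain ⟨β, hβ⟩ := g₃.exists_smul_of_singleton h₄ hbab
  have hc := g₁.subset rfl
  have hd := g₂.subset rfl
  have lie_e (x : L) : ⁅x, e⁆ = 0 :=
    lie_eq_zero_of_mem_lcsTerm h₄ (mem_lcsTerm_zero x) (g₃.subset rfl) le_rfl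
  have hcd : ⁅c, d⁆ = 0 := lie_eq_zero_of_mem_lcsTerm h₄ hc hd le_rfl
  refine isNilsoliton_of_realizes_five (β := β) (x := ![a, b, c, d, e])
    (.of_lcsTerm_le hn.symm (fun S hS => ?_) ?_)
  · exact g₀.le (Set.pair_subset (hS 0) (hS 1)) <| g₁.le (Set.singleton_subset_iff.2 (hS 2)) <|
      g₂.le (Set.singleton_subset_iff.2 (hS 3)) <|
      g₃.le (Set.singleton_subset_iff.2 (hS 4)) (h₄ ▸ bot_le)
  · simp only [forall_lt_fin_succ]
    simp [Fin.forall_fin_succ, bracket, Fin.sum_univ_succ, *]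

variable [LieRing.IsNilpotent L]

theorem isNilsoliton_of_finrank_four_lcsRank_two (hn : finrank ℝ L = 4) (h₁ : lcsRank L 1 = 2) :
    IsNilsoliton L := by
  obtain ⟨x, y, hxy⟩ := exists_generatesLayer_zero_pair (L := L) (by omega)
  have : lcsRank L 1 ≤ lcsRank L 2 + 1 := hxy.lie_pair.lcsRank_le_succ
  have : lcsRank L 2 < lcsRank L 1 := lcsRank_succ_lt (by omega)
  have : lcsRank L 3 < lcsRank L 2 := lcsRank_succ_lt (by omega)
  obtain ⟨a, b, g₀, hbab⟩ := exists_generatesLayer_zero_pair_lie_lie_mem (L := L) (by omega)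
    (by omega)
  have h₃ : lcsTerm L 3 = ⊥ := lcsTerm_eq_bot (by omega)
  have g₁ := g₀.lie_pair
  have g₂ := (g₀.lie_pair_singleton g₁).of_pair_of_mem hbab
  generalize hab : ⁅a, b⁆ = c at *
  generalize hac : ⁅a, c⁆ = d at *
  have hc := g₁.subset rfl
  have hd := g₂.subset rfl
  have hbc : ⁅b, c⁆ = 0 := by rwa [h₃] at hbab
  have had : ⁅a, d⁆ = 0 := lie_eq_zero_of_mem_lcsTerm h₃ (mem_lcsTerm_zero a) hd (by decide)
  have hbd : ⁅b, d⁆ = 0 := lie_eq_zero_of_mem_lcsTerm h₃ (mem_lcsTerm_zero b) hd (by decide)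
  have hcd : ⁅c, d⁆ = 0 := lie_eq_zero_of_mem_lcsTerm h₃ hc hd (by decide)
  refine isNilsoliton_of_L4_3 (c := ![1, 1]) (by simp [Fin.forall_fin_succ]) (x := ![a, b, c, d])
    (.of_lcsTerm_le hn.symm (fun S hS => ?_) ?_)
  · exact g₀.le (Set.pair_subset (hS 0) (hS 1)) <| g₁.le (Set.singleton_subset_iff.2 (hS 2)) <|
      g₂.le (Set.singleton_subset_iff.2 (hS 3)) (h₃ ▸ bot_le)
  · simp only [forall_lt_fin_succ]
    simp [Fin.forall_fin_succ, bracket, Fin.sum_univ_succ, *]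

theorem isNilsoliton_of_finrank_five_lcsRank_three (hn : finrank ℝ L = 5) (h₁ : lcsRank L 1 = 3) :
    IsNilsoliton L := by
  obtain ⟨x, y, hxy⟩ := exists_generatesLayer_zero_pair (L := L) (by omega)
  have : lcsRank L 1 ≤ lcsRank L 2 + 1 := hxy.lie_pair.lcsRank_le_succ
  have : lcsRank L 2 < lcsRank L 1 := lcsRank_succ_lt (by omega)
  have : lcsRank L 3 < lcsRank L 2 := lcsRank_succ_lt (by omega)
  by_cases h₃ : lcsRank L 3 = 0
  · exact isNilsoliton_of_five_of_lcsTerm_three hn hxy (lcsTerm_eq_bot h₃)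
  · have : lcsRank L 4 < lcsRank L 3 := lcsRank_succ_lt (by omega)
    exact isNilsoliton_of_five_of_lcsTerm_four hn (by omega) (by omega) (lcsTerm_eq_bot (by omega))

end TwoGenerators

section TwoGeneratorsSix

open Module BracketTable

variable {L : Type*} [LieRing L] [LieAlgebra ℝ L] {a b c : ℝ} {x : Fin 6 → L}

/-- The shape of the algebras of dimension 6 with two generators `x 0`, `x 1` and lower central
series of dimensions `6, 4, 3, 1`. -/
abbrev table6431 : BracketTable (Fin 6) (Fin 7) :=
  ![(0, 1, 2), (0, 2, 3), (1, 2, 4), (0, 3, 5), (0, 4, 5), (1, 3, 5), (1, 4, 5)]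

lemma isNilsoliton_of_realizes_table6431_of_left_ne_zero (ha : a ≠ 0)
    (h : Realizes table6431 ![1, 1, 1, a, b, b, c] x) : IsNilsoliton L := by
  obtain ⟨t, rfl⟩ : ∃ t, b = t * a := ⟨b / a, (div_mul_cancel₀ b ha).symm⟩
  have h' : Realizes ![(0, 1, 2), (0, 2, 3), (1, 2, 4), (0, 3, 5), (1, 4, 5)]
      ![1, 1, 1, a, c - t * (t * a)] ![x 0, x 1 - t • x 0, x 2, x 3, x 4 - t • x 3, x 5] := by
    refine h.changeBasis rfl ?_ ?_
    · simp only [Fin.forall_fin_succ]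
      rintro S ⟨h₀, h₁, h₂, h₃, h₄, h₅, -⟩
      exact ⟨h₀, (S.sub_mem_iff_left (S.smul_mem t h₀)).1 h₁, h₂, h₃,
        (S.sub_mem_iff_left (S.smul_mem t h₃)).1 h₄, h₅, fun i => i.elim0⟩
    · simp only [forall_lt_fin_succ]
      simp only [Fin.forall_fin_succ]
      and_intros <;> simp [h.lie, bracket, Fin.sum_univ_succ, smul_smul]
      module
  by_cases hc : c - t * (t * a) = 0
  · exact isNilsoliton_of_L6_28 (c := ![1, 1, 1, a]) (by simp [Fin.forall_fin_succ, ha])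
      (h'.congr fun y => by simp [Fin.forall_fin_succ, bracket, Fin.sum_univ_succ, hc])
  · exact isNilsoliton_of_L6_21 (by simp [Fin.forall_fin_succ, ha, hc]) h'

lemma isNilsoliton_of_realizes_table6431 (h₀ : a ≠ 0 ∨ b ≠ 0 ∨ c ≠ 0)
    (h : Realizes table6431 ![1, 1, 1, a, b, b, c] x) : IsNilsoliton L := by
  by_cases ha : a = 0
  · by_cases hc : c = 0
    · have hb : b ≠ 0 := by simpa [ha, hc] using h₀
      refine isNilsoliton_of_realizes_table6431_of_left_ne_zero (a := 2 * b) (b := b) (c := 0)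
        (by simpa) (x := ![x 0 + x 1, x 1, x 2, x 3 + x 4, x 4, x 5]) (h.changeBasis rfl ?_ ?_)
      · simp only [Fin.forall_fin_succ]
        rintro S ⟨h₀, h₁, h₂, h₃, h₄, h₅, -⟩
        exact ⟨(S.add_mem_iff_left h₁).1 h₀, h₁, h₂, (S.add_mem_iff_left h₄).1 h₃, h₄, h₅,
          fun i => i.elim0⟩
      · simp only [forall_lt_fin_succ]
        simp only [Fin.forall_fin_succ]
        and_intros <;> simp [h.lie, bracket, Fin.sum_univ_succ, ha, hc]
        module
    · refine isNilsoliton_of_realizes_table6431_of_left_ne_zero (a := -c) (b := -b) (c := -a)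
        (by simpa) (x := ![x 1, x 0, -x 2, -x 4, -x 3, x 5]) (h.changeBasis rfl ?_ ?_)
      · simp only [Fin.forall_fin_succ]
        rintro S ⟨h₀, h₁, h₂, h₃, h₄, h₅, -⟩
        exact ⟨h₁, h₀, neg_mem_iff.1 h₂, neg_mem_iff.1 h₄, neg_mem_iff.1 h₃, h₅,
          fun i => i.elim0⟩
      · simp only [forall_lt_fin_succ]
        simp only [Fin.forall_fin_succ]
        and_intros <;> simp [h.lie, bracket, Fin.sum_univ_succ]
  · exact isNilsoliton_of_realizes_table6431_of_left_ne_zero ha h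

lemma isNilsoliton_of_six_of_lcsTerm_four (hn : finrank ℝ L = 6) {u v : L}
    (g₀ : GeneratesLayer 0 {u, v}) (h₃ : lcsRank L 3 = 1) (h₄ : lcsTerm L 4 = ⊥) :
    IsNilsoliton L := by
  obtain ⟨z, hz₀, hz⟩ := exists_lcsTerm_eq_span_singleton h₃
  have g₁ := g₀.lie_pair
  have g₂ := g₀.lie_pair_singleton g₁
  have hswap : ⁅u, ⁅v, ⁅u, v⁆⁆⁆ = ⁅v, ⁅u, ⁅u, v⁆⁆⁆ := (lie_lie_lie_left_comm u v).symm
  generalize huv : ⁅u, v⁆ = w at *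
  generalize huw : ⁅u, w⁆ = p at *
  generalize hvw : ⁅v, w⁆ = q at *
  have hw := g₁.subset rfl
  have hp := g₂.subset (.inl rfl)
  have hq := g₂.subset (.inr rfl)
  have exists_smul (x : L) {y : L} (hy : y ∈ lcsTerm L 2) : ∃ r : ℝ, r • z = ⁅x, y⁆ :=
    Submodule.mem_span_singleton.1 (hz ▸ lie_mem_lcsTerm_succ x hy)
  obtain ⟨a, hup⟩ := exists_smul u hp
  obtain ⟨b, huq⟩ := exists_smul u hq
  obtain ⟨c, hvq⟩ := exists_smul v hq
  have hvp := huq.trans hswap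
  have lie_z (x : L) : ⁅x, z⁆ = 0 := lie_eq_zero_of_mem_lcsTerm h₄ (mem_lcsTerm_zero x)
    (hz ▸ Submodule.mem_span_singleton_self z) le_rfl
  have hwp : ⁅w, p⁆ = 0 := lie_eq_zero_of_mem_lcsTerm h₄ hw hp le_rfl
  have hwq : ⁅w, q⁆ = 0 := lie_eq_zero_of_mem_lcsTerm h₄ hw hq le_rfl
  have hpq : ⁅p, q⁆ = 0 := lie_eq_zero_of_mem_lcsTerm h₄ hp hq (by decide)
  refine isNilsoliton_of_realizes_table6431 (a := a) (b := b) (c := c) (x := ![u, v, w, p, q, z])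
    ?_ (.of_lcsTerm_le hn.symm (fun S hS => ?_) ?_)
  · by_contra! h₀
    have h₃_le : lcsTerm L 3 ≤ ⊥ := (g₀.lie g₂).le (by simp [← hup, ← huq, ← hvp, ← hvq, h₀]) h₄.le
    exact hz₀ (by simpa [hz] using h₃_le)
  · exact g₀.le (Set.pair_subset (hS 0) (hS 1)) <| g₁.le (Set.singleton_subset_iff.2 (hS 2)) <|
      g₂.le (Set.pair_subset (hS 3) (hS 4)) <| by
      simpa [hz] using hS 5
  · simp only [forall_lt_fin_succ]
    simp [Fin.forall_fin_succ, bracket, Fin.sum_univ_succ, *]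

end TwoGeneratorsSix

section TwoGeneratorsSixLong

open Module BracketTable

variable {L : Type*} [LieRing L] [LieAlgebra ℝ L] {a b β γ : ℝ} {x : Fin 6 → L}

/-- The shape of the algebras of dimension 6 with two generators `x 0`, `x 1` and lower central
series of dimensions `6, 4, 3, 2, 1`. -/
abbrev table64321 : BracketTable (Fin 6) (Fin 9) :=
  ![(0, 1, 2), (0, 2, 3), (0, 3, 4), (1, 2, 4), (1, 2, 5), (0, 4, 5), (1, 3, 5), (1, 4, 5),
    (2, 3, 5)]

lemma isNilsoliton_of_realizes_table64321_of_apply_five_eq_zero (hb : b ≠ 0)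
    (h : Realizes table64321 ![1, 1, 1, β, γ, 0, 0, b, -b] x) : IsNilsoliton L := by
  obtain ⟨t, rfl⟩ : ∃ t, γ = -(2 * (t * b)) := ⟨-γ / (2 * b), by field_simp⟩
  have h' : Realizes ![(0, 1, 2), (0, 2, 3), (0, 3, 4), (1, 2, 4), (1, 4, 5), (2, 3, 5)]
      ![1, 1, 1, β, b, -b] ![x 0, x 1 + t • x 3, x 2 + t • x 4, x 3, x 4, x 5] := by
    refine h.changeBasis rfl ?_ ?_
    · simp only [Fin.forall_fin_succ]
      rintro S ⟨h₀, h₁, h₂, h₃, h₄, h₅, -⟩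
      exact ⟨h₀, (S.add_mem_iff_left (S.smul_mem t h₃)).1 h₁,
        (S.add_mem_iff_left (S.smul_mem t h₄)).1 h₂, h₃, h₄, h₅, fun i => i.elim0⟩
    · simp only [forall_lt_fin_succ]
      simp only [Fin.forall_fin_succ]
      and_intros <;> simp [h.lie, bracket, Fin.sum_univ_succ, smul_smul]
      module
  by_cases hβ : β = 0
  · exact isNilsoliton_of_L6_16 (c := ![1, 1, 1, b, -b]) (by simp [Fin.forall_fin_succ, hb])
      (by simp) (h'.congr fun y => by simp [Fin.forall_fin_succ, bracket, Fin.sum_univ_succ, hβ])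
  · exact isNilsoliton_of_L6_14 (by simp [Fin.forall_fin_succ, hb, hβ]) (by simp) h'

lemma isNilsoliton_of_realizes_table64321_of_apply_seven_ne_zero (hb : b ≠ 0)
    (h : Realizes table64321 ![1, 1, 1, β, γ, a, β * a, b, -b] x) : IsNilsoliton L := by
  obtain ⟨t, rfl⟩ : ∃ t, a = -(t * b) := ⟨-a / b, by field_simp⟩
  refine isNilsoliton_of_realizes_table64321_of_apply_five_eq_zero hb
    (β := β) (γ := γ + t * t * (β * β) * b)
    (x := ![x 0 + t • x 1, x 1, x 2, x 3 + t • (β • x 4 + γ • x 5), x 4 - (t * t * β * b) • x 5,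
      x 5]) (h.changeBasis rfl ?_ ?_)
  · simp only [Fin.forall_fin_succ]
    rintro S ⟨h₀, h₁, h₂, h₃, h₄, h₅, -⟩
    have h₄' := (S.sub_mem_iff_left (S.smul_mem (t * t * β * b) h₅)).1 h₄
    exact ⟨(S.add_mem_iff_left (S.smul_mem t h₁)).1 h₀, h₁, h₂,
      (S.add_mem_iff_left (S.smul_mem t (add_mem (S.smul_mem β h₄') (S.smul_mem γ h₅)))).1 h₃,
      h₄', h₅, fun i => i.elim0⟩
  · simp only [forall_lt_fin_succ]
    simp only [Fin.forall_fin_succ]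
    and_intros <;> simp [h.lie, bracket, Fin.sum_univ_succ, smul_smul]
    all_goals module

lemma isNilsoliton_of_realizes_table64321_of_apply_three_ne_zero (ha : a ≠ 0) (hβ : β ≠ 0)
    (h : Realizes table64321 ![1, 1, 1, β, γ, a, β * a, 0, 0] x) : IsNilsoliton L := by
  obtain ⟨t, rfl⟩ : ∃ t, γ = 2 * t * (β * β * a) := ⟨γ / (2 * (β * β * a)), by field_simp⟩
  refine isNilsoliton_of_L6_15 (c := ![1, 1, 1, β, a, β * a])
    (by simp [Fin.forall_fin_succ, ha, hβ]) (by simp)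
    (x := ![x 0 + t • x 1, x 1, x 2, x 3 + t • (β • x 4 + (2 * t * (β * β * a)) • x 5),
      x 4 + (2 * t * β * a) • x 5, x 5]) (h.changeBasis rfl ?_ ?_)
  · simp only [Fin.forall_fin_succ]
    rintro S ⟨h₀, h₁, h₂, h₃, h₄, h₅, -⟩
    have h₄' := (S.add_mem_iff_left (S.smul_mem (2 * t * β * a) h₅)).1 h₄
    exact ⟨(S.add_mem_iff_left (S.smul_mem t h₁)).1 h₀, h₁, h₂,
      (S.add_mem_iff_left (S.smul_mem t (add_mem (S.smul_mem β h₄') (S.smul_mem _ h₅)))).1 h₃,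
      h₄', h₅, fun i => i.elim0⟩
  · simp only [forall_lt_fin_succ]
    simp only [Fin.forall_fin_succ]
    and_intros <;> simp [h.lie, bracket, Fin.sum_univ_succ, smul_smul]
    all_goals module

lemma isNilsoliton_of_realizes_table64321_of_apply_seven_eq_zero (ha : a ≠ 0)
    (h : Realizes table64321 ![1, 1, 1, β, γ, a, β * a, 0, 0] x) : IsNilsoliton L := by
  by_cases hβ : β = 0
  · by_cases hγ : γ = 0
    · exact isNilsoliton_of_L6_18 (c := ![1, 1, 1, a]) (by simp [Fin.forall_fin_succ, ha])
        (h.congr fun y => by simp [Fin.forall_fin_succ, bracket, Fin.sum_univ_succ, hβ, hγ])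
    · exact isNilsoliton_of_L6_17 (c := ![1, 1, 1, a, γ])
        (by simp [Fin.forall_fin_succ, ha, hγ])
        (h.congr fun y => by simp [Fin.forall_fin_succ, bracket, Fin.sum_univ_succ, hβ])
  · exact isNilsoliton_of_realizes_table64321_of_apply_three_ne_zero ha hβ h

lemma isNilsoliton_of_realizes_table64321 (h₀ : a ≠ 0 ∨ b ≠ 0)
    (h : Realizes table64321 ![1, 1, 1, β, γ, a, β * a, b, -b] x) : IsNilsoliton L := by
  by_cases hb : b = 0
  · subst hb
    exact isNilsoliton_of_realizes_table64321_of_apply_seven_eq_zero (by simpa using h₀)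
      (by simpa using h)
  · exact isNilsoliton_of_realizes_table64321_of_apply_seven_ne_zero hb h

lemma isNilsoliton_of_six_of_lcsTerm_five (hn : finrank ℝ L = 6) {u v : L}
    (g₀ : GeneratesLayer 0 {u, v}) (g₂ : GeneratesLayer 2 {⁅u, ⁅u, v⁆⁆})
    (g₃ : GeneratesLayer 3 {⁅u, ⁅u, ⁅u, v⁆⁆⁆}) (hvw : ⁅v, ⁅u, v⁆⁆ ∈ lcsTerm L 3)
    (h₄ : lcsRank L 4 = 1) (h₅ : lcsTerm L 5 = ⊥) : IsNilsoliton L := by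
  obtain ⟨z, hz₀, hz⟩ := exists_lcsTerm_eq_span_singleton h₄
  have g₁ := g₀.lie_pair
  have hvp := lie_lie_lie_left_comm u v
  have hwp : ⁅⁅u, v⁆, ⁅u, ⁅u, v⁆⁆⁆ = -⁅v, ⁅u, ⁅u, ⁅u, v⁆⁆⁆⁆ := by
    rw [lie_lie, hvp, lie_eq_zero_of_mem_lcsTerm h₅ (mem_lcsTerm_zero u)
      (lie_mem_lcsTerm_succ u hvw) le_rfl, zero_sub]
  generalize huv : ⁅u, v⁆ = w at *
  generalize huw : ⁅u, w⁆ = p at *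
  generalize hup : ⁅u, p⁆ = q at *
  have hw := g₁.subset rfl
  have hp := g₂.subset rfl
  have hq := g₃.subset rfl
  obtain ⟨a, huq⟩ := Submodule.mem_span_singleton.1 (hz ▸ lie_mem_lcsTerm_succ u hq)
  obtain ⟨b, hvq⟩ := Submodule.mem_span_singleton.1 (hz ▸ lie_mem_lcsTerm_succ v hq)
  obtain ⟨β, γ, hβγ⟩ := Submodule.mem_span_pair.1 <| g₃.le (S := Submodule.span ℝ {q, z})
    (by simp [Submodule.mem_span_of_mem]) (hz.trans_le (Submodule.span_mono (by simp))) hvw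
  have lie_z (x : L) : ⁅x, z⁆ = 0 := lie_eq_zero_of_mem_lcsTerm h₅ (mem_lcsTerm_zero x)
    (hz ▸ Submodule.mem_span_singleton_self z) le_rfl
  replace hvp : ⁅v, p⁆ = (β * a) • z := by
    rw [hvp, ← hβγ, lie_add, lie_smul, lie_smul, lie_z, smul_zero, add_zero, ← huq, smul_smul]
  have hwq : ⁅w, q⁆ = 0 := lie_eq_zero_of_mem_lcsTerm h₅ hw hq le_rfl
  have hpq : ⁅p, q⁆ = 0 := lie_eq_zero_of_mem_lcsTerm h₅ hp hq (by decide)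
  refine isNilsoliton_of_realizes_table64321 (a := a) (b := b) (β := β) (γ := γ)
    (x := ![u, v, w, p, q, z]) ?_ (.of_lcsTerm_le hn.symm (fun S hS => ?_) ?_)
  · by_contra! h₀
    have h₄_le : lcsTerm L 4 ≤ ⊥ :=
      (g₀.lie_pair_singleton g₃).le (by simp [← huq, ← hvq, h₀]) h₅.le
    exact hz₀ (by simpa [hz] using h₄_le)
  · exact g₀.le (Set.pair_subset (hS 0) (hS 1)) <| g₁.le (Set.singleton_subset_iff.2 (hS 2)) <|
      g₂.le (Set.singleton_subset_iff.2 (hS 3)) <|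
      g₃.le (Set.singleton_subset_iff.2 (hS 4)) <| by
      simpa [hz] using hS 5
  · simp only [forall_lt_fin_succ]
    simp [Fin.forall_fin_succ, bracket, Fin.sum_univ_succ, *]

variable [Module.Finite ℝ L]

lemma exists_generatesLayer_three_singleton (h : lcsRank L 1 + 2 = finrank ℝ L)
    (h₂₃ : lcsRank L 2 < lcsRank L 3 + 2) :
    ∃ u v : L, GeneratesLayer 0 {u, v} ∧ GeneratesLayer 2 {⁅u, ⁅u, v⁆⁆} ∧
      GeneratesLayer 3 {⁅u, ⁅u, ⁅u, v⁆⁆⁆} ∧ ⁅v, ⁅u, v⁆⁆ ∈ lcsTerm L 3 := by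
  obtain ⟨u, v, g₀, hv⟩ := exists_generatesLayer_zero_pair_lie_lie_mem h h₂₃
  have g₂ := (g₀.lie_pair_singleton g₀.lie_pair).of_pair_of_mem hv
  have hmem := lie_lie_lie_left_comm u v ▸ lie_mem_lcsTerm_succ u hv
  exact ⟨u, v, g₀, g₂, (g₀.lie_pair_singleton g₂).of_pair_of_mem hmem, hv⟩

variable [LieRing.IsNilpotent L]

theorem isNilsoliton_of_finrank_six_lcsRank_four (hn : finrank ℝ L = 6) (h₁ : lcsRank L 1 = 4) :
    IsNilsoliton L := by
  obtain ⟨x, y, hxy⟩ := exists_generatesLayer_zero_pair (L := L) (by omega)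
  have : lcsRank L 1 ≤ lcsRank L 2 + 1 := hxy.lie_pair.lcsRank_le_succ
  have : lcsRank L 2 < lcsRank L 1 := lcsRank_succ_lt (by omega)
  have : lcsRank L 2 ≤ lcsRank L 3 + 2 := (hxy.lie_pair_singleton hxy.lie_pair).lcsRank_le_add_two
  have : lcsRank L 3 < lcsRank L 2 := lcsRank_succ_lt (by omega)
  have : lcsRank L 4 < lcsRank L 3 := lcsRank_succ_lt (by omega)
  by_cases h₃ : lcsRank L 3 = 1
  · exact isNilsoliton_of_six_of_lcsTerm_four hn hxy h₃ (lcsTerm_eq_bot (by omega))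
  · obtain ⟨u, v, g₀, g₂, g₃, hv⟩ :=
      exists_generatesLayer_three_singleton (L := L) (by omega) (by omega)
    have : lcsRank L 3 ≤ lcsRank L 4 + 1 := g₃.lcsRank_le_succ
    have : lcsRank L 5 < lcsRank L 4 := lcsRank_succ_lt (by omega)
    exact isNilsoliton_of_six_of_lcsTerm_five hn g₀ g₂ g₃ hv (by omega) (lcsTerm_eq_bot (by omega))

end TwoGeneratorsSixLong

section ThreeGenerators

open Module BracketTable

lemma lie_lie_eq_sub {L : Type*} [LieRing L] (x y z : L) :
    ⁅z, ⁅x, y⁆⁆ = ⁅y, ⁅x, z⁆⁆ - ⁅x, ⁅y, z⁆⁆ := by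
  rw [← lie_skew z, lie_lie, neg_sub]

variable {L : Type*} [LieRing L] [LieAlgebra ℝ L] {k : ℕ} {a b c w : L}

lemma GeneratesLayer.lie_triple (h : GeneratesLayer 0 {a, b, c}) :
    GeneratesLayer 1 {⁅b, c⁆, ⁅a, b⁆, ⁅a, c⁆} := by
  refine (h.lie h).of_subset ?_ fun S hS _ => ?_
  · rintro _ (rfl | rfl | rfl) <;> exact lie_mem_lcsTerm_one _ _
  · simp only [Set.insert_subset_iff, Set.singleton_subset_iff, SetLike.mem_coe] at hS
    obtain ⟨hbc, hab, hac⟩ := hS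
    have lie_comm_mem {x y : L} (hxy : ⁅x, y⁆ ∈ S) : ⁅y, x⁆ ∈ S := by
      rw [← lie_skew]
      exact neg_mem hxy
    simp [Set.insert_subset_iff, *]

lemma GeneratesLayer.lie_triple_singleton (h : GeneratesLayer 0 {a, b, c})
    (hw : GeneratesLayer k {w}) : GeneratesLayer (k + 1) {⁅a, w⁆, ⁅b, w⁆, ⁅c, w⁆} := by
  simpa [Set.image_insert_eq, Set.image_pair] using h.lie hw

lemma GeneratesLayer.sub_insert {W : Set L} {d : L} (h : GeneratesLayer k (insert w W))
    (hd : d ∈ lcsTerm L (k + 1)) : GeneratesLayer k (insert (w - d) W) := by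
  have hW := Set.insert_subset_iff.1 h.subset
  refine h.of_subset (Set.insert_subset (sub_mem hW.1 (lcsTerm_antitone k.le_succ hd)) hW.2)
    fun S hS hk => ?_
  rw [Set.insert_subset_iff, SetLike.mem_coe, S.sub_mem_iff_left (hk hd)] at hS
  exact Set.insert_subset hS.1 hS.2

lemma GeneratesLayer.lie_of_lie_mem (h : GeneratesLayer 0 {w, a, b}) (ha : ⁅a, w⁆ ∈ lcsTerm L 2)
    (hb : ⁅b, w⁆ ∈ lcsTerm L 2) : GeneratesLayer 1 {⁅a, b⁆} := by
  rw [← lie_skew, Submodule.neg_mem_iff] at ha hb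
  exact ((Set.insert_comm _ _ _ ▸ h.lie_triple).of_insert_of_mem ha).of_pair_of_mem hb

lemma GeneratesLayer.eq_top_of_subset {W : Set L} {m : ℕ} (h : GeneratesLayer 0 W)
    (hm : lcsTerm L m = ⊥) {S : Submodule ℝ L} (hW : W ⊆ S)
    (hS : ∀ x ∈ S, ∀ y ∈ S, ⁅x, y⁆ ∈ S) : S = ⊤ := by
  have exists_subset (k : ℕ) : ∃ V ⊆ (S : Set L), GeneratesLayer k V := by
    induction k with
    | zero => exact ⟨W, hW, h⟩
    | succ k ih =>
      obtain ⟨V, hV, hk⟩ := ih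
      exact ⟨_, Set.image2_subset_iff.2 fun x hx y hy => hS x (hW hx) y (hV hy), h.lie hk⟩
  have le_S : lcsTerm L 0 ≤ S := by
    refine Nat.decreasingInduction (motive := fun k _ => lcsTerm L k ≤ S)
      (fun k _ ih => ?_) (hm.trans_le bot_le) (Nat.zero_le m)
    obtain ⟨V, hV, hk⟩ := exists_subset k
    exact hk.le hV ih
  exact eq_top_iff.2 fun x _ => le_S (mem_lcsTerm_zero x)

lemma GeneratesLayer.mem_center {W : Set L} {m : ℕ} (h : GeneratesLayer 0 W)
    (hm : lcsTerm L m = ⊥) (hw : ∀ x ∈ W, ⁅x, w⁆ = 0) : w ∈ LieAlgebra.center ℝ L := by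
  have ker_eq_top := h.eq_top_of_subset hm
    (S := ((LieModule.toEnd ℝ L L : L →ₗ[ℝ] Module.End ℝ L).flip w).ker) hw fun x hx y hy => by
      simp_all
  exact (LieModule.mem_maxTrivSubmodule ℝ L L w).2 fun x => Submodule.eq_top_iff'.1 ker_eq_top x

lemma lie_lie_mem_lcsTerm (ha : ⁅a, w⁆ ∈ lcsTerm L k) (hb : ⁅b, w⁆ ∈ lcsTerm L k) :
    ⁅w, ⁅a, b⁆⁆ ∈ lcsTerm L (k + 1) := by
  rw [lie_lie_eq_sub]
  exact sub_mem (lie_mem_lcsTerm_succ b ha) (lie_mem_lcsTerm_succ a hb)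

lemma GeneratesLayer.lie_lie_of_lie_mem (h : GeneratesLayer 0 {w, a, b})
    (ha : ⁅a, w⁆ ∈ lcsTerm L 2) (hb : ⁅b, w⁆ ∈ lcsTerm L 2) :
    GeneratesLayer 2 {⁅a, ⁅a, b⁆⁆, ⁅b, ⁅a, b⁆⁆} :=
  (h.lie_triple_singleton (h.lie_of_lie_mem ha hb)).of_insert_of_mem
    (lie_lie_mem_lcsTerm ha hb)

lemma exists_span_triple_eq_lie_mem {S : Submodule ℝ L} {r : Fin 3 → ℝ} (hr : r 0 ≠ 0)
    (h : r 0 • ⁅b, c⁆ + r 1 • ⁅c, a⁆ + r 2 • ⁅a, b⁆ ∈ S) :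
    ∃ a' b' c' : L, Submodule.span ℝ {a', b', c'} = Submodule.span ℝ {a, b, c} ∧ ⁅b', c'⁆ ∈ S := by
  refine ⟨a, r 0 • b - r 1 • a, r 0 • c - r 2 • a, eq_of_forall_ge_iff fun T => ?_, ?_⟩
  · simp only [Submodule.span_le, Set.insert_subset_iff, Set.singleton_subset_iff, SetLike.mem_coe]
    exact and_congr_right fun ha => by
      simp only [T.sub_mem_iff_left (T.smul_mem _ ha), T.smul_mem_iff hr]
  · convert S.smul_mem (r 0) h using 1
    simp only [sub_lie, lie_sub, smul_lie, lie_smul, lie_self, ← lie_skew c a, ← lie_skew b a]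
    module

variable [Module.Finite ℝ L]

lemma exists_generatesLayer_zero_triple_lie_mem (h : lcsRank L 1 + 3 = finrank ℝ L)
    (h₁₂ : lcsRank L 1 < lcsRank L 2 + 3) :
    ∃ a b c : L, GeneratesLayer 0 {a, b, c} ∧ ⁅b, c⁆ ∈ lcsTerm L 2 := by
  obtain ⟨x, hx⟩ := exists_generatesLayer_zero h
  obtain ⟨r, hr, hmem⟩ := exists_sum_smul_mem_of_finrank_lt (lcsTerm_antitone (Nat.le_succ 1))
    ![⁅x 1, x 2⁆, ⁅x 2, x 0⁆, ⁅x 0, x 1⁆]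
    (fun i => by fin_cases i <;> exact lie_mem_lcsTerm_one _ _) h₁₂
  obtain ⟨i, hi⟩ := hr
  have hsum : r i • ⁅x (i + 1), x (i + 2)⁆ + r (i + 1) • ⁅x (i + 2), x i⁆ +
      r (i + 2) • ⁅x i, x (i + 1)⁆ ∈ lcsTerm L 2 := by
    convert hmem using 1
    fin_cases i <;> simp [Fin.sum_univ_succ] <;> abel
  have range_eq : Set.range x = {x i, x (i + 1), x (i + 2)} := by
    ext
    fin_cases i <;> simp [Fin.exists_fin_succ, eq_comm] <;> tauto
  obtain ⟨a, b, c, hspan, hbc⟩ := exists_span_triple_eq_lie_mem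
    (r := ![r i, r (i + 1), r (i + 2)]) (by simpa using hi) hsum
  exact ⟨a, b, c, (range_eq ▸ hx).congr_span hspan, hbc⟩

lemma exists_generatesLayer_zero_triple_lie_mem_lie_mem (h : lcsRank L 1 + 3 = finrank ℝ L)
    (h₁₂ : lcsRank L 1 < lcsRank L 2 + 2) :
    ∃ y a b : L, GeneratesLayer 0 {y, a, b} ∧ ⁅a, y⁆ ∈ lcsTerm L 2 ∧ ⁅b, y⁆ ∈ lcsTerm L 2 := by
  obtain ⟨a, b, c, g₀, hbc⟩ := exists_generatesLayer_zero_triple_lie_mem h (by omega)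
  obtain ⟨r, hr, hmem⟩ := exists_sum_smul_mem_of_finrank_lt (lcsTerm_antitone (Nat.le_succ 1))
    ![⁅a, b⁆, ⁅a, c⁆] (fun i => by fin_cases i <;> exact lie_mem_lcsTerm_one _ _) h₁₂
  have ha : ⁅a, r 0 • b + r 1 • c⁆ ∈ lcsTerm L 2 := by simpa using hmem
  have hb : ⁅b, r 0 • b + r 1 • c⁆ ∈ lcsTerm L 2 := by
    rw [lie_add, lie_smul, lie_smul, lie_self, smul_zero, zero_add]
    exact Submodule.smul_mem _ _ hbc
  have hc : ⁅c, r 0 • b + r 1 • c⁆ ∈ lcsTerm L 2 := by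
    rw [lie_add, lie_smul, lie_smul, lie_self, smul_zero, add_zero, ← lie_skew, smul_neg]
    exact neg_mem (Submodule.smul_mem _ _ hbc)
  by_cases hr₁ : r 1 = 0
  · have hr₀ : r 0 ≠ 0 := (Fin.exists_fin_two.1 hr).resolve_right (not_not.2 hr₁)
    refine ⟨r 0 • b + r 1 • c, a, c, g₀.congr_span (eq_of_forall_ge_iff fun S => ?_), ha, hc⟩
    simp only [Submodule.span_le, Set.insert_subset_iff, Set.singleton_subset_iff, SetLike.mem_coe,
      hr₁, zero_smul, add_zero, S.smul_mem_iff hr₀]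
    exact and_left_comm
  · refine ⟨r 0 • b + r 1 • c, a, b, g₀.congr_span (eq_of_forall_ge_iff fun S => ?_), ha, hb⟩
    simp only [Submodule.span_le, Set.insert_subset_iff, Set.singleton_subset_iff, SetLike.mem_coe]
    rw [and_rotate]
    refine and_congr_right fun _ => and_congr_right fun hb => ?_
    rw [S.add_mem_iff_right (S.smul_mem _ hb), S.smul_mem_iff hr₁]

lemma exists_generatesLayer_zero_triple_lie_lie_mem (h : lcsRank L 1 + 3 = finrank ℝ L)
    (h₁₂ : lcsRank L 1 < lcsRank L 2 + 2) (h₂₃ : lcsRank L 2 < lcsRank L 3 + 2) :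
    ∃ y a b : L, GeneratesLayer 0 {y, a, b} ∧ ⁅a, y⁆ ∈ lcsTerm L 2 ∧ ⁅b, y⁆ ∈ lcsTerm L 2 ∧
      ⁅b, ⁅a, b⁆⁆ ∈ lcsTerm L 3 := by
  obtain ⟨y, a, b, g₀, ha, hb⟩ := exists_generatesLayer_zero_triple_lie_mem_lie_mem h h₁₂
  obtain ⟨a', b', hspan, hmem⟩ := exists_span_pair_eq_lie_lie_mem a b h₂₃
  have lie_y_mem : Submodule.span ℝ {a', b'} ≤
      (lcsTerm L 2).comap ((LieModule.toEnd ℝ L L : L →ₗ[ℝ] Module.End ℝ L).flip y) := by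
    rw [hspan, Submodule.span_le]
    exact Set.pair_subset ha hb
  refine ⟨y, a', b', g₀.congr_span ?_, lie_y_mem (Submodule.subset_span (.inl rfl)),
    lie_y_mem (Submodule.subset_span (.inr rfl)), hmem⟩
  rw [Submodule.span_insert, hspan, ← Submodule.span_insert]

lemma exists_generatesLayer_zero_triple_lie_eq_zero (h : lcsRank L 1 + 3 = finrank ℝ L)
    (h₁₂ : lcsRank L 1 < lcsRank L 2 + 2) (h₂₃ : lcsRank L 2 < lcsRank L 3 + 2)
    (h₄ : lcsTerm L 4 = ⊥) :
    ∃ w a b : L, GeneratesLayer 0 {w, a, b} ∧ ⁅a, w⁆ = 0 ∧ ⁅b, w⁆ ∈ lcsTerm L 2 ∧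
      ⁅b, ⁅a, b⁆⁆ ∈ lcsTerm L 3 ∧ GeneratesLayer 3 {⁅a, ⁅a, ⁅a, b⁆⁆⁆} := by
  obtain ⟨y, a, b, g₀, hay, hby, hb⟩ := exists_generatesLayer_zero_triple_lie_lie_mem h h₁₂ h₂₃
  have g₂ := (g₀.lie_lie_of_lie_mem hay hby).of_pair_of_mem hb
  have lie_eq_zero {x u : L} (hu : u ∈ lcsTerm L 3) : ⁅x, u⁆ = 0 :=
    lie_eq_zero_of_mem_lcsTerm h₄ (mem_lcsTerm_zero x) hu le_rfl
  have hyab : ⁅y, ⁅a, ⁅a, b⁆⁆⁆ = 0 := by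
    rw [lie_lie_eq_sub, ← lie_skew ⁅a, b⁆ y, lie_neg, lie_eq_zero (lie_lie_mem_lcsTerm hay hby),
      lie_eq_zero_of_mem_lcsTerm h₄ (lie_mem_lcsTerm_one a b) hay le_rfl, neg_zero, sub_zero]
  have hbab : ⁅b, ⁅a, ⁅a, b⁆⁆⁆ = 0 := by rw [lie_lie_lie_left_comm, lie_eq_zero hb]
  have g₃ : GeneratesLayer 3 {⁅a, ⁅a, ⁅a, b⁆⁆⁆} :=
    ((g₀.lie_triple_singleton g₂).of_insert_of_mem (hyab ▸ zero_mem _)).of_pair_of_mem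
      (hbab ▸ zero_mem _)
  obtain ⟨p, q, hpq⟩ := Submodule.mem_span_pair.1 <|
    g₂.le (S := Submodule.span ℝ {⁅a, ⁅a, b⁆⁆, ⁅a, ⁅a, ⁅a, b⁆⁆⁆})
      (by simp [Submodule.mem_span_of_mem])
      (g₃.le (by simp [Submodule.mem_span_of_mem]) (h₄ ▸ bot_le)) hay
  have hd : p • ⁅a, b⁆ + q • ⁅a, ⁅a, b⁆⁆ ∈ lcsTerm L 1 :=
    add_mem (Submodule.smul_mem _ _ (lie_mem_lcsTerm_one a b))
      (Submodule.smul_mem _ _ (lie_mem_lcsTerm_one a _))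
  refine ⟨y - (p • ⁅a, b⁆ + q • ⁅a, ⁅a, b⁆⁆), a, b, g₀.sub_insert hd, ?_, ?_, hb, g₃⟩
  · simp [← hpq]
  · rw [lie_sub]
    exact sub_mem hby (lie_mem_lcsTerm_succ b hd)

lemma GeneratesLayer.notMem_lcsTerm_one (h : GeneratesLayer 0 {w, a, b})
    (hn : lcsRank L 1 + 3 = finrank ℝ L) : w ∉ lcsTerm L 1 := fun hw => by
  have hle : lcsRank L 0 ≤ lcsRank L 1 + 2 := (h.of_insert_of_mem hw).lcsRank_le_add_two
  rw [lcsRank_zero] at hle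
  omega

lemma GeneratesLayer.lie_ne_zero_of_lie_eq_zero {m : ℕ} (g₀ : GeneratesLayer 0 {w, a, b})
    (hn : lcsRank L 1 + 3 = finrank ℝ L) (hm : lcsTerm L m = ⊥)
    (hZ : LieAlgebra.center ℝ L ≤ LieModule.lowerCentralSeries ℝ L L 1) (ha : ⁅a, w⁆ = 0) :
    ⁅b, w⁆ ≠ 0 := fun hb =>
  g₀.notMem_lcsTerm_one hn (hZ (g₀.mem_center hm (by simp [ha, hb])))

lemma isNilsoliton_of_five_of_lcsTerm_two (hn : finrank ℝ L = 5)
    (h₁ : lcsRank L 1 = 2) (h₂ : lcsTerm L 2 = ⊥) : IsNilsoliton L := by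
  obtain ⟨a, b, c, g₀, hbc⟩ := exists_generatesLayer_zero_triple_lie_mem (L := L) (by omega)
    (by omega)
  have g₁ := g₀.lie_triple.of_insert_of_mem hbc
  replace hbc : ⁅b, c⁆ = 0 := by rwa [h₂] at hbc
  have lie_eq_zero (x : L) {y : L} (hy : y ∈ lcsTerm L 1) : ⁅x, y⁆ = 0 :=
    lie_eq_zero_of_mem_lcsTerm h₂ (mem_lcsTerm_zero x) hy le_rfl
  have lie_lie_ab (x : L) : ⁅x, ⁅a, b⁆⁆ = 0 := lie_eq_zero x (g₁.subset (.inl rfl))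
  have lie_lie_ac (x : L) : ⁅x, ⁅a, c⁆⁆ = 0 := lie_eq_zero x (g₁.subset (.inr rfl))
  refine isNilsoliton_of_L5_8 (c := ![1, 1]) (by simp [Fin.forall_fin_succ])
    (x := ![a, b, c, ⁅a, b⁆, ⁅a, c⁆]) (.of_lcsTerm_le hn.symm (fun S hS => ?_) ?_)
  · exact g₀.le (by simpa [Set.insert_subset_iff] using ⟨hS 0, hS 1, hS 2⟩) <|
      g₁.le (Set.pair_subset (hS 3) (hS 4)) (h₂ ▸ bot_le)
  · simp only [forall_lt_fin_succ]
    simp [Fin.forall_fin_succ, bracket, Fin.sum_univ_succ, *]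

lemma isNilsoliton_of_five_of_lcsRank_two (hn : finrank ℝ L = 5)
    (hZ : LieAlgebra.center ℝ L ≤ LieModule.lowerCentralSeries ℝ L L 1)
    (h₁ : lcsRank L 1 = 2) (h₂ : lcsRank L 2 = 1) (h₃ : lcsTerm L 3 = ⊥) : IsNilsoliton L := by
  obtain ⟨w, a, b, g₀, haw, hbw, hb, -⟩ := exists_generatesLayer_zero_triple_lie_eq_zero (L := L)
    (by omega) (by omega) (by omega) (eq_bot_iff.2 (h₃ ▸ lcsTerm_antitone (Nat.le_succ 3)))
  have haw' : ⁅a, w⁆ ∈ lcsTerm L 2 := haw ▸ zero_mem _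
  have g₁ := g₀.lie_of_lie_mem haw' hbw
  have g₂ := (g₀.lie_lie_of_lie_mem haw' hbw).of_pair_of_mem hb
  obtain ⟨q, hq⟩ := g₂.exists_smul_of_singleton h₃ hbw
  have hq₀ : q ≠ 0 := fun h => g₀.lie_ne_zero_of_lie_eq_zero (by omega) h₃ hZ haw
    (by rw [← hq, h, zero_smul])
  have habw : ⁅⁅a, b⁆, w⁆ = 0 := by
    rw [← lie_skew, neg_eq_zero]
    simpa [h₃] using lie_lie_mem_lcsTerm haw' hbw
  have lie_aab (x : L) : ⁅x, ⁅a, ⁅a, b⁆⁆⁆ = 0 :=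
    lie_eq_zero_of_mem_lcsTerm h₃ (mem_lcsTerm_zero x) (g₂.subset rfl) le_rfl
  rw [h₃, Submodule.mem_bot] at hb
  generalize hab : ⁅a, b⁆ = c at *
  generalize hac : ⁅a, c⁆ = z at *
  refine isNilsoliton_of_L5_5 (c := ![1, 1, q]) (by simp [Fin.forall_fin_succ, hq₀])
    (x := ![a, b, c, w, z]) (.of_lcsTerm_le hn.symm (fun S hS => ?_) ?_)
  · exact g₀.le (by simpa [Set.insert_subset_iff] using ⟨hS 3, hS 0, hS 1⟩) <|
      g₁.le (Set.singleton_subset_iff.2 (hS 2)) <|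
      g₂.le (Set.singleton_subset_iff.2 (hS 4)) (h₃ ▸ bot_le)
  · simp only [forall_lt_fin_succ]
    simp [Fin.forall_fin_succ, bracket, Fin.sum_univ_succ, *]

variable [LieRing.IsNilpotent L]

theorem isNilsoliton_of_finrank_five_lcsRank_two (hn : finrank ℝ L = 5)
    (hZ : LieAlgebra.center ℝ L ≤ LieModule.lowerCentralSeries ℝ L L 1)
    (h₁ : lcsRank L 1 = 2) : IsNilsoliton L := by
  have : lcsRank L 2 < lcsRank L 1 := lcsRank_succ_lt (by omega)
  by_cases h₂ : lcsRank L 2 = 0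
  · exact isNilsoliton_of_five_of_lcsTerm_two hn h₁ (lcsTerm_eq_bot h₂)
  · have : lcsRank L 3 < lcsRank L 2 := lcsRank_succ_lt h₂
    exact isNilsoliton_of_five_of_lcsRank_two hn hZ h₁ (by omega) (lcsTerm_eq_bot (by omega))

end ThreeGenerators

section ThreeGeneratorsSixShapes

open Module BracketTable

variable {L : Type*} [LieRing L] [LieAlgebra ℝ L] {x : Fin 6 → L}

/-- The shape of the algebras of dimension 6 with three generators `x 0`, `x 1`, `x 3` and lower
central series of dimensions `6, 3, 2`. -/
abbrev table632 : BracketTable (Fin 6) (Fin 7) :=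
  ![(0, 1, 2), (0, 2, 4), (1, 2, 5), (0, 3, 4), (0, 3, 5), (1, 3, 4), (1, 3, 5)]

lemma isNilsoliton_of_realizes_table632_of_apply_four_ne_zero {p q r : ℝ} (hq : q ≠ 0)
    (h : Realizes table632 ![1, 1, 1, p, q, r, -p] x) : IsNilsoliton L := by
  have h' : Realizes ![(0, 1, 2), (0, 2, 4), (1, 2, 5), (0, 3, 5), (1, 3, 4)]
      ![q, 1, 1, 1, p * p + q * r]
      ![x 0, p • x 0 + q • x 1, x 2, x 3, x 4, p • x 4 + q • x 5] := by
    refine h.changeBasis rfl ?_ ?_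
    · simp only [Fin.forall_fin_succ]
      rintro S ⟨h₀, h₁, h₂, h₃, h₄, h₅, -⟩
      exact ⟨h₀, (S.smul_mem_iff hq).1 ((S.add_mem_iff_right (S.smul_mem p h₀)).1 h₁), h₂, h₃, h₄,
        (S.smul_mem_iff hq).1 ((S.add_mem_iff_right (S.smul_mem p h₄)).1 h₅), fun i => i.elim0⟩
    · simp only [forall_lt_fin_succ]
      simp only [Fin.forall_fin_succ]
      and_intros <;> simp [h.lie, bracket, Fin.sum_univ_succ, smul_smul]
      all_goals module
  by_cases hpqr : p * p + q * r = 0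
  · exact isNilsoliton_of_L6_24_zero (c := ![q, 1, 1, 1]) (by simp [Fin.forall_fin_succ, hq])
      (h'.congr fun y => by simp [Fin.forall_fin_succ, bracket, Fin.sum_univ_succ, hpqr])
  · exact isNilsoliton_of_L6_24 (by simp [Fin.forall_fin_succ, hq, hpqr]) h'

lemma isNilsoliton_of_realizes_table632 {p q r : ℝ} (h₀ : p ≠ 0 ∨ q ≠ 0 ∨ r ≠ 0)
    (h : Realizes table632 ![1, 1, 1, p, q, r, -p] x) : IsNilsoliton L := by
  by_cases hq : q = 0
  · by_cases hr : r = 0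
    · have hp : p ≠ 0 := by simpa [hq, hr] using h₀
      refine isNilsoliton_of_realizes_table632_of_apply_four_ne_zero (p := p) (q := -2 * p) (r := 0)
        (by simpa) (x := ![x 0 + x 1, x 1, x 2, x 3, x 4 + x 5, x 5]) (h.changeBasis rfl ?_ ?_)
      · simp only [Fin.forall_fin_succ]
        rintro S ⟨h₀, h₁, h₂, h₃, h₄, h₅, -⟩
        exact ⟨(S.add_mem_iff_left h₁).1 h₀, h₁, h₂, h₃, (S.add_mem_iff_left h₅).1 h₄, h₅,
          fun i => i.elim0⟩
      · simp only [forall_lt_fin_succ]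
        simp only [Fin.forall_fin_succ]
        and_intros <;> simp [h.lie, bracket, Fin.sum_univ_succ, hq, hr]
        module
    · refine isNilsoliton_of_realizes_table632_of_apply_four_ne_zero (p := p) (q := -r) (r := -q)
        (by simpa) (x := ![x 1, x 0, -x 2, x 3, -x 5, -x 4]) (h.changeBasis rfl ?_ ?_)
      · simp only [Fin.forall_fin_succ]
        rintro S ⟨h₀, h₁, h₂, h₃, h₄, h₅, -⟩
        exact ⟨h₁, h₀, neg_mem_iff.1 h₂, h₃, neg_mem_iff.1 h₅, neg_mem_iff.1 h₄, fun i => i.elim0⟩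
      · simp only [forall_lt_fin_succ]
        simp only [Fin.forall_fin_succ]
        and_intros <;> simp [h.lie, bracket, Fin.sum_univ_succ]
        all_goals module
  · exact isNilsoliton_of_realizes_table632_of_apply_four_ne_zero hq h

/-- The shape of the algebras of dimension 6 with three generators `x 0`, `x 1`, `x 4` and lower
central series of dimensions `6, 3, 2, 1`. -/
abbrev table6321 : BracketTable (Fin 6) (Fin 7) :=
  ![(0, 1, 2), (0, 2, 3), (0, 3, 5), (1, 2, 5), (1, 4, 3), (1, 4, 5), (2, 4, 5)]

lemma isNilsoliton_of_realizes_table6321_of_apply_four_ne_zero {β q γ : ℝ} (hq : q ≠ 0)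
    (h : Realizes table6321 ![1, 1, 1, β, q, γ, q] x) : IsNilsoliton L := by
  obtain ⟨s, rfl⟩ : ∃ s, β = s * q := ⟨β / q, (div_mul_cancel₀ β hq).symm⟩
  obtain ⟨t, rfl⟩ : ∃ t, γ = -(2 * (t * q * q)) := ⟨-γ / (2 * q * q), by field_simp⟩
  refine isNilsoliton_of_L6_13 (c := ![1, 1, 1, q, q]) (by simp [Fin.forall_fin_succ, hq]) (by simp)
    (x := ![x 0 + t • x 4, x 1 + s • x 4, x 2 - t • (q • x 3 + (-(2 * (t * q * q))) • x 5),
      x 3 - (2 * t * q) • x 5, x 4, x 5]) (h.changeBasis rfl ?_ ?_)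
  · simp only [Fin.forall_fin_succ]
    rintro S ⟨h₀, h₁, h₂, h₃, h₄, h₅, -⟩
    have h₃' := (S.sub_mem_iff_left (S.smul_mem (2 * t * q) h₅)).1 h₃
    exact ⟨(S.add_mem_iff_left (S.smul_mem t h₄)).1 h₀, (S.add_mem_iff_left (S.smul_mem s h₄)).1 h₁,
      (S.sub_mem_iff_left (S.smul_mem t (add_mem (S.smul_mem q h₃') (S.smul_mem _ h₅)))).1 h₂,
      h₃', h₄, h₅, fun i => i.elim0⟩
  · simp only [forall_lt_fin_succ]
    simp only [Fin.forall_fin_succ]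
    and_intros <;> simp [h.lie, bracket, Fin.sum_univ_succ, smul_smul]
    all_goals module

lemma isNilsoliton_of_realizes_table6321 {β q γ : ℝ} (h₀ : q ≠ 0 ∨ γ ≠ 0)
    (h : Realizes table6321 ![1, 1, 1, β, q, γ, q] x) : IsNilsoliton L := by
  by_cases hq : q = 0
  · have hγ : γ ≠ 0 := by simpa [hq] using h₀
    by_cases hβ : β = 0
    · exact isNilsoliton_of_L6_12 (c := ![1, 1, 1, γ]) (by simp [Fin.forall_fin_succ, hγ])
        (h.congr fun y => by simp [Fin.forall_fin_succ, bracket, Fin.sum_univ_succ, hq, hβ])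
    · exact isNilsoliton_of_L6_11 hβ hγ
        (h.congr fun y => by simp [Fin.forall_fin_succ, bracket, Fin.sum_univ_succ, hq])
  · exact isNilsoliton_of_realizes_table6321_of_apply_four_ne_zero hq h

end ThreeGeneratorsSixShapes

section ThreeGeneratorsSixShort

open Module BracketTable

variable {L : Type*} [LieRing L] [LieAlgebra ℝ L] {α a b s t u : ℝ} {x : Fin 6 → L}

/-- The shape of the algebras of dimension 6 with three generators `x 0`, `x 1`, `x 2` and lower
central series of dimensions `6, 3, 1`. -/
abbrev table631 : BracketTable (Fin 6) (Fin 9) :=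
  ![(0, 1, 3), (0, 2, 4), (1, 2, 5), (0, 3, 5), (0, 4, 5), (1, 3, 5), (1, 4, 5), (2, 3, 5),
    (2, 4, 5)]

lemma BracketTable.Realizes.swap_table631
    (h : Realizes table631 ![1, 1, α, a, b, s, t, t, u] x) :
    Realizes table631 ![1, 1, -α, b, a, u, t, t, s] ![x 0, x 2, x 1, x 4, x 3, x 5] := by
  refine h.changeBasis rfl ?_ ?_
  · simp only [Fin.forall_fin_succ]
    rintro S ⟨h₀, h₁, h₂, h₃, h₄, h₅, -⟩
    exact ⟨h₀, h₂, h₁, h₄, h₃, h₅, fun i => i.elim0⟩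
  · simp only [forall_lt_fin_succ]
    simp only [Fin.forall_fin_succ]
    and_intros <;> simp [h.lie, bracket, Fin.sum_univ_succ]

lemma isNilsoliton_of_realizes_table631_of_apply_three_ne_zero (ha : a ≠ 0)
    (h : Realizes table631 ![1, 1, α, a, b, 0, 0, 0, 0] x) : IsNilsoliton L := by
  obtain ⟨p, rfl⟩ : ∃ p, b = -(p * a) := ⟨-b / a, by field_simp⟩
  have h' : Realizes ![(0, 1, 3), (0, 3, 5), (0, 2, 4), (1, 2, 5)] ![1, a, 1, α]
      ![x 0, x 1, x 2 + p • x 1, x 3, x 4 + p • x 3, x 5] := by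
    refine h.changeBasis rfl ?_ ?_
    · simp only [Fin.forall_fin_succ]
      rintro S ⟨h₀, h₁, h₂, h₃, h₄, h₅, -⟩
      exact ⟨h₀, h₁, (S.add_mem_iff_left (S.smul_mem p h₁)).1 h₂, h₃,
        (S.add_mem_iff_left (S.smul_mem p h₃)).1 h₄, h₅, fun i => i.elim0⟩
    · simp only [forall_lt_fin_succ]
      simp only [Fin.forall_fin_succ]
      and_intros <;> simp [h.lie, bracket, Fin.sum_univ_succ, smul_smul]
  by_cases hα : α = 0
  · exact isNilsoliton_of_L6_25 (c := ![1, a, 1]) (by simp [Fin.forall_fin_succ, ha])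
      (h'.congr fun y => by simp [Fin.forall_fin_succ, bracket, Fin.sum_univ_succ, hα])
  · exact isNilsoliton_of_L6_23 (by simp [Fin.forall_fin_succ, ha, hα]) h'

lemma isNilsoliton_of_realizes_table631_of_apply_two_eq_zero (hs : s ≠ 0)
    (h : Realizes table631 ![1, 1, 0, a, b, s, 0, 0, u] x) : IsNilsoliton L := by
  obtain ⟨p, rfl⟩ : ∃ p, a = -(p * s) := ⟨-a / s, by field_simp⟩
  have h₁ (q b' : ℝ) (hb' : b + q * u = b') : Realizes table631 ![1, 1, 0, 0, b', s, 0, 0, u]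
      ![x 0 + p • x 1 + q • x 2, x 1, x 2, x 3, x 4, x 5] := by
    refine h.changeBasis rfl ?_ ?_
    · simp only [Fin.forall_fin_succ]
      rintro S ⟨h₀, h₁, h₂, h₃, h₄, h₅, -⟩
      exact ⟨(S.add_mem_iff_left (S.smul_mem p h₁)).1 ((S.add_mem_iff_left (S.smul_mem q h₂)).1 h₀),
        h₁, h₂, h₃, h₄, h₅, fun i => i.elim0⟩
    · simp only [forall_lt_fin_succ]
      simp only [Fin.forall_fin_succ]
      and_intros <;> simp [h.lie, bracket, Fin.sum_univ_succ, smul_smul, ← hb', add_smul]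
  by_cases hu : u = 0
  · by_cases hb : b = 0
    · exact isNilsoliton_of_L6_27 (c := ![1, 1, s]) (by simp [Fin.forall_fin_succ, hs])
        ((h₁ 0 0 (by simp [hb])).congr fun y => by
          simp [Fin.forall_fin_succ, bracket, Fin.sum_univ_succ, hu])
    · exact isNilsoliton_of_L6_20 (c := ![1, 1, s, b]) (by simp [Fin.forall_fin_succ, hs, hb])
        ((h₁ 0 b (by simp)).congr fun y => by
          simp [Fin.forall_fin_succ, bracket, Fin.sum_univ_succ, hu])
  · exact isNilsoliton_of_L6_19 (c := ![1, 1, s, u]) (by simp [Fin.forall_fin_succ, hs, hu])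
      ((h₁ (-b / u) 0 (by field_simp; ring)).congr fun y => by
        simp [Fin.forall_fin_succ, bracket, Fin.sum_univ_succ])

lemma isNilsoliton_of_realizes_table631_of_apply_five_ne_zero (hs : s ≠ 0)
    (h : Realizes table631 ![1, 1, α, a, b, s, t, t, u] x) : IsNilsoliton L := by
  obtain ⟨p, rfl⟩ : ∃ p, t = -(p * s) := ⟨-t / s, by field_simp⟩
  obtain ⟨q, rfl⟩ : ∃ q, α = -(q * s) := ⟨-α / s, by field_simp⟩
  refine isNilsoliton_of_realizes_table631_of_apply_two_eq_zero (a := a) (b := b + p * a)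
    (u := u + p * -(p * s)) hs
    (x := ![x 0, x 1, x 2 + p • x 1 + q • x 3, x 3, x 4 + p • x 3 + (q * a) • x 5, x 5])
    (h.changeBasis rfl ?_ ?_)
  · simp only [Fin.forall_fin_succ]
    rintro S ⟨h₀, h₁, h₂, h₃, h₄, h₅, -⟩
    exact ⟨h₀, h₁,
      (S.add_mem_iff_left (S.smul_mem p h₁)).1 ((S.add_mem_iff_left (S.smul_mem q h₃)).1 h₂), h₃,
      (S.add_mem_iff_left (S.smul_mem p h₃)).1 ((S.add_mem_iff_left (S.smul_mem _ h₅)).1 h₄), h₅,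
      fun i => i.elim0⟩
  · simp only [forall_lt_fin_succ]
    simp only [Fin.forall_fin_succ]
    and_intros <;> simp [h.lie, bracket, Fin.sum_univ_succ, smul_smul]
    all_goals module

lemma isNilsoliton_of_realizes_table631_of_apply_six_ne_zero (ht : t ≠ 0)
    (h : Realizes table631 ![1, 1, α, a, b, 0, t, t, 0] x) : IsNilsoliton L := by
  refine isNilsoliton_of_realizes_table631_of_apply_five_ne_zero (α := α) (a := a + b) (b := b)
    (s := 2 * t) (t := t) (u := 0) (by simpa)
    (x := ![x 0, x 1 + x 2, x 2, x 3 + x 4, x 4, x 5]) (h.changeBasis rfl ?_ ?_)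
  · simp only [Fin.forall_fin_succ]
    rintro S ⟨h₀, h₁, h₂, h₃, h₄, h₅, -⟩
    exact ⟨h₀, (S.add_mem_iff_left h₂).1 h₁, h₂, (S.add_mem_iff_left h₄).1 h₃, h₄, h₅,
      fun i => i.elim0⟩
  · simp only [forall_lt_fin_succ]
    simp only [Fin.forall_fin_succ]
    and_intros <;> simp [h.lie, bracket, Fin.sum_univ_succ]
    all_goals module

lemma isNilsoliton_of_realizes_table631 (h₀ : ¬ (a = 0 ∧ b = 0 ∧ s = 0 ∧ t = 0 ∧ u = 0))
    (h : Realizes table631 ![1, 1, α, a, b, s, t, t, u] x) : IsNilsoliton L := by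
  by_cases hs : s = 0
  · subst hs
    by_cases hu : u = 0
    · subst hu
      by_cases ht : t = 0
      · subst ht
        by_cases ha : a = 0
        · have hb : b ≠ 0 := by simpa [ha] using h₀
          exact isNilsoliton_of_realizes_table631_of_apply_three_ne_zero hb h.swap_table631
        · exact isNilsoliton_of_realizes_table631_of_apply_three_ne_zero ha h
      · exact isNilsoliton_of_realizes_table631_of_apply_six_ne_zero ht h
    · exact isNilsoliton_of_realizes_table631_of_apply_five_ne_zero hu h.swap_table631
  · exact isNilsoliton_of_realizes_table631_of_apply_five_ne_zero hs h

end ThreeGeneratorsSixShort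

section ThreeGeneratorsSix

open Module BracketTable

variable {L : Type*} [LieRing L] [LieAlgebra ℝ L]

lemma isNilsoliton_of_six_of_lcsRank_one_two {a b c : L} (hn : finrank ℝ L = 6)
    (g₀ : GeneratesLayer 0 {a, b, c}) (hbc : ⁅b, c⁆ ∈ lcsTerm L 2) (h₂ : lcsRank L 2 = 1)
    (h₃ : lcsTerm L 3 = ⊥) : IsNilsoliton L := by
  obtain ⟨z, hz₀, hz⟩ := exists_lcsTerm_eq_span_singleton h₂
  have g₁ := g₀.lie_triple.of_insert_of_mem hbc
  have hcd : ⁅c, ⁅a, b⁆⁆ = ⁅b, ⁅a, c⁆⁆ := by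
    rw [lie_lie_eq_sub, lie_eq_zero_of_mem_lcsTerm h₃ (mem_lcsTerm_zero a) hbc le_rfl, sub_zero]
  generalize hab : ⁅a, b⁆ = d at *
  generalize hac : ⁅a, c⁆ = e at *
  have hd := g₁.subset (.inl rfl)
  have he := g₁.subset (.inr rfl)
  have exists_smul {v : L} (hv : v ∈ lcsTerm L 2) : ∃ r : ℝ, r • z = v :=
    Submodule.mem_span_singleton.1 (hz ▸ hv)
  obtain ⟨α, hα⟩ := exists_smul hbc
  obtain ⟨p, had⟩ := exists_smul (lie_mem_lcsTerm_succ a hd)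
  obtain ⟨q, hae⟩ := exists_smul (lie_mem_lcsTerm_succ a he)
  obtain ⟨s, hbd⟩ := exists_smul (lie_mem_lcsTerm_succ b hd)
  obtain ⟨t, hbe⟩ := exists_smul (lie_mem_lcsTerm_succ b he)
  obtain ⟨u, hce⟩ := exists_smul (lie_mem_lcsTerm_succ c he)
  rw [← hbe] at hcd
  have lie_z (x : L) : ⁅x, z⁆ = 0 := lie_eq_zero_of_mem_lcsTerm h₃ (mem_lcsTerm_zero x)
    (hz ▸ Submodule.mem_span_singleton_self z) le_rfl
  have hde : ⁅d, e⁆ = 0 := lie_eq_zero_of_mem_lcsTerm h₃ hd he (by decide)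
  refine isNilsoliton_of_realizes_table631 (α := α) (a := p) (b := q) (s := s) (t := t) (u := u)
    (x := ![a, b, c, d, e, z]) ?_ (.of_lcsTerm_le hn.symm (fun S hS => ?_) ?_)
  · rintro ⟨rfl, rfl, rfl, rfl, rfl⟩
    simp only [zero_smul] at had hae hbd hbe hcd hce
    have h₂_le : lcsTerm L 2 ≤ ⊥ := by
      refine (g₀.lie g₁).le ?_ h₃.le
      rintro _ ⟨u, rfl | rfl | rfl, v, rfl | rfl, rfl⟩ <;>
        simp [← had, ← hae, ← hbd, ← hbe, hcd, ← hce]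
    exact hz₀ (by simpa [hz] using h₂_le)
  · exact g₀.le (by simpa [Set.insert_subset_iff] using ⟨hS 0, hS 1, hS 2⟩) <|
      g₁.le (Set.pair_subset (hS 3) (hS 4)) <| by simpa [hz] using hS 5
  · simp only [forall_lt_fin_succ]
    simp [Fin.forall_fin_succ, bracket, Fin.sum_univ_succ, *]

variable [Module.Finite ℝ L]

lemma exists_generatesLayer_zero_triple_traceless (h : lcsRank L 1 + 3 = finrank ℝ L)
    (h₁₂ : lcsRank L 1 < lcsRank L 2 + 2) (h₃ : lcsTerm L 3 = ⊥) :
    ∃ (w a b : L) (p q r : ℝ), GeneratesLayer 0 {w, a, b} ∧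
      p • ⁅a, ⁅a, b⁆⁆ + q • ⁅b, ⁅a, b⁆⁆ = ⁅a, w⁆ ∧
      r • ⁅a, ⁅a, b⁆⁆ + (-p) • ⁅b, ⁅a, b⁆⁆ = ⁅b, w⁆ := by
  obtain ⟨y, a, b, g₀, hay, hby⟩ := exists_generatesLayer_zero_triple_lie_mem_lie_mem h h₁₂
  have g₂ := g₀.lie_lie_of_lie_mem hay hby
  obtain ⟨p, q, hpq⟩ := g₂.exists_smul_add_smul_of_pair h₃ hay
  obtain ⟨r, s, hrs⟩ := g₂.exists_smul_add_smul_of_pair h₃ hby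
  refine ⟨y - ((p + s) / 2) • ⁅a, b⁆, a, b, (p - s) / 2, q, r,
    g₀.sub_insert (Submodule.smul_mem _ _ (lie_mem_lcsTerm_one a b)), ?_, ?_⟩
  · rw [lie_sub, ← hpq, lie_smul]
    module
  · rw [lie_sub, ← hrs, lie_smul]
    module

lemma isNilsoliton_of_six_of_lcsTerm_three (hn : finrank ℝ L = 6)
    (hZ : LieAlgebra.center ℝ L ≤ LieModule.lowerCentralSeries ℝ L L 1)
    (h₁ : lcsRank L 1 = 3) (h₂ : lcsRank L 2 = 2) (h₃ : lcsTerm L 3 = ⊥) : IsNilsoliton L := by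
  obtain ⟨w, a, b, p, q, r, g₀, haw, hbw⟩ := exists_generatesLayer_zero_triple_traceless (L := L)
    (by omega) (by omega) h₃
  have hc : ⁅a, b⁆ ∈ lcsTerm L 1 := lie_mem_lcsTerm_one a b
  have mem_two (s t : ℝ) : s • ⁅a, ⁅a, b⁆⁆ + t • ⁅b, ⁅a, b⁆⁆ ∈ lcsTerm L 2 :=
    add_mem (Submodule.smul_mem _ _ (lie_mem_lcsTerm_succ a hc))
      (Submodule.smul_mem _ _ (lie_mem_lcsTerm_succ b hc))
  have g₁ := g₀.lie_of_lie_mem (haw ▸ mem_two _ _) (hbw ▸ mem_two _ _)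
  have g₂ := g₀.lie_lie_of_lie_mem (haw ▸ mem_two _ _) (hbw ▸ mem_two _ _)
  have hwc : ⁅⁅a, b⁆, w⁆ = 0 := by
    rw [← lie_skew, neg_eq_zero]
    have hwc := lie_lie_mem_lcsTerm (haw ▸ mem_two p q) (hbw ▸ mem_two r (-p))
    rwa [h₃, Submodule.mem_bot] at hwc
  have hpqr : p ≠ 0 ∨ q ≠ 0 ∨ r ≠ 0 := by
    by_contra! h
    obtain ⟨rfl, rfl, rfl⟩ := h
    exact g₀.lie_ne_zero_of_lie_eq_zero (by omega) h₃ hZ (by simp [← haw]) (by simp [← hbw])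
  rw [neg_smul] at hbw
  generalize hab : ⁅a, b⁆ = c at *
  generalize hac : ⁅a, c⁆ = d at *
  generalize hbc : ⁅b, c⁆ = e at *
  have lie_two (x : L) {u : L} (hu : u ∈ lcsTerm L 2) : ⁅x, u⁆ = 0 :=
    lie_eq_zero_of_mem_lcsTerm h₃ (mem_lcsTerm_zero x) hu le_rfl
  have lie_d (x : L) : ⁅x, d⁆ = 0 := lie_two x (g₂.subset (.inl rfl))
  have lie_e (x : L) : ⁅x, e⁆ = 0 := lie_two x (g₂.subset (.inr rfl))
  refine isNilsoliton_of_realizes_table632 hpqr (x := ![a, b, c, w, d, e])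
    (.of_lcsTerm_le hn.symm (fun S hS => ?_) ?_)
  · exact g₀.le (by simpa [Set.insert_subset_iff] using ⟨hS 3, hS 0, hS 1⟩) <|
      g₁.le (Set.singleton_subset_iff.2 (hS 2)) <|
      g₂.le (Set.pair_subset (hS 4) (hS 5)) (h₃ ▸ bot_le)
  · simp only [forall_lt_fin_succ]
    simp [Fin.forall_fin_succ, bracket, Fin.sum_univ_succ, *]

lemma isNilsoliton_of_six_of_lcsTerm_four_eq_bot (hn : finrank ℝ L = 6)
    (hZ : LieAlgebra.center ℝ L ≤ LieModule.lowerCentralSeries ℝ L L 1)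
    (h₁ : lcsRank L 1 = 3) (h₂ : lcsRank L 2 = 2) (h₃ : lcsRank L 3 = 1) (h₄ : lcsTerm L 4 = ⊥) :
    IsNilsoliton L := by
  obtain ⟨w, a, b, g₀, haw, hbw, hb, g₃⟩ := exists_generatesLayer_zero_triple_lie_eq_zero (L := L)
    (by omega) (by omega) (by omega) h₄
  have g₁ := g₀.lie_of_lie_mem (haw ▸ zero_mem _) hbw
  have g₂ := (g₀.lie_lie_of_lie_mem (haw ▸ zero_mem _) hbw).of_pair_of_mem hb
  have hbd := lie_lie_lie_left_comm a b
  have hcw : ⁅⁅a, b⁆, w⁆ = ⁅a, ⁅b, w⁆⁆ := by rw [lie_lie, haw, lie_zero, sub_zero]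
  have hdw : ⁅⁅a, ⁅a, b⁆⁆, w⁆ = ⁅a, ⁅⁅a, b⁆, w⁆⁆ := by rw [lie_lie, haw, lie_zero, sub_zero]
  generalize hab : ⁅a, b⁆ = c at *
  generalize hac : ⁅a, c⁆ = d at *
  generalize had : ⁅a, d⁆ = z at *
  have hc := g₁.subset rfl
  have hd := g₂.subset rfl
  have lie_eq_zero (x : L) {u : L} (hu : u ∈ lcsTerm L 3) : ⁅x, u⁆ = 0 :=
    lie_eq_zero_of_mem_lcsTerm h₄ (mem_lcsTerm_zero x) hu le_rfl
  have lie_z (x : L) : ⁅x, z⁆ = 0 := lie_eq_zero x (g₃.subset rfl)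
  obtain ⟨β, hβ⟩ := g₃.exists_smul_of_singleton h₄ hb
  obtain ⟨q, γ, hqγ⟩ := Submodule.mem_span_pair.1 <| g₂.le (S := Submodule.span ℝ {d, z})
    (by simp [Submodule.mem_span_of_mem])
    (g₃.le (by simp [Submodule.mem_span_of_mem]) (h₄ ▸ bot_le)) hbw
  replace hbd : ⁅b, d⁆ = 0 := hbd.trans (lie_eq_zero a hb)
  replace hcw : ⁅c, w⁆ = q • z := by simp [hcw, ← hqγ, had, lie_z]
  replace hdw : ⁅d, w⁆ = 0 := by simp [hdw, hcw, lie_z]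
  have hcd : ⁅c, d⁆ = 0 := lie_eq_zero_of_mem_lcsTerm h₄ hc hd le_rfl
  refine isNilsoliton_of_realizes_table6321 (β := β) (q := q) (γ := γ) (x := ![a, b, c, d, w, z])
    ?_ (.of_lcsTerm_le hn.symm (fun S hS => ?_) ?_)
  · by_contra! h
    exact g₀.lie_ne_zero_of_lie_eq_zero (by omega) h₄ hZ haw (by simp [← hqγ, h])
  · exact g₀.le (by simpa [Set.insert_subset_iff] using ⟨hS 4, hS 0, hS 1⟩) <|
      g₁.le (Set.singleton_subset_iff.2 (hS 2)) <|
      g₂.le (Set.singleton_subset_iff.2 (hS 3)) <|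
      g₃.le (Set.singleton_subset_iff.2 (hS 5)) (h₄ ▸ bot_le)
  · simp only [forall_lt_fin_succ]
    simp [Fin.forall_fin_succ, bracket, Fin.sum_univ_succ, *]

lemma isNilsoliton_of_six_of_lcsTerm_two (hn : finrank ℝ L = 6) (h₁ : lcsRank L 1 = 3)
    (h₂ : lcsTerm L 2 = ⊥) : IsNilsoliton L := by
  obtain ⟨x, g₀⟩ := exists_generatesLayer_zero (L := L) (d := 3) (by omega)
  have range_eq : Set.range x = {x 0, x 1, x 2} := by
    ext
    simp [Fin.exists_fin_succ, eq_comm]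
  rw [range_eq] at g₀
  have g₁ := g₀.lie_triple
  have lie_lie_eq_zero (u v w : L) : ⁅u, ⁅v, w⁆⁆ = 0 :=
    lie_eq_zero_of_mem_lcsTerm h₂ (mem_lcsTerm_zero u) (lie_mem_lcsTerm_one v w) le_rfl
  refine isNilsoliton_of_L6_26 (c := ![1, 1, 1]) (by simp [Fin.forall_fin_succ])
    (x := ![x 0, x 1, x 2, ⁅x 0, x 1⁆, ⁅x 0, x 2⁆, ⁅x 1, x 2⁆])
    (.of_lcsTerm_le hn.symm (fun S hS => ?_) ?_)
  · exact g₀.le (by simpa [Set.insert_subset_iff] using ⟨hS 0, hS 1, hS 2⟩) <|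
      g₁.le (by simpa [Set.insert_subset_iff] using ⟨hS 5, hS 3, hS 4⟩) (h₂ ▸ bot_le)
  · simp only [forall_lt_fin_succ]
    simp [Fin.forall_fin_succ, bracket, Fin.sum_univ_succ, lie_lie_eq_zero]

variable [LieRing.IsNilpotent L]

theorem isNilsoliton_of_finrank_six_lcsRank_three (hn : finrank ℝ L = 6)
    (hZ : LieAlgebra.center ℝ L ≤ LieModule.lowerCentralSeries ℝ L L 1)
    (h₁ : lcsRank L 1 = 3) : IsNilsoliton L := by
  have : lcsRank L 2 < lcsRank L 1 := lcsRank_succ_lt (by omega)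
  by_cases h₂ : lcsRank L 2 = 0
  · exact isNilsoliton_of_six_of_lcsTerm_two hn h₁ (lcsTerm_eq_bot h₂)
  have : lcsRank L 3 < lcsRank L 2 := lcsRank_succ_lt h₂
  by_cases h₃ : lcsRank L 3 = 0
  · by_cases h₂' : lcsRank L 2 = 1
    · obtain ⟨a, b, c, g₀, hbc⟩ := exists_generatesLayer_zero_triple_lie_mem (L := L) (by omega)
        (by omega)
      exact isNilsoliton_of_six_of_lcsRank_one_two hn g₀ hbc h₂' (lcsTerm_eq_bot h₃)
    · exact isNilsoliton_of_six_of_lcsTerm_three hn hZ h₁ (by omega) (lcsTerm_eq_bot h₃)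
  · have : lcsRank L 4 < lcsRank L 3 := lcsRank_succ_lt h₃
    exact isNilsoliton_of_six_of_lcsTerm_four_eq_bot hn hZ h₁ (by omega) (by omega)
      (lcsTerm_eq_bot (by omega))

end ThreeGeneratorsSix

section FourGeneratorsTwoStep

open Module BracketTable

variable {L : Type*} [LieRing L] [LieAlgebra ℝ L]

lemma lie_mem_span_singleton_of_forall
    (H : ∀ u v w : L, ⁅u, v⁆ ≠ 0 → ⁅u, w⁆ ∈ Submodule.span ℝ {⁅u, v⁆}) {x y : L}
    (hxy : ⁅x, y⁆ ≠ 0) (a b : L) : ⁅a, b⁆ ∈ Submodule.span ℝ {⁅x, y⁆} := by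
  have hyx : ⁅y, x⁆ ≠ 0 := by rwa [← lie_skew, neg_ne_zero]
  obtain ⟨q, hq⟩ := Submodule.mem_span_singleton.1 (H y x a hyx)
  have hay : ⁅a, y⁆ = q • ⁅x, y⁆ := by
    rw [← lie_skew, ← hq, ← lie_skew x y, smul_neg]
  have lie_eq : ⁅x + (a - q • x), y⁆ = ⁅x, y⁆ := by simp [hay]
  have lie_b_mem := H (x + (a - q • x)) y b (lie_eq ▸ hxy)
  rw [lie_eq, show x + (a - q • x) = a - (q - 1) • x by module, sub_lie, smul_lie]
    at lie_b_mem
  exact (Submodule.sub_mem_iff_left _ (Submodule.smul_mem _ _ (H x y b hxy))).1 lie_b_mem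

lemma isNilsoliton_of_realizes_table622_of_ne_zero {a b c : ℝ} (hb : b ≠ 0) {x : Fin 6 → L}
    (h : Realizes ![(0, 2, 4), (0, 3, 5), (1, 2, 4), (1, 2, 5), (1, 3, 4), (1, 3, 5)]
      ![1, 1, a, b, c, -a] x) : IsNilsoliton L := by
  have h' : Realizes ![(0, 2, 4), (0, 3, 5), (1, 2, 5), (1, 3, 4)] ![1, 1, 1, a ^ 2 + b * c]
      ![x 0, x 1, x 2, a • x 2 + b • x 3, x 4, a • x 4 + b • x 5] := by
    refine h.changeBasis rfl ?_ ?_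
    · simp only [Fin.forall_fin_succ]
      rintro S ⟨h₀, h₁, h₂, h₃, h₄, h₅, -⟩
      exact ⟨h₀, h₁, h₂,
        (S.smul_mem_iff hb).1 <| (S.add_mem_iff_right (S.smul_mem a h₂)).1 h₃, h₄,
        (S.smul_mem_iff hb).1 <| (S.add_mem_iff_right (S.smul_mem a h₄)).1 h₅,
        fun i => i.elim0⟩
    · simp only [forall_lt_fin_succ]
      simp only [Fin.forall_fin_succ]
      and_intros <;> simp [h.lie, bracket, Fin.sum_univ_succ, smul_smul]
      all_goals module
  by_cases hδ : a ^ 2 + b * c = 0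
  · exact isNilsoliton_of_L6_22_zero (c := ![1, 1, 1]) (by simp [Fin.forall_fin_succ]) <|
      h'.congr fun y => by simp [Fin.forall_fin_succ, bracket, Fin.sum_univ_succ, hδ]
  · exact isNilsoliton_of_L6_22 (by simp [Fin.forall_fin_succ, hδ]) h'

lemma isNilsoliton_of_realizes_table622 {a b c : ℝ} (h₀ : ¬(a = 0 ∧ b = 0 ∧ c = 0))
    {x : Fin 6 → L}
    (h : Realizes ![(0, 2, 4), (0, 3, 5), (1, 2, 4), (1, 2, 5), (1, 3, 4), (1, 3, 5)]
      ![1, 1, a, b, c, -a] x) : IsNilsoliton L := by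
  by_cases hb : b = 0
  swap
  · exact isNilsoliton_of_realizes_table622_of_ne_zero hb h
  by_cases hc : c = 0
  swap
  · refine isNilsoliton_of_realizes_table622_of_ne_zero (a := -a) (b := c) (c := b) hc
      (x := ![x 0, x 1, x 3, x 2, x 5, x 4]) (h.changeBasis rfl ?_ ?_)
    · simp +contextual [Fin.forall_fin_succ]
    · simp only [forall_lt_fin_succ]
      simp only [Fin.forall_fin_succ]
      and_intros <;> simp [h.lie, bracket, Fin.sum_univ_succ]
      all_goals module
  have ha : -2 * a ≠ 0 := by simpa [hb, hc] using h₀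
  subst hb hc
  refine isNilsoliton_of_realizes_table622_of_ne_zero (a := a) (b := -2 * a) (c := 0) ha
    (x := ![x 0, x 1, x 2 + x 3, x 3, x 4 + x 5, x 5]) (h.changeBasis rfl ?_ ?_)
  · simp only [Fin.forall_fin_succ]
    rintro S ⟨h₀, h₁, h₂, h₃, h₄, h₅, -⟩
    exact ⟨h₀, h₁, (S.add_mem_iff_left h₃).1 h₂, h₃, (S.add_mem_iff_left h₅).1 h₄, h₅,
      fun i => i.elim0⟩
  · simp only [forall_lt_fin_succ]
    simp only [Fin.forall_fin_succ]
    and_intros <;> simp [h.lie, bracket, Fin.sum_univ_succ]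
    all_goals module

variable [Module.Finite ℝ L]

lemma exists_lcsTerm_one_eq_span_pair (h₁ : lcsRank L 1 = 2) :
    ∃ u v w : L, lcsTerm L 1 = Submodule.span ℝ {⁅u, v⁆, ⁅u, w⁆} := by
  by_contra! H
  have H' (u v w : L) (huv : ⁅u, v⁆ ≠ 0) : ⁅u, w⁆ ∈ Submodule.span ℝ {⁅u, v⁆} := by
    by_contra huw
    refine H u v w (Submodule.eq_of_le_of_finrank_eq (Submodule.span_le.2 <| Set.pair_subset
      (lie_mem_lcsTerm_one u v) (lie_mem_lcsTerm_one u w)) ?_).symm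
    rw [Set.pair_comm, Submodule.span_insert, sup_comm, Submodule.finrank_sup_span_singleton huw,
      finrank_span_singleton huv]
    exact h₁.symm
  obtain ⟨x, y, hxy⟩ : ∃ x y : L, ⁅x, y⁆ ≠ 0 := by
    by_contra! h
    have le_bot : lcsTerm L 1 ≤ ⊥ := lcsTerm_succ_le fun x y _ => by simp [h]
    rw [lcsRank, le_bot_iff.1 le_bot, finrank_bot] at h₁
    omega
  have h_le : lcsTerm L 1 ≤ Submodule.span ℝ {⁅x, y⁆} :=
    lcsTerm_succ_le fun a b _ => lie_mem_span_singleton_of_forall H' hxy a b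
  have : lcsRank L 1 ≤ _ := Submodule.finrank_mono h_le
  rw [finrank_span_singleton hxy] at this
  omega

lemma exists_sup_span_singleton_eq {P K : Submodule ℝ L} (hPK : P ≤ K)
    (h : finrank ℝ P + 1 = finrank ℝ K) : ∃ u ∈ K, P ⊔ Submodule.span ℝ {u} = K := by
  obtain ⟨u, huK, hu⟩ := SetLike.not_le_iff_exists.1 fun hKP : K ≤ P => by
    have := Submodule.finrank_mono hKP
    omega
  refine ⟨u, huK, Submodule.eq_of_le_of_finrank_eq (sup_le hPK (by simpa using huK)) ?_⟩
  rw [Submodule.finrank_sup_span_singleton hu, h]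

lemma exists_generatesLayer_zero_quadruple (hn : finrank ℝ L = 6) (h₁ : lcsRank L 1 = 2)
    (h₂ : lcsTerm L 2 = ⊥) :
    ∃ u u' v w : L, GeneratesLayer 0 {u', u, v, w} ∧ GeneratesLayer 1 {⁅u, v⁆, ⁅u, w⁆} ∧
      ⁅u, u'⁆ = 0 := by
  obtain ⟨u, v, w, huvw⟩ := exists_lcsTerm_one_eq_span_pair h₁
  have hu : u ∉ lcsTerm L 1 := fun hu => by
    have lie_u (y : L) : ⁅u, y⁆ = 0 :=
      lie_eq_zero_of_mem_lcsTerm h₂ hu (mem_lcsTerm_zero y) le_rfl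
    rw [lcsRank, huvw, lie_u, lie_u, Set.pair_eq_singleton, Submodule.span_zero_singleton,
      finrank_bot] at h₁
    omega
  have range_eq : LinearMap.range (LieModule.toEnd ℝ L L u) = lcsTerm L 1 :=
    le_antisymm (by rintro _ ⟨y, rfl⟩; exact lie_mem_lcsTerm_one u y)
      (huvw.le.trans <| Submodule.span_le.2 <| Set.pair_subset ⟨v, rfl⟩ ⟨w, rfl⟩)
  set K := LinearMap.ker (LieModule.toEnd ℝ L L u)
  have hK : lcsRank L 1 + finrank ℝ K = _ :=
    range_eq ▸ (LieModule.toEnd ℝ L L u).finrank_range_add_finrank_ker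
  have hPK : lcsTerm L 1 ⊔ Submodule.span ℝ {u} ≤ K :=
    sup_le (fun y hy => lie_eq_zero_of_mem_lcsTerm h₂ (mem_lcsTerm_zero u) hy le_rfl) (by simp [K])
  have hP : _ = lcsRank L 1 + 1 := Submodule.finrank_sup_span_singleton hu
  obtain ⟨u', hu'K, hu'⟩ := exists_sup_span_singleton_eq hPK (by omega)
  refine ⟨u, u', v, w, ⟨fun y _ => mem_lcsTerm_zero y, fun y _ => ?_⟩,
    ⟨Submodule.span_le.1 huvw.ge, huvw.le.trans le_sup_left⟩, hu'K⟩
  set S := Submodule.span ℝ {u', u, v, w} ⊔ lcsTerm L 1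
  have mem_S {x : L} (hx : x ∈ ({u', u, v, w} : Set L)) : x ∈ S :=
    Submodule.mem_sup_left (Submodule.subset_span hx)
  have hKS : K ≤ S := by
    simp only [← hu', sup_le_iff, Submodule.span_singleton_le_iff_mem]
    exact ⟨⟨le_sup_right, mem_S (by simp)⟩, mem_S (by simp)⟩
  obtain ⟨r, s, hrs⟩ := Submodule.mem_span_pair.1 (huvw ▸ lie_mem_lcsTerm_one u y)
  have hy : y - (r • v + s • w) ∈ K := by simp [K, hrs]
  refine (S.sub_mem_iff_left ?_).1 (hKS hy)
  exact add_mem (S.smul_mem r (mem_S (by simp))) (S.smul_mem s (mem_S (by simp)))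

lemma exists_generatesLayer_zero_quadruple_traceless (hn : finrank ℝ L = 6) (h₁ : lcsRank L 1 = 2)
    (h₂ : lcsTerm L 2 = ⊥) :
    ∃ (u u' v w : L) (a b c : ℝ), GeneratesLayer 0 {u', u, v, w} ∧
      GeneratesLayer 1 {⁅u, v⁆, ⁅u, w⁆} ∧ ⁅u, u'⁆ = 0 ∧ ⁅v, w⁆ = 0 ∧
      a • ⁅u, v⁆ + b • ⁅u, w⁆ = ⁅u', v⁆ ∧ c • ⁅u, v⁆ + -(a • ⁅u, w⁆) = ⁅u', w⁆ := by
  obtain ⟨u, u', v, w, g₀, g₁, huu'⟩ := exists_generatesLayer_zero_quadruple hn h₁ h₂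
  obtain ⟨a, b, hv⟩ := g₁.exists_smul_add_smul_of_pair h₂ (lie_mem_lcsTerm_one u' v)
  obtain ⟨c, d, hw⟩ := g₁.exists_smul_add_smul_of_pair h₂ (lie_mem_lcsTerm_one u' w)
  obtain ⟨e, f, hvw⟩ := g₁.exists_smul_add_smul_of_pair h₂ (lie_mem_lcsTerm_one v w)
  have hu'u : ⁅u', u⁆ = 0 := by rw [← lie_skew, huu', neg_zero]
  have hvu : ⁅v, u⁆ = -⁅u, v⁆ := (lie_skew v u).symm
  refine ⟨u, u' - ((a + d) / 2) • u, v - f • u, w + e • u, (a - d) / 2, b, c,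
    g₀.of_subset (fun y _ => mem_lcsTerm_zero y) fun S hS _ => ?_, by simpa using g₁,
    by simp [huu'], ?_, ?_, ?_⟩
  · simp only [Set.insert_subset_iff, Set.singleton_subset_iff, SetLike.mem_coe] at hS ⊢
    obtain ⟨hu', hu, hv, hw⟩ := hS
    have hsmul (t : ℝ) : t • u ∈ S := S.smul_mem t hu
    exact ⟨(S.sub_mem_iff_left (hsmul _)).1 hu', hu, (S.sub_mem_iff_left (hsmul _)).1 hv,
      (S.add_mem_iff_left (hsmul _)).1 hw⟩
  · rw [sub_lie, lie_add, lie_add, ← hvw, smul_lie, smul_lie, lie_smul, lie_smul, lie_self, hvu]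
    module
  · simp only [sub_lie, lie_sub, lie_add, smul_lie, lie_smul, lie_self, hu'u, ← hv]
    module
  · simp only [sub_lie, lie_sub, lie_add, smul_lie, lie_smul, lie_self, hu'u, ← hw]
    module

theorem isNilsoliton_of_six_of_lcsRank_one_two_of_lcsTerm_two (hn : finrank ℝ L = 6)
    (hZ : LieAlgebra.center ℝ L ≤ LieModule.lowerCentralSeries ℝ L L 1) (h₁ : lcsRank L 1 = 2)
    (h₂ : lcsTerm L 2 = ⊥) : IsNilsoliton L := by
  obtain ⟨u, u', v, w, a, b, c, g₀, g₁, huu', hvw, hu'v, hu'w⟩ :=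
    exists_generatesLayer_zero_quadruple_traceless hn h₁ h₂
  have h₀ : ¬(a = 0 ∧ b = 0 ∧ c = 0) := by
    rintro ⟨rfl, rfl, rfl⟩
    simp only [zero_smul, neg_zero, add_zero] at hu'v hu'w
    have hu'Z : u' ∈ LieAlgebra.center ℝ L := g₀.mem_center h₂ (by
      simp [huu', ← lie_skew v, ← lie_skew w, ← hu'v, ← hu'w])
    have := (g₀.of_insert_of_mem (hZ hu'Z)).lcsRank_le_add_three
    rw [lcsRank_zero, zero_add] at this
    omega
  have lie_lie_eq_zero (u v w : L) : ⁅u, ⁅v, w⁆⁆ = 0 :=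
    lie_eq_zero_of_mem_lcsTerm h₂ (mem_lcsTerm_zero u) (lie_mem_lcsTerm_one v w) le_rfl
  refine isNilsoliton_of_realizes_table622 h₀ (x := ![u, u', v, w, ⁅u, v⁆, ⁅u, w⁆])
    (.of_lcsTerm_le hn.symm (fun S hS => ?_) ?_)
  · exact g₀.le (by simpa [Set.insert_subset_iff] using ⟨hS 1, hS 0, hS 2, hS 3⟩) <|
      g₁.le (Set.pair_subset (hS 4) (hS 5)) (h₂ ▸ bot_le)
  · simp only [forall_lt_fin_succ]
    simp [Fin.forall_fin_succ, bracket, Fin.sum_univ_succ, *]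

end FourGeneratorsTwoStep

section FiliformPair

open Module BracketTable

variable {L : Type*} [LieRing L] [LieAlgebra ℝ L]

lemma exists_lie_lie_ne_zero (h : lcsTerm L 2 ≠ ⊥) : ∃ a b : L, ⁅a, ⁅a, b⁆⁆ ≠ 0 := by
  by_contra! H
  have anticomm (a b c : L) : ⁅a, ⁅b, c⁆⁆ = -⁅b, ⁅a, c⁆⁆ := by
    have hab := H (a + b) c
    simp only [add_lie, lie_add, H, zero_add, add_zero] at hab
    exact eq_neg_of_add_eq_zero_right hab
  have lie_lie_eq_zero (a b c : L) : ⁅a, ⁅b, c⁆⁆ = 0 := by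
    have cyclic : ⁅c, ⁅a, b⁆⁆ = ⁅a, ⁅b, c⁆⁆ := by
      rw [anticomm c, ← lie_skew c b, lie_neg, neg_neg]
    have := lie_lie_eq_sub a b c
    rw [cyclic, anticomm b] at this
    have three : (3 : ℝ) • ⁅a, ⁅b, c⁆⁆ = 0 := by
      rw [← sub_eq_zero] at this
      rw [← this]
      module
    simpa using three
  have lcs_le : lcsTerm L 1 ≤ LieAlgebra.center ℝ L :=
    lcsTerm_succ_le fun a b _ c => lie_lie_eq_zero c a b
  exact h <| le_bot_iff.1 <| lcsTerm_succ_le fun x y hy => lcs_le hy x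

lemma finrank_le_finrank_inf_ker_add [Module.Finite ℝ L] {P Q : Submodule ℝ L} {f : L →ₗ[ℝ] L}
    (h : P.map f ≤ Q) :
    finrank ℝ P ≤ finrank ℝ (P ⊓ LinearMap.ker f : Submodule ℝ L) + finrank ℝ Q := by
  have hker : finrank ℝ (f.domRestrict P).ker =
      finrank ℝ (P ⊓ LinearMap.ker f : Submodule ℝ L) := by
    rw [LinearMap.ker_domRestrict, ← Submodule.finrank_map_subtype_eq,
      Submodule.map_comap_subtype]
  have hrange := Submodule.finrank_mono h
  have := (f.domRestrict P).finrank_range_add_finrank_ker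
  rw [LinearMap.range_domRestrict] at this
  omega

/-- The brackets of `a` and `b` are those of the generators of the filiform Lie algebra with basis
`a`, `b`, `⁅a, b⁆`, `⁅a, ⁅a, b⁆⁆`, and the last two of these vectors span the derived algebra
of `L`. -/
structure IsFiliformPair (a b : L) : Prop where
  lie_lie_ne_zero : ⁅a, ⁅a, b⁆⁆ ≠ 0
  lie_lie_eq_zero : ⁅b, ⁅a, b⁆⁆ = 0
  lcsTerm_one : lcsTerm L 1 = Submodule.span ℝ {⁅a, b⁆, ⁅a, ⁅a, b⁆⁆}
  lcsTerm_two : lcsTerm L 2 = Submodule.span ℝ {⁅a, ⁅a, b⁆⁆}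
  lcsTerm_three : lcsTerm L 3 = ⊥

namespace IsFiliformPair

variable {a b : L}

lemma lie_lie_lie (h : IsFiliformPair a b) (y : L) : ⁅y, ⁅a, ⁅a, b⁆⁆⁆ = 0 :=
  lie_eq_zero_of_mem_lcsTerm h.lcsTerm_three (mem_lcsTerm_zero y)
    (lie_mem_lcsTerm_succ a (lie_mem_lcsTerm_one a b)) le_rfl

lemma exists_smul_eq_lie_lie (h : IsFiliformPair a b) (y : L) :
    ∃ r : ℝ, r • ⁅a, ⁅a, b⁆⁆ = ⁅⁅a, b⁆, y⁆ := by
  refine Submodule.mem_span_singleton.1 (h.lcsTerm_two ▸ ?_)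
  exact lie_mem_lcsTerm (lie_mem_lcsTerm_one a b) (mem_lcsTerm_zero y)

lemma exists_smul_eq (h : IsFiliformPair a b) {y : L} (hy : y ∈ lcsTerm L 1) (hay : ⁅a, y⁆ = 0) :
    ∃ r : ℝ, r • ⁅a, ⁅a, b⁆⁆ = y := by
  rw [h.lcsTerm_one, Submodule.mem_span_pair] at hy
  obtain ⟨s, t, rfl⟩ := hy
  have hs : s = 0 := by simpa [h.lie_lie_lie, h.lie_lie_ne_zero, -lie_lie] using hay
  exact ⟨t, by simp [hs]⟩

lemma exists_smul_eq_lie (h : IsFiliformPair a b) {x y : L} (hx : ⁅a, x⁆ = 0) (hy : ⁅a, y⁆ = 0) :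
    ∃ r : ℝ, r • ⁅a, ⁅a, b⁆⁆ = ⁅x, y⁆ :=
  h.exists_smul_eq (lie_mem_lcsTerm_one x y)
    (by rw [leibniz_lie, hx, hy, zero_lie, lie_zero, add_zero])

lemma exists_smul_eq_lie_right (h : IsFiliformPair a b) {y : L} (hy : ⁅a, y⁆ = 0)
    (hcy : ⁅⁅a, b⁆, y⁆ = 0) : ∃ r : ℝ, r • ⁅a, ⁅a, b⁆⁆ = ⁅b, y⁆ :=
  h.exists_smul_eq (lie_mem_lcsTerm_one b y) (by rw [leibniz_lie, hcy, hy, lie_zero, add_zero])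

lemma exists_add_eq (h : IsFiliformPair a b) (w : L) : ∃ (p q r : ℝ) (y : L),
    p • a + q • b + r • ⁅a, b⁆ + y = w ∧ ⁅a, y⁆ = 0 ∧ ⁅⁅a, b⁆, y⁆ = 0 := by
  obtain ⟨q, r, hqr⟩ := Submodule.mem_span_pair.1 (h.lcsTerm_one ▸ lie_mem_lcsTerm_one a w)
  obtain ⟨p, hp⟩ := h.exists_smul_eq_lie_lie w
  have hca : ⁅⁅a, b⁆, a⁆ = -⁅a, ⁅a, b⁆⁆ := (lie_skew _ _).symm
  have hcb : ⁅⁅a, b⁆, b⁆ = 0 := by rw [← lie_skew, h.lie_lie_eq_zero, neg_zero]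
  refine ⟨-p, q, r, w - ((-p) • a + q • b + r • ⁅a, b⁆), add_sub_cancel _ _, ?_, ?_⟩
  · rw [lie_sub, lie_add, lie_add, lie_smul, lie_smul, lie_smul, lie_self, ← hqr]
    module
  · rw [lie_sub, lie_add, lie_add, lie_smul, lie_smul, lie_smul, lie_self, ← hp, hca, hcb]
    module

lemma mem_center (h : IsFiliformPair a b) {k : L} (ha : ⁅a, k⁆ = 0) (hb : ⁅b, k⁆ = 0)
    (hk : ∀ y : L, ⁅a, y⁆ = 0 → ⁅⁅a, b⁆, y⁆ = 0 → ⁅y, k⁆ = 0) :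
    k ∈ LieAlgebra.center ℝ L := fun w => by
  obtain ⟨p, q, r, y, rfl, hay, hcy⟩ := h.exists_add_eq w
  simp [ha, hb, hk y hay hcy]

lemma congr_right {b' : L} (h : IsFiliformPair a b) (hab : ⁅a, b'⁆ = ⁅a, b⁆)
    (hb' : ⁅b', ⁅a, b⁆⁆ = 0) : IsFiliformPair a b' where
  lie_lie_ne_zero := hab ▸ h.lie_lie_ne_zero
  lie_lie_eq_zero := hab ▸ hb'
  lcsTerm_one := hab ▸ h.lcsTerm_one
  lcsTerm_two := hab ▸ h.lcsTerm_two
  lcsTerm_three := h.lcsTerm_three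

lemma linearIndependent (h : IsFiliformPair a b) {x y : L} (hax : ⁅a, x⁆ = 0) (hay : ⁅a, y⁆ = 0)
    (hcx : ⁅⁅a, b⁆, x⁆ = 0) (hcy : ⁅⁅a, b⁆, y⁆ = 0) (hxy : ⁅x, y⁆ = ⁅a, ⁅a, b⁆⁆) :
    LinearIndependent ℝ ![a, b, ⁅a, b⁆, x, y, ⁅a, ⁅a, b⁆⁆] := by
  have hz := h.lie_lie_ne_zero
  have lie_z := h.lie_lie_lie
  have hca : ⁅⁅a, b⁆, a⁆ = -⁅a, ⁅a, b⁆⁆ := (lie_skew _ _).symm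
  have hcb : ⁅⁅a, b⁆, b⁆ = 0 := by rw [← lie_skew, h.lie_lie_eq_zero, neg_zero]
  have hxc : ⁅x, ⁅a, b⁆⁆ = 0 := by rw [← lie_skew, hcx, neg_zero]
  have hyc : ⁅y, ⁅a, b⁆⁆ = 0 := by rw [← lie_skew, hcy, neg_zero]
  have hyx : ⁅y, x⁆ = -⁅a, ⁅a, b⁆⁆ := by rw [← hxy, lie_skew]
  generalize hab : ⁅a, b⁆ = c at *
  generalize hac : ⁅a, c⁆ = z at *
  refine Fintype.linearIndependent_iff.2 fun g hg => ?_
  simp only [Fin.sum_univ_succ, Matrix.cons_val_zero, Matrix.cons_val_succ, Fin.sum_univ_zero,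
    add_zero] at hg
  have lie_sum (w : L) := congrArg (⁅w, ·⁆) hg
  simp only [lie_add, lie_smul, lie_zero] at lie_sum
  have h₀ : g 0 = 0 := by simpa [hca, hcb, hcx, hcy, lie_z, hz, -lie_lie] using lie_sum c
  have h₁ : g 1 = 0 := by
    simpa [hab, hac, hax, hay, lie_z, hz, -lie_lie] using congrArg (⁅a, ·⁆) (lie_sum a)
  have h₂ : g 2 = 0 := by simpa [hac, hax, hay, lie_z, h₁, hz] using lie_sum a
  have h₄ : g 4 = 0 := by simpa [hxc, hxy, lie_z, h₀, h₁, hz] using lie_sum x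
  have h₃ : g 3 = 0 := by simpa [hyc, hyx, lie_z, h₀, h₁, hz] using lie_sum y
  have h₅ : g 5 = 0 := by simpa [h₀, h₁, h₂, h₃, h₄, hz] using hg
  simp [Fin.forall_fin_succ, *]

variable [Module.Finite ℝ L]

lemma exists_lie_eq_zero_notMem_span (h : IsFiliformPair a b) (hn : finrank ℝ L = 6) :
    ∃ k : L, ⁅a, k⁆ = 0 ∧ ⁅⁅a, b⁆, k⁆ = 0 ∧ ⁅b, k⁆ = 0 ∧
      k ∉ Submodule.span ℝ {⁅a, ⁅a, b⁆⁆} := by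
  let ad (x : L) := LieModule.toEnd ℝ L L x
  suffices ¬ (ad a).ker ⊓ (ad ⁅a, b⁆).ker ⊓ (ad b).ker ≤ Submodule.span ℝ {⁅a, ⁅a, b⁆⁆} by
    obtain ⟨k, ⟨⟨hak, hck⟩, hbk⟩, hk⟩ := SetLike.not_le_iff_exists.1 this
    exact ⟨k, hak, hck, hbk, hk⟩
  intro hK
  have hD₂ : lcsRank L 2 = 1 := by
    rw [lcsRank, h.lcsTerm_two, finrank_span_singleton h.lie_lie_ne_zero]
  have hD₁ : lcsRank L 1 ≤ 2 := by
    have g₁ : GeneratesLayer 1 {⁅a, b⁆} :=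
      ⟨by simpa using lie_mem_lcsTerm_one a b, by
        rw [h.lcsTerm_one, h.lcsTerm_two, Submodule.span_insert]⟩
    have : lcsRank L 1 ≤ lcsRank L 2 + 1 := g₁.lcsRank_le_succ
    omega
  have ha : finrank ℝ (⊤ : Submodule ℝ L) ≤ _ + lcsRank L 1 :=
    finrank_le_finrank_inf_ker_add (f := ad a) (by
      rintro _ ⟨y, -, rfl⟩
      exact lie_mem_lcsTerm_one a y)
  have hc : finrank ℝ (ad a).ker ≤ _ + lcsRank L 2 :=
    finrank_le_finrank_inf_ker_add (f := ad ⁅a, b⁆) (by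
      rintro _ ⟨y, -, rfl⟩
      exact lie_mem_lcsTerm (lie_mem_lcsTerm_one a b) (mem_lcsTerm_zero y))
  have hb : finrank ℝ ((ad a).ker ⊓ (ad ⁅a, b⁆).ker : Submodule ℝ L) ≤ _ + lcsRank L 2 :=
    finrank_le_finrank_inf_ker_add (f := ad b) (by
      rintro _ ⟨y, ⟨hay, hcy⟩, rfl⟩
      rw [h.lcsTerm_two]
      exact Submodule.mem_span_singleton.2 (h.exists_smul_eq_lie_right hay hcy))
  have := Submodule.finrank_mono hK
  rw [finrank_span_singleton h.lie_lie_ne_zero] at this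
  rw [top_inf_eq, finrank_top] at ha
  omega

lemma exists_lie_eq (h : IsFiliformPair a b) (hn : finrank ℝ L = 6)
    (hZ : LieAlgebra.center ℝ L ≤ LieModule.lowerCentralSeries ℝ L L 1) :
    ∃ x y : L, (⁅a, x⁆ = 0 ∧ ⁅⁅a, b⁆, x⁆ = 0) ∧ (⁅a, y⁆ = 0 ∧ ⁅⁅a, b⁆, y⁆ = 0) ∧
      ⁅x, y⁆ = ⁅a, ⁅a, b⁆⁆ := by
  by_contra! H
  have comm (x y : L) (hax : ⁅a, x⁆ = 0) (hcx : ⁅⁅a, b⁆, x⁆ = 0) (hay : ⁅a, y⁆ = 0)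
      (hcy : ⁅⁅a, b⁆, y⁆ = 0) : ⁅x, y⁆ = 0 := by
    obtain ⟨r, hr⟩ := h.exists_smul_eq_lie hax hay
    by_contra hxy
    have hr₀ : r ≠ 0 := by
      rintro rfl
      exact hxy (by rw [← hr, zero_smul])
    exact H (r⁻¹ • x) y ⟨by rw [lie_smul, hax, smul_zero], by rw [lie_smul, hcx, smul_zero]⟩
      ⟨hay, hcy⟩ (by rw [smul_lie, ← hr, inv_smul_smul₀ hr₀])
  obtain ⟨k, hak, hck, hbk, hk⟩ := h.exists_lie_eq_zero_notMem_span hn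
  have hkZ := h.mem_center hak hbk fun y hay hcy => comm y k hay hcy hak hck
  exact hk (Submodule.mem_span_singleton.2 (h.exists_smul_eq (hZ hkZ) hak))

lemma exists_congr_right (h : IsFiliformPair a b) (hn : finrank ℝ L = 6)
    (hZ : LieAlgebra.center ℝ L ≤ LieModule.lowerCentralSeries ℝ L L 1) :
    ∃ b' x y : L, IsFiliformPair a b' ∧ (⁅a, x⁆ = 0 ∧ ⁅b', x⁆ = 0) ∧ (⁅a, y⁆ = 0 ∧ ⁅b', y⁆ = 0) ∧
      ⁅x, y⁆ = ⁅a, ⁅a, b'⁆⁆ := by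
  obtain ⟨x, y, ⟨hax, hcx⟩, ⟨hay, hcy⟩, hxy⟩ := h.exists_lie_eq hn hZ
  obtain ⟨p, hp⟩ := h.exists_smul_eq_lie_right hax hcx
  obtain ⟨q, hq⟩ := h.exists_smul_eq_lie_right hay hcy
  have hyx : ⁅y, x⁆ = -⁅a, ⁅a, b⁆⁆ := by rw [← hxy, lie_skew]
  have hxc : ⁅x, ⁅a, b⁆⁆ = 0 := by rw [← lie_skew, hcx, neg_zero]
  have hyc : ⁅y, ⁅a, b⁆⁆ = 0 := by rw [← lie_skew, hcy, neg_zero]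
  have hab : ⁅a, b + p • y - q • x⁆ = ⁅a, b⁆ := by simp [hax, hay]
  refine ⟨b + p • y - q • x, x, y, h.congr_right hab ?_, ⟨hax, ?_⟩, ⟨hay, ?_⟩, by rw [hab, hxy]⟩
  · rw [sub_lie, add_lie, smul_lie, smul_lie, h.lie_lie_eq_zero, hyc, hxc]
    module
  · rw [sub_lie, add_lie, smul_lie, smul_lie, lie_self, hyx, ← hp]
    module
  · rw [sub_lie, add_lie, smul_lie, smul_lie, lie_self, hxy, ← hq]
    module

theorem isNilsoliton (h : IsFiliformPair a b) (hn : finrank ℝ L = 6)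
    (hZ : LieAlgebra.center ℝ L ≤ LieModule.lowerCentralSeries ℝ L L 1) : IsNilsoliton L := by
  obtain ⟨b, x, y, h, ⟨hax, hbx⟩, ⟨hay, hby⟩, hxy⟩ := h.exists_congr_right hn hZ
  have hcx : ⁅⁅a, b⁆, x⁆ = 0 := by rw [lie_lie, hbx, hax, lie_zero, lie_zero, sub_zero]
  have hcy : ⁅⁅a, b⁆, y⁆ = 0 := by rw [lie_lie, hby, hay, lie_zero, lie_zero, sub_zero]
  have hxc : ⁅x, ⁅a, b⁆⁆ = 0 := by rw [← lie_skew, hcx, neg_zero]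
  have hspan := (h.linearIndependent hax hay hcx hcy hxy).span_eq_top_of_card_eq_finrank
    (by rw [hn, Fintype.card_fin])
  have lie_z := h.lie_lie_lie
  have hbc := h.lie_lie_eq_zero
  refine isNilsoliton_of_L6_10 (c := ![1, 1, 1]) (by simp [Fin.forall_fin_succ])
    (.of_lt (x := ![a, b, ⁅a, b⁆, x, y, ⁅a, ⁅a, b⁆⁆]) hn.symm hspan.ge ?_)
  simp only [forall_lt_fin_succ]
  generalize hab : ⁅a, b⁆ = c at *
  generalize hac : ⁅a, c⁆ = z at *
  simp [Fin.forall_fin_succ, bracket, Fin.sum_univ_succ, *]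

end IsFiliformPair

variable [Module.Finite ℝ L]

lemma exists_isFiliformPair (h₁ : lcsRank L 1 = 2) (h₂ : lcsRank L 2 = 1) (h₃ : lcsTerm L 3 = ⊥) :
    ∃ a b : L, IsFiliformPair a b := by
  obtain ⟨a, y, hz⟩ := exists_lie_lie_ne_zero (L := L) fun h => by
    rw [lcsRank, h, finrank_bot] at h₂
    omega
  have hc := lie_mem_lcsTerm_one a y
  have lcsTerm_two : lcsTerm L 2 = Submodule.span ℝ {⁅a, ⁅a, y⁆⁆} :=
    (Submodule.eq_of_le_of_finrank_eq
      ((Submodule.span_singleton_le_iff_mem _ _).2 (lie_mem_lcsTerm_succ a hc))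
      ((finrank_span_singleton hz).trans h₂.symm)).symm
  have hc₂ : ⁅a, y⁆ ∉ lcsTerm L 2 := fun hc =>
    hz (lie_eq_zero_of_mem_lcsTerm h₃ (mem_lcsTerm_zero a) hc le_rfl)
  have lcsTerm_one : lcsTerm L 1 = Submodule.span ℝ {⁅a, y⁆, ⁅a, ⁅a, y⁆⁆} := by
    rw [Submodule.span_insert, ← lcsTerm_two, sup_comm]
    refine (Submodule.eq_of_le_of_finrank_eq (sup_le (lcsTerm_antitone one_le_two)
      ((Submodule.span_singleton_le_iff_mem _ _).2 hc)) ?_).symm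
    rw [Submodule.finrank_sup_span_singleton hc₂]
    exact (congrArg (· + 1) h₂).trans h₁.symm
  obtain ⟨s, hs⟩ := Submodule.mem_span_singleton.1 (lcsTerm_two ▸ lie_mem_lcsTerm_succ y hc)
  have hab : ⁅a, y - s • a⁆ = ⁅a, y⁆ := by simp
  exact ⟨a, y - s • a, hab ▸ hz, by rw [hab, sub_lie, smul_lie, hs, sub_self], hab ▸ lcsTerm_one,
    hab ▸ lcsTerm_two, h₃⟩

theorem isNilsoliton_of_finrank_six_lcsRank_two [LieRing.IsNilpotent L] (hn : finrank ℝ L = 6)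
    (hZ : LieAlgebra.center ℝ L ≤ LieModule.lowerCentralSeries ℝ L L 1) (h₁ : lcsRank L 1 = 2) :
    IsNilsoliton L := by
  have : lcsRank L 2 < lcsRank L 1 := lcsRank_succ_lt (by omega)
  by_cases h₂ : lcsRank L 2 = 0
  · exact isNilsoliton_of_six_of_lcsRank_one_two_of_lcsTerm_two hn hZ h₁ (lcsTerm_eq_bot h₂)
  · have : lcsRank L 3 < lcsRank L 2 := lcsRank_succ_lt h₂
    obtain ⟨a, b, hab⟩ := exists_isFiliformPair h₁ (by omega) (lcsTerm_eq_bot (by omega))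
    exact hab.isNilsoliton hn hZ

end FiliformPair

section Classification

open Module

lemma isLieAbelian_of_lcsTerm_one {L : Type*} [LieRing L] [LieAlgebra ℝ L] (h : lcsTerm L 1 = ⊥) :
    IsLieAbelian L :=
  ⟨fun x y => (Submodule.mem_bot ℝ).1 (h ▸ lie_mem_lcsTerm_one x y)⟩

lemma lcsRank_one_add_two_le {L : Type*} [LieRing L] [LieAlgebra ℝ L] [Module.Finite ℝ L]
    [LieRing.IsNilpotent L] (h : lcsRank L 1 ≠ 0) : lcsRank L 1 + 2 ≤ finrank ℝ L := by
  have h₀ := lcsRank_zero L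
  have : lcsRank L 1 ≤ lcsRank L 0 := Submodule.finrank_mono (lcsTerm_antitone zero_le_one)
  have : lcsRank L 1 < lcsRank L 0 := lcsRank_succ_lt (by omega)
  by_contra hlt
  obtain ⟨x, hx⟩ := exists_generatesLayer_zero (L := L) (d := 1) (by omega)
  have h_le : lcsTerm L 1 ≤ lcsTerm L 2 := (hx.lie hx).le (by simp) le_rfl
  exact (lcsRank_succ_lt h).not_ge (Submodule.finrank_mono h_le)

theorem isNilsoliton_of_center_le {L : Type*} [LieRing L] [LieAlgebra ℝ L] [Module.Finite ℝ L]
    [LieRing.IsNilpotent L] (hn : finrank ℝ L ≤ 6)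
    (hZ : LieAlgebra.center ℝ L ≤ LieModule.lowerCentralSeries ℝ L L 1) : IsNilsoliton L := by
  by_cases h₀ : lcsRank L 1 = 0
  · have := isLieAbelian_of_lcsTerm_one (lcsTerm_eq_bot h₀)
    exact .of_isLieAbelian
  by_cases h₁ : lcsRank L 1 = 1
  · exact isNilsoliton_of_lcsRank_one h₁ hZ
  have := lcsRank_one_add_two_le h₀
  obtain hn | hn | hn : finrank ℝ L = 4 ∨ finrank ℝ L = 5 ∨ finrank ℝ L = 6 := by omega
  · exact isNilsoliton_of_finrank_four_lcsRank_two hn (by omega)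
  · obtain h | h : lcsRank L 1 = 2 ∨ lcsRank L 1 = 3 := by omega
    · exact isNilsoliton_of_finrank_five_lcsRank_two hn hZ h
    · exact isNilsoliton_of_finrank_five_lcsRank_three hn h
  · obtain h | h | h : lcsRank L 1 = 2 ∨ lcsRank L 1 = 3 ∨ lcsRank L 1 = 4 := by omega
    · exact isNilsoliton_of_finrank_six_lcsRank_two hn hZ h
    · exact isNilsoliton_of_finrank_six_lcsRank_three hn hZ h
    · exact isNilsoliton_of_finrank_six_lcsRank_four hn h

theorem isNilsoliton_of_finrank_le_six {L : Type*} [LieRing L] [LieAlgebra ℝ L]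
    [Module.Finite ℝ L] [LieRing.IsNilpotent L] (hn : finrank ℝ L ≤ 6) : IsNilsoliton L := by
  induction hd : finrank ℝ L using Nat.strong_induction_on generalizing L with
  | h d ih =>
    by_cases hZ : LieAlgebra.center ℝ L ≤ LieModule.lowerCentralSeries ℝ L L 1
    · exact isNilsoliton_of_center_le hn hZ
    obtain ⟨z, hz, hz₁⟩ := SetLike.not_le_iff_exists.1 hZ
    obtain ⟨I, J, hIJ, hI, hJ⟩ := exists_isCompl_lieIdeal_of_central hz hz₁
    have : LieRing.IsNilpotent I :=
      Function.Injective.lieAlgebra_isNilpotent (f := I.incl) I.incl_injective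
    exact .of_isCompl hIJ (ih (finrank ℝ I) (by omega) (by omega) rfl) .of_isLieAbelian

end Classification

section NilpotentLaw

variable {n : ℕ} {μ : Law n}

namespace LawAlgebra

lemma mem_lcs_of_mem_lcsTerm (h : IsLieLaw μ) {k : ℕ} {x : LawAlgebra h}
    (hx : x ∈ lcsTerm (LawAlgebra h) k) : (x : Fin n → ℝ) ∈ lcs μ k := by
  induction k generalizing x with
  | zero => exact Submodule.mem_top (R := ℝ) (M := Fin n → ℝ)
  | succ k ih =>
    let S : Submodule ℝ (LawAlgebra h) := id (α := Submodule ℝ (Fin n → ℝ)) (lcs μ (k + 1))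
    refine lcsTerm_succ_le (S := S) (fun x y hy => ?_) hx
    exact Submodule.subset_span (R := ℝ) (M := Fin n → ℝ) ⟨x, y, ih hy, rfl⟩

lemma isNilpotent (h : IsNilpotentLaw μ) : LieRing.IsNilpotent (LawAlgebra h.1) := by
  obtain ⟨k, hk⟩ := h.2
  refine (LieModule.isNilpotent_iff ℝ _ _).2 ⟨k, ?_⟩
  refine (LieSubmodule.eq_bot_iff _).2 fun x hx => ?_
  have hx := mem_lcs_of_mem_lcsTerm h.1 hx
  rwa [hk] at hx

end LawAlgebra

lemma IsNilpotentLaw.isNilsoliton (h : IsNilpotentLaw μ) (hn : n ≤ 6) :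
    IsNilsoliton (LawAlgebra h.1) :=
  have := LawAlgebra.isNilpotent h
  isNilsoliton_of_finrank_le_six ((LawAlgebra.finrank_eq h.1).trans_le hn)

end NilpotentLaw

theorem stmt_18_general {n p q : ℕ} {μ : Law n} {μ₁ : Law p} {μ₂ : Law q} (hp : p ≤ 6) (hq : q ≤ 6)
    (hμ : IsLieLaw μ) (h₁ : IsNilpotentLaw μ₁) (h₂ : IsNilpotentLaw μ₂)
    (T : (Fin n → ℝ) ≃ₗ[ℝ] (Fin p → ℝ) × (Fin q → ℝ))
    (hT : ∀ x y, T (μ x y) = (μ₁ (T x).1 (T y).1, μ₂ (T x).2 (T y).2)) :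
    IsEinsteinNilradical μ := by
  let e : LawAlgebra hμ ≃ₗ⁅ℝ⁆ LawAlgebra h₁.1 × LawAlgebra h₂.1 :=
    { toFun := T, invFun := T.symm, map_add' := T.map_add, map_smul' := T.map_smul,
      map_lie' := hT _ _, left_inv := T.left_inv, right_inv := T.right_inv }
  exact isEinsteinNilradical_of_isNilsoliton hμ <|
    ((h₁.isNilsoliton hp).prod (h₂.isNilsoliton hq)).of_equiv e.symm

/-- every decomposable 7-dimensional nilpotent Lie algebra is an
Einstein nilradical. -/
theorem stmt_18 (μ : Law 7) (hμ : IsNilpotentLaw μ)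
    (hdec : ∃ p q : ℕ, 0 < p ∧ 0 < q ∧ p + q = 7 ∧
      ∃ μ₁ : Law p, ∃ μ₂ : Law q, IsNilpotentLaw μ₁ ∧ IsNilpotentLaw μ₂ ∧
        ∃ T : (Fin 7 → ℝ) ≃ₗ[ℝ] (Fin p → ℝ) × (Fin q → ℝ),
          ∀ x y, T (μ x y) = (μ₁ (T x).1 (T y).1, μ₂ (T x).2 (T y).2)) :
    IsEinsteinNilradical μ := by
  obtain ⟨p, q, hp, hq, hpq, μ₁, μ₂, h₁, h₂, T, hT⟩ := hdec
  exact stmt_18_general (by omega) (by omega) hμ.1 h₁ h₂ T hT
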